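/- arXiv:1912.11298 — 4 statements merged into one kernel-verified Lean document; each statement's English description precedes it below -/
import Mathlib

section
/- For every complex measure μ on ℝ^d of finite total variation without singular component and every ε > 0, there exists a complex measure ν_ε on ℝ^d of finite total variation without singular component such that ν̂_ε(y) = 1/μ̂(y) for every y with |μ̂(y)| ≥ ε, and ν̂_ε(y) = 0 for every y with |μ̂(y)| ≤ ε/2. -/
open MeasureTheory Real Complex
open scoped RealInnerProductSpace FourierTransform

/-- The Fourier–Stieltjes transform of the measure `μ = f dx + Σ_n a_n δ_{γ_n}` on `ℝ^d`
(a measure of finite total variation without singular component):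
`μ̂(y) = ∫ f(x) e^{-2πi⟨x,y⟩} dx + Σ_n a_n e^{-2πi⟨γ_n, y⟩}`. -/
noncomputable def measureFourier {d : ℕ} (f : EuclideanSpace ℝ (Fin d) → ℂ)
    (a : ℕ → ℂ) (γ : ℕ → EuclideanSpace ℝ (Fin d)) (y : EuclideanSpace ℝ (Fin d)) : ℂ :=
  𝓕 f y + ∑' n : ℕ, a n * Complex.exp (-2 * π * Complex.I * (⟪γ n, y⟫ : ℝ))

/-!
After multiplying by the conjugate and scaling, one has to invert a real transform `h` with values
in `[0, 1/4]`. Truncating the atoms of the measure and smoothing its density replaces `h` by a close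
`h₀` such that `e^{2πinh₀}` is the transform of a measure whose total variation grows polynomially
in `n`. By Poisson summation, `w ∘ h₀` is then a transform for every Schwartz function `w` whose
nonzero integer translates vanish on the range of `h₀`, and if `‖w‖ ≤ b` the total variation
attached to `w(h₀)ⁿ` is at most `bⁿ` times a polynomial in `n`. Take `w` to be a truncation of
`t ↦ 1 / t`, `W = w(h₀)` and `r = h - h₀`. The total variation of `r` can be made smaller than
`1 / b`, so the geometric series of `W / (1 + r W)` converges in total variation, and this quotient
equals `1 / h` where the truncation is inactive.
-/

namespace FourierStieltjes

open SchwartzMap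
open scoped ContDiff

section Character

variable {V : Type*} [NormedAddCommGroup V] [InnerProductSpace ℝ V]

/-- The character `y ↦ e^{-2πi⟨γ, y⟩}` of a real inner product space. -/
noncomputable def character (γ y : V) : ℂ :=
  Complex.exp (-2 * π * Complex.I * (⟪γ, y⟫ : ℝ))

lemma character_eq_exp_mul_I (γ y : V) :
    character γ y = Complex.exp ((-2 * π * ⟪γ, y⟫ : ℝ) * Complex.I) := by
  rw [character]
  push_cast
  ring_nf

@[simp] lemma norm_character (γ y : V) : ‖character γ y‖ = 1 := by
  rw [character_eq_exp_mul_I, Complex.norm_exp_ofReal_mul_I]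

lemma character_add (γ ρ y : V) : character (γ + ρ) y = character γ y * character ρ y := by
  rw [character, character, character, ← Complex.exp_add, inner_add_left]
  push_cast
  ring_nf

@[simp] lemma character_zero (y : V) : character 0 y = 1 := by simp [character]

lemma conj_character (γ y : V) : (starRingEnd ℂ) (character γ y) = character (-γ) y := by
  rw [character_eq_exp_mul_I, character_eq_exp_mul_I, ← Complex.exp_conj]
  simp [Complex.conj_ofNat]

lemma summable_mul_character {ι : Type*} {b : ι → ℂ} (hb : Summable fun n => ‖b n‖) (ρ : ι → V)
    (y : V) : Summable fun n => b n * character (ρ n) y :=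
  .of_norm (by simpa using hb)

variable [MeasurableSpace V] [BorelSpace V] [FiniteDimensional ℝ V]

lemma fourier_eq_integral_character (g : V → ℂ) (y : V) : 𝓕 g y = ∫ x, character x y * g x := by
  simp only [Real.fourier_eq', character_eq_exp_mul_I, smul_eq_mul]

end Character

section FourierIntegral

variable {V E : Type*} [NormedAddCommGroup V] [InnerProductSpace ℝ V] [MeasurableSpace V]
  [BorelSpace V] [FiniteDimensional ℝ V] [NormedAddCommGroup E] [NormedSpace ℂ E]

lemma norm_fourier_le (g : V → E) (y : V) : ‖𝓕 g y‖ ≤ ∫ x, ‖g x‖ :=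
  VectorFourier.norm_fourierIntegral_le_integral_norm _ _ _ g y

lemma fourier_sub {f g : V → E} (hf : Integrable f) (hg : Integrable g) (y : V) :
    𝓕 (fun x => f x - g x) y = 𝓕 f y - 𝓕 g y := by
  simp only [Real.fourier_eq, smul_sub]
  exact integral_sub ((Real.fourierIntegral_convergent_iff y).2 hf)
    ((Real.fourierIntegral_convergent_iff y).2 hg)

lemma exists_integrable_fourier_eq_tsum [CompleteSpace E] {ι : Type*} {g : ι → V → E}
    (hg : ∀ i, Integrable (g i)) (hsum : Summable fun i => ∫ x, ‖g i x‖) :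
    ∃ G : V → E, Integrable G ∧ ∫ x, ‖G x‖ ≤ ∑' i, ∫ x, ‖g i x‖ ∧
      ∀ y, 𝓕 G y = ∑' i, 𝓕 (g i) y := by
  have hL : Summable fun i => ‖(hg i).toL1 (g i)‖ := by
    simpa only [L1.norm_of_fun_eq_integral_norm] using hsum
  let G := ∑' i, (hg i).toL1 (g i)
  refine ⟨G, L1.integrable_coeFn G, ?_, fun y => ?_⟩
  · rw [← L1.norm_eq_integral_norm]
    simpa only [L1.norm_of_fun_eq_integral_norm] using norm_tsum_le_tsum_norm hL
  · let fourierAt := (BoundedContinuousFunction.evalCLM ℂ y).comp (Lp.fourierTransformCLM V E)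
    calc 𝓕 (G : V → E) y = fourierAt G := rfl
      _ = ∑' i, fourierAt ((hg i).toL1 (g i)) := fourierAt.map_tsum hL.of_norm
      _ = ∑' i, 𝓕 (g i) y := tsum_congr fun i => Real.fourier_congr_ae (hg i).coeFn_toL1 y

lemma integral_norm_convolution_mul_le {f g : V → ℂ} (hf : Integrable f) (hg : Integrable g) :
    ∫ x, ‖MeasureTheory.convolution f g (ContinuousLinearMap.mul ℂ ℂ) volume x‖ ≤
      (∫ x, ‖f x‖) * ∫ x, ‖g x‖ := by
  have hnorm := hf.norm.integrable_convolution (ContinuousLinearMap.mul ℝ ℝ) hg.norm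
  refine le_trans (integral_mono_of_nonneg (.of_forall fun x => norm_nonneg _) hnorm
    (.of_forall fun x => ?_))
    (integral_convolution (ContinuousLinearMap.mul ℝ ℝ) hf.norm hg.norm).le
  simp only [MeasureTheory.convolution, ContinuousLinearMap.mul_apply']
  exact (norm_integral_le_integral_norm _).trans_eq (by simp only [norm_mul])

end FourierIntegral

variable {d : ℕ}

local notation "𝔼" => EuclideanSpace ℝ (Fin d)

/-- `F` is the Fourier–Stieltjes transform of a measure without singular component
whose total variation is at most `C`. -/
def IsTransform (F : EuclideanSpace ℝ (Fin d) → ℂ) (C : ℝ) : Prop :=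
  ∃ (g : EuclideanSpace ℝ (Fin d) → ℂ) (b : ℕ → ℂ) (ρ : ℕ → EuclideanSpace ℝ (Fin d)),
    Integrable g ∧ Summable (fun n => ‖b n‖) ∧ (∫ x, ‖g x‖) + ∑' n, ‖b n‖ ≤ C ∧
      ∀ y, F y = measureFourier g b ρ y

lemma measureFourier_eq (g : 𝔼 → ℂ) (b : ℕ → ℂ) (ρ : ℕ → 𝔼) (y : 𝔼) :
    measureFourier g b ρ y = 𝓕 g y + ∑' n, b n * character (ρ n) y := rfl

namespace IsTransform

variable {F G : EuclideanSpace ℝ (Fin d) → ℂ} {C D : ℝ}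

lemma mono (hF : IsTransform F C) (h : C ≤ D) : IsTransform F D := by
  obtain ⟨g, b, ρ, hg, hb, hC, hy⟩ := hF
  exact ⟨g, b, ρ, hg, hb, hC.trans h, hy⟩

lemma norm_le (hF : IsTransform F C) (y : 𝔼) : ‖F y‖ ≤ C := by
  obtain ⟨g, b, ρ, -, hb, hC, hy⟩ := hF
  rw [hy, measureFourier_eq]
  refine (norm_add_le _ _).trans (le_trans (add_le_add (norm_fourier_le g y) ?_) hC)
  exact (norm_tsum_le_tsum_norm (by simpa using hb)).trans_eq (by simp)

lemma nonneg (hF : IsTransform F C) : 0 ≤ C := (norm_nonneg _).trans (hF.norm_le 0)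

lemma fourier {g : 𝔼 → ℂ} (hg : Integrable g) : IsTransform (𝓕 g) (∫ x, ‖g x‖) :=
  ⟨g, 0, 0, hg, by simp [summable_zero], by simp, fun y => by simp [measureFourier]⟩

lemma tsum {ι : Type*} [Countable ι] [Nonempty ι] {F : ι → 𝔼 → ℂ} {C : ι → ℝ}
    (hF : ∀ i, IsTransform (F i) (C i)) (hC : Summable C) :
    IsTransform (fun y => ∑' i, F i y) (∑' i, C i) := by
  choose g b ρ hg hb hgb hy using hF
  have hbn i : 0 ≤ ∑' n, ‖b i n‖ := tsum_nonneg fun n => norm_nonneg _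
  have hgn i : 0 ≤ ∫ x, ‖g i x‖ := integral_nonneg fun x => norm_nonneg _
  have hsg : Summable fun i => ∫ x, ‖g i x‖ :=
    hC.of_nonneg_of_le hgn fun i => by linarith [hbn i, hgb i]
  have hsb : Summable fun i => ∑' n, ‖b i n‖ :=
    hC.of_nonneg_of_le hbn fun i => by linarith [hgn i, hgb i]
  have hprod : Summable fun p : ι × ℕ => ‖b p.1 p.2‖ :=
    (summable_prod_of_nonneg fun p => norm_nonneg _).2 ⟨hb, hsb⟩
  obtain ⟨e⟩ : Nonempty (ℕ ≃ ι × ℕ) := nonempty_equiv_of_countable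
  obtain ⟨G, hG, hGle, hGy⟩ := exists_integrable_fourier_eq_tsum hg hsg
  refine ⟨G, fun n => b (e n).1 (e n).2, fun n => ρ (e n).1 (e n).2, hG,
    hprod.comp_injective e.injective, ?_, fun y => ?_⟩
  · rw [e.tsum_eq (fun p => ‖b p.1 p.2‖), hprod.tsum_prod]
    refine (add_le_add_left hGle _).trans ?_
    rw [← hsg.tsum_add hsb]
    exact (hsg.add hsb).tsum_le_tsum hgb hC
  · have hfourier : Summable fun i => 𝓕 (g i) y :=
      .of_norm_bounded hsg fun i => norm_fourier_le _ y
    have hchar : Summable fun p : ι × ℕ => b p.1 p.2 * character (ρ p.1 p.2) y :=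
      summable_mul_character hprod (fun p => ρ p.1 p.2) y
    rw [measureFourier_eq, hGy, e.tsum_eq (fun p => b p.1 p.2 * character (ρ p.1 p.2) y),
      hchar.tsum_prod, ← hfourier.tsum_add hchar.prod]
    simp only [hy, measureFourier_eq]

lemma add (hF : IsTransform F C) (hG : IsTransform G D) :
    IsTransform (fun y => F y + G y) (C + D) := by
  have := IsTransform.tsum (F := fun i : Bool => cond i F G) (C := fun i : Bool => cond i C D)
    (by rintro (_ | _) <;> assumption) .of_finite
  simpa only [tsum_bool, cond_true, cond_false, add_comm] using this

lemma const_mul (hF : IsTransform F C) (c : ℂ) : IsTransform (fun y => c * F y) (‖c‖ * C) := by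
  obtain ⟨g, b, ρ, hg, hb, hC, hy⟩ := hF
  refine ⟨fun x => c * g x, fun n => c * b n, ρ, hg.const_mul c, by simpa using hb.mul_left ‖c‖,
    ?_, fun y => ?_⟩
  · simp only [norm_mul, integral_const_mul, tsum_mul_left, ← mul_add]
    gcongr
  · beta_reduce
    rw [hy, measureFourier_eq, measureFourier_eq, fourier_eq_integral_character,
      fourier_eq_integral_character]
    simp only [mul_left_comm _ c, integral_const_mul, mul_assoc c, tsum_mul_left, mul_add]

lemma conj (hF : IsTransform F C) : IsTransform (fun y => (starRingEnd ℂ) (F y)) C := by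
  obtain ⟨g, b, ρ, hg, hb, hC, hy⟩ := hF
  refine ⟨fun x => (starRingEnd ℂ) (g (-x)), fun n => (starRingEnd ℂ) (b n), fun n => -ρ n,
    ?_, by simpa using hb, ?_, fun y => ?_⟩
  · exact (LinearIsometryEquiv.integrable_comp_iff Complex.conjLIE).2 hg.comp_neg
  · simpa [integral_neg_eq_self fun x => ‖g x‖] using hC
  · beta_reduce
    rw [hy, measureFourier_eq, measureFourier_eq, map_add, fourier_eq_integral_character,
      fourier_eq_integral_character, ← integral_conj, Complex.conj_tsum]
    simp only [map_mul, conj_character]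
    rw [← integral_neg_eq_self]
    simp

lemma character_mul (hF : IsTransform F C) (γ : 𝔼) :
    IsTransform (fun y => character γ y * F y) C := by
  obtain ⟨g, b, ρ, hg, hb, hC, hy⟩ := hF
  refine ⟨fun x => g (x - γ), b, fun n => γ + ρ n, hg.comp_sub_right γ, hb, ?_, fun y => ?_⟩
  · rwa [integral_sub_right_eq_self fun x => ‖g x‖]
  · beta_reduce
    rw [hy, measureFourier_eq, measureFourier_eq, fourier_eq_integral_character,
      fourier_eq_integral_character, mul_add, ← integral_const_mul, ← tsum_mul_left]
    congr 1
    · rw [← integral_sub_right_eq_self _ γ]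
      congr with x
      rw [← mul_assoc, ← character_add, add_sub_cancel]
    · congr with n
      rw [character_add]
      ring

lemma one : IsTransform (fun _ : 𝔼 => (1 : ℂ)) 1 := by
  refine ⟨0, Pi.single 0 1, 0, integrable_zero _ _ _, ?_, ?_, fun y => ?_⟩
  · exact summable_of_ne_finset_zero (s := {0}) fun n hn => by simp_all
  · rw [tsum_eq_single 0 fun n hn => by simp [hn]]
    simp
  · rw [measureFourier_eq, tsum_eq_single 0 fun n hn => by simp [hn], fourier_eq_integral_character]
    simp

lemma of_character (γ : 𝔼) : IsTransform (character γ) 1 := by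
  simpa using one.character_mul γ

lemma fourier_mul_fourier {g g' : 𝔼 → ℂ} (hg : Integrable g) (hg' : Integrable g') :
    IsTransform (fun y => 𝓕 g y * 𝓕 g' y) ((∫ x, ‖g x‖) * ∫ x, ‖g' x‖) := by
  have h := fourier (hg.integrable_convolution (ContinuousLinearMap.mul ℂ ℂ) hg')
  rw [funext (Real.fourier_mul_convolution_eq hg hg')] at h
  exact h.mono (integral_norm_convolution_mul_le hg hg')

lemma tsum_character_mul (hF : IsTransform F C) {b : ℕ → ℂ} (hb : Summable fun n => ‖b n‖)
    (ρ : ℕ → 𝔼) :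
    IsTransform (fun y => (∑' n, b n * character (ρ n) y) * F y) ((∑' n, ‖b n‖) * C) := by
  have := IsTransform.tsum (fun n => (hF.character_mul (ρ n)).const_mul (b n)) (hb.mul_right C)
  simpa only [← tsum_mul_right, mul_assoc] using this

lemma fourier_mul (hF : IsTransform F C) {g : 𝔼 → ℂ} (hg : Integrable g) :
    IsTransform (fun y => 𝓕 g y * F y) ((∫ x, ‖g x‖) * C) := by
  obtain ⟨g', b, ρ, hg', hb, hC, hy⟩ := hF
  have := (fourier_mul_fourier hg hg').add ((fourier hg).tsum_character_mul hb ρ)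
  convert this.mono ?_ using 2 with y
  · rw [hy, measureFourier_eq]
    ring
  · rw [mul_comm (∑' n, ‖b n‖), ← mul_add]
    gcongr

lemma mul (hF : IsTransform F C) (hG : IsTransform G D) :
    IsTransform (fun y => F y * G y) (C * D) := by
  have hD := hG.nonneg
  obtain ⟨g, b, ρ, hg, hb, hC, hy⟩ := hF
  convert ((hG.fourier_mul hg).add (hG.tsum_character_mul hb ρ)).mono ?_ using 2 with y
  · rw [hy, measureFourier_eq]
    ring
  · rw [← add_mul]
    gcongr

lemma pow (hF : IsTransform F C) (n : ℕ) : IsTransform (fun y => F y ^ n) (C ^ n) := by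
  induction n with
  | zero => simpa using one
  | succ n ih => simpa only [pow_succ] using ih.mul hF

lemma re (hF : IsTransform F C) : IsTransform (fun y => ((F y).re : ℂ)) C := by
  have := (hF.add hF.conj).const_mul (1 / 2)
  convert this using 2 with y
  · rw [Complex.add_conj]
    push_cast
    ring
  · norm_num
    ring

end IsTransform

section Powers

variable {𝕜 V W : Type*} [RCLike 𝕜] [NormedAddCommGroup V] [NormedSpace ℝ V]
  [NormedAddCommGroup W] [NormedSpace ℝ W] [NormedSpace 𝕜 W] [IsScalarTower ℝ 𝕜 W]

lemma hasTemperateGrowth_fderiv {f : V → W} (hf : f.HasTemperateGrowth) :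
    (fderiv ℝ f).HasTemperateGrowth := by
  refine ⟨(contDiff_infty_iff_fderiv.1 hf.1).2, fun n => ?_⟩
  obtain ⟨k, C, h⟩ := hf.2 (n + 1)
  exact ⟨k, C, fun x => norm_iteratedFDeriv_fderiv.trans_le (h x)⟩

lemma seminorm_succ_le_seminorm_fderivCLM (k j : ℕ) (φ : 𝓢(V, W)) :
    SchwartzMap.seminorm ℝ k (j + 1) φ ≤ SchwartzMap.seminorm ℝ k j (fderivCLM ℝ V W φ) :=
  seminorm_le_bound ℝ k (j + 1) φ (apply_nonneg _ _) fun x => by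
    rw [← norm_iteratedFDeriv_fderiv]
    exact le_seminorm ℝ k j (fderivCLM ℝ V W φ) x

lemma exists_fderivCLM_smulLeftCLM_pow {w : V → 𝕜} (hw : w.HasTemperateGrowth)
    (ψ : 𝓢(V, W)) :
    ∃ χ : 𝓢(V, V →L[ℝ] W), ∀ n : ℕ,
      fderivCLM ℝ V W (smulLeftCLM W (w ^ n) ψ) =
        (n : ℝ) • smulLeftCLM (V →L[ℝ] W) (w ^ (n - 1)) χ +
          smulLeftCLM (V →L[ℝ] W) (w ^ n) (fderivCLM ℝ V W ψ) := by
  let B : W →L[ℝ] (V →L[ℝ] 𝕜) →L[ℝ] V →L[ℝ] W :=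
    (ContinuousLinearMap.compL ℝ V 𝕜 W) ∘L (ContinuousLinearMap.lsmul ℝ 𝕜).flip
  refine ⟨bilinLeftCLM B (hasTemperateGrowth_fderiv hw) ψ, fun n => ?_⟩
  ext x v
  have hwn : HasFDerivAt (w ^ n) _ x := (hw.1.differentiable (by simp) x).hasFDerivAt.pow n
  have h := (hwn.smul ψ.differentiableAt.hasFDerivAt).fderiv
  rw [fderivCLM_apply, smulLeftCLM_apply (hw.pow n)]
  change fderiv ℝ (w ^ n • ⇑ψ) x v = _
  rw [h]
  simp only [Pi.pow_apply, nsmul_eq_mul, add_apply, smul_apply, ContinuousLinearMap.smulRight_apply,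
    smul_eq_mul, smulLeftCLM_apply_apply (hw.pow _), bilinLeftCLM_apply,
    ContinuousLinearMap.comp_apply, ContinuousLinearMap.compL_apply, fderivCLM_apply,
    ContinuousLinearMap.flip_apply, ContinuousLinearMap.lsmul_apply, B]
  rw [add_comm, mul_assoc, mul_smul, mul_smul, Nat.cast_smul_eq_nsmul, Nat.cast_smul_eq_nsmul]

end Powers

section PowersBound

universe u

variable {𝕜 : Type*} {V W : Type u} [RCLike 𝕜] [NormedAddCommGroup V] [NormedSpace ℝ V]
  [NormedAddCommGroup W] [NormedSpace ℝ W] [NormedSpace 𝕜 W] [IsScalarTower ℝ 𝕜 W]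

lemma exists_seminorm_smulLeftCLM_pow_le {w : V → 𝕜} (hw : w.HasTemperateGrowth) {b : ℝ}
    (hb : 0 < b) (hwb : ∀ x, ‖w x‖ ≤ b) (k j : ℕ) (ψ : 𝓢(V, W)) :
    ∃ C, 0 ≤ C ∧ ∀ n : ℕ, SchwartzMap.seminorm ℝ k j (smulLeftCLM W (w ^ n) ψ) ≤
      C * (n + 1) ^ j * b ^ n := by
  induction j generalizing W with
  | zero =>
    refine ⟨SchwartzMap.seminorm ℝ k 0 ψ, apply_nonneg _ _, fun n => ?_⟩
    refine seminorm_le_bound ℝ k 0 _ (by positivity) fun x => ?_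
    rw [norm_iteratedFDeriv_zero, smulLeftCLM_apply_apply (hw.pow n), norm_smul, Pi.pow_apply,
      norm_pow]
    calc ‖x‖ ^ k * (‖w x‖ ^ n * ‖ψ x‖) = (‖x‖ ^ k * ‖ψ x‖) * ‖w x‖ ^ n := by ring
      _ ≤ SchwartzMap.seminorm ℝ k 0 ψ * b ^ n := by
        gcongr
        · exact norm_pow_mul_le_seminorm ℝ ψ k x
        · exact hwb x
      _ = _ := by ring
  | succ j ih =>
    obtain ⟨χ, hχ⟩ := exists_fderivCLM_smulLeftCLM_pow hw ψ
    obtain ⟨C₁, hC₁, h₁⟩ := ih χ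
    obtain ⟨C₂, hC₂, h₂⟩ := ih (fderivCLM ℝ V W ψ)
    refine ⟨C₁ / b + C₂, by positivity, fun n => ?_⟩
    have hn : n * SchwartzMap.seminorm ℝ k j (smulLeftCLM (V →L[ℝ] W) (w ^ (n - 1)) χ) ≤
        (n + 1) * (C₁ * (n + 1) ^ j * (b ^ n / b)) := by
      rcases n with _ | n
      · simp only [Nat.cast_zero, zero_mul]
        positivity
      · rw [pow_succ, mul_div_cancel_right₀ _ hb.ne']
        push_cast
        grw [h₁ n]
        gcongr <;> linarith
    calc SchwartzMap.seminorm ℝ k (j + 1) (smulLeftCLM W (w ^ n) ψ)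
        ≤ SchwartzMap.seminorm ℝ k j (fderivCLM ℝ V W (smulLeftCLM W (w ^ n) ψ)) :=
          seminorm_succ_le_seminorm_fderivCLM k j _
      _ ≤ n * SchwartzMap.seminorm ℝ k j (smulLeftCLM (V →L[ℝ] W) (w ^ (n - 1)) χ) +
            SchwartzMap.seminorm ℝ k j (smulLeftCLM (V →L[ℝ] W) (w ^ n) (fderivCLM ℝ V W ψ)) := by
          rw [hχ]
          refine (map_add_le_add _ _ _).trans_eq ?_
          rw [map_smul_eq_mul, Real.norm_natCast]
      _ ≤ (n + 1) * (C₁ * (n + 1) ^ j * (b ^ n / b)) + (n + 1) * (C₂ * (n + 1) ^ j * b ^ n) := by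
          refine add_le_add hn ((h₂ n).trans (le_mul_of_one_le_left (by positivity) (by simp)))
      _ = (C₁ / b + C₂) * (n + 1) ^ (j + 1) * b ^ n := by ring

lemma exists_continuous_seminorm_smulLeftCLM_pow_le {w : V → 𝕜} (hw : w.HasTemperateGrowth)
    {b : ℝ} (hb : 0 < b) (hwb : ∀ x, ‖w x‖ ≤ b) (ψ : 𝓢(V, W)) {q : Seminorm ℝ 𝓢(V, W)}
    (hq : Continuous q) :
    ∃ (C : ℝ) (J : ℕ), 0 ≤ C ∧ ∀ n : ℕ, q (smulLeftCLM W (w ^ n) ψ) ≤ C * (n + 1) ^ J * b ^ n := by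
  obtain ⟨s, D, -, hD⟩ := Seminorm.bound_of_continuous (schwartz_withSeminorms ℝ V W) q hq
  choose C hC0 hC using fun i : ℕ × ℕ =>
    exists_seminorm_smulLeftCLM_pow_le hw hb hwb i.1 i.2 ψ
  refine ⟨D * ∑ i ∈ s, C i, s.sup Prod.snd, mul_nonneg D.2 (Finset.sum_nonneg fun i _ => hC0 i),
    fun n => ?_⟩
  calc q (smulLeftCLM W (w ^ n) ψ)
      ≤ D * s.sup (schwartzSeminormFamily ℝ V W) (smulLeftCLM W (w ^ n) ψ) := hD _
    _ ≤ D * ∑ i ∈ s, schwartzSeminormFamily ℝ V W i (smulLeftCLM W (w ^ n) ψ) := by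
        gcongr
        simpa using Seminorm.finset_sup_le_sum (schwartzSeminormFamily ℝ V W) s _
    _ ≤ D * ∑ i ∈ s, C i * (n + 1) ^ s.sup Prod.snd * b ^ n := by
        gcongr with i hi
        refine (hC i n).trans ?_
        have := hC0 i
        gcongr
        · exact le_add_of_nonneg_left n.cast_nonneg
        · exact Finset.le_sup hi
    _ = D * (∑ i ∈ s, C i) * (n + 1) ^ s.sup Prod.snd * b ^ n := by
        simp only [← Finset.sum_mul, mul_assoc]

end PowersBound

section FunctionalCalculus

lemma exists_seminorm_isTransform :
    ∃ q : Seminorm ℝ 𝓢(𝔼, ℂ), Continuous q ∧ ∀ φ : 𝓢(𝔼, ℂ), IsTransform φ (q φ) := by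
  let L : 𝓢(𝔼, ℂ) →L[ℝ] Lp ℂ 1 (volume : Measure 𝔼) :=
    toLpCLM ℝ ℂ 1 volume ∘L FourierTransform.fourierInvCLM ℝ 𝓢(𝔼, ℂ)
  refine ⟨(normSeminorm ℝ _).comp L.toLinearMap, continuous_norm.comp L.continuous, fun φ => ?_⟩
  have hφ := IsTransform.fourier (𝓕⁻ φ).integrable
  rw [← fourier_coe, FourierTransform.fourier_fourierInv_eq, ← norm_toLp_one] at hφ
  exact hφ

lemma summable_one_add_abs_inv_sq : Summable fun n : ℤ => ((1 + |(n : ℝ)|) ^ 2)⁻¹ := by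
  refine .of_norm_bounded_eventually (Real.summable_one_div_int_pow.2 one_lt_two) ?_
  filter_upwards [(Set.finite_singleton (0 : ℤ)).compl_mem_cofinite] with n hn
  have hn0 : 0 < |(n : ℝ)| := by simpa using hn
  rw [norm_inv, norm_pow, Real.norm_of_nonneg (by positivity), one_div, ← sq_abs (n : ℝ)]
  gcongr
  linarith

/-- A real function whose exponentials `e^{2πinh}` are transforms of measures with polynomially
bounded total variation. -/
def PolyGrowth (h : EuclideanSpace ℝ (Fin d) → ℝ) : Prop :=
  ∃ (C : ℝ) (P : ℕ), 0 ≤ C ∧ ∀ n : ℤ,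
    IsTransform (fun y => _root_.fourier n (h y : UnitAddCircle)) (C * (1 + |(n : ℝ)|) ^ P)

namespace PolyGrowth

lemma of_forall_pow {h : 𝔼 → ℝ} {C : ℝ} {P : ℕ}
    (hpow : ∀ n : ℕ, IsTransform (fun y => Complex.exp (2 * π * Complex.I * h y) ^ n)
      (C * (n + 1) ^ P)) : PolyGrowth h := by
  have hnat (n : ℕ) : IsTransform (fun y => _root_.fourier n (h y : UnitAddCircle))
      (C * (1 + |((n : ℤ) : ℝ)|) ^ P) := by
    convert hpow n using 1
    · ext y
      rw [fourier_coe_apply, ← Complex.exp_nat_mul]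
      push_cast
      ring_nf
    · rw [Int.cast_natCast, Nat.abs_cast, add_comm]
  refine ⟨C, P, by simpa using (hpow 0).nonneg, fun n => ?_⟩
  obtain ⟨m, rfl | rfl⟩ := n.eq_nat_or_neg
  · exact hnat m
  · simpa only [fourier_neg, Int.cast_neg, abs_neg] using (hnat m).conj

lemma zero : PolyGrowth fun _ : 𝔼 => 0 :=
  of_forall_pow (C := 1) (P := 0) fun n => by simpa using IsTransform.one

lemma add {h k : 𝔼 → ℝ} (hh : PolyGrowth h) (hk : PolyGrowth k) :
    PolyGrowth fun y => h y + k y := by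
  obtain ⟨C, P, hC, hCP⟩ := hh
  obtain ⟨D, Q, hD, hDQ⟩ := hk
  refine ⟨C * D, P + Q, by positivity, fun n => ?_⟩
  convert (hCP n).mul (hDQ n) using 1
  · ext y
    simp only [fourier_coe_apply, ← Complex.exp_add]
    push_cast
    ring_nf
  · ring

lemma sum {κ : Type*} {h : κ → 𝔼 → ℝ} (hh : ∀ k, PolyGrowth (h k)) (s : Finset κ) :
    PolyGrowth fun y => ∑ k ∈ s, h k y := by
  classical
  induction s using Finset.induction_on with
  | empty => simpa using zero
  | insert k s hks ih => simpa only [Finset.sum_insert hks] using (hh k).add ih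

lemma inner (γ : 𝔼) : PolyGrowth fun y : 𝔼 => ⟪γ, y⟫ := by
  refine of_forall_pow (C := 1) (P := 0) fun n => ?_
  convert (IsTransform.of_character (-γ)).pow n using 1
  · ext y
    rw [character, inner_neg_left]
    push_cast
    ring_nf
  · simp

/-- Poisson summation: the periodization of `φ` at `h y` is `∑ 𝓕 φ n * e^{2πin h(y)}`. -/
lemma exists_seminorm_isTransform_tsum {h : 𝔼 → ℝ} (hh : PolyGrowth h) :
    ∃ q : Seminorm ℝ 𝓢(ℝ, ℂ), Continuous q ∧
      ∀ φ : 𝓢(ℝ, ℂ), IsTransform (fun y => ∑' n : ℤ, φ (h y + n)) (q φ) := by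
  obtain ⟨C, P, hC, hCP⟩ := hh
  let p : Seminorm ℝ 𝓢(ℝ, ℂ) := (Finset.Iic (P + 2, 0)).sup (schwartzSeminormFamily ℝ ℝ ℂ)
  have hp : Continuous p := (schwartz_withSeminorms ℝ ℝ ℂ).finset_sups.continuous_seminorm _
  let K : ℝ := C * 2 ^ (P + 2) * ∑' n : ℤ, ((1 + |(n : ℝ)|) ^ 2)⁻¹
  have hK : 0 ≤ K := mul_nonneg (by positivity) (tsum_nonneg fun n => by positivity)
  let T : 𝓢(ℝ, ℂ) →L[ℝ] 𝓢(ℝ, ℂ) := K • FourierTransform.fourierCLM ℝ 𝓢(ℝ, ℂ)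
  refine ⟨p.comp T.toLinearMap, hp.comp T.continuous, fun φ => ?_⟩
  have hterm (n : ℤ) : IsTransform (fun y => 𝓕 φ (n : ℝ) * _root_.fourier n (h y : UnitAddCircle))
      (C * 2 ^ (P + 2) * p (𝓕 φ) * ((1 + |(n : ℝ)|) ^ 2)⁻¹) := by
    refine ((hCP n).const_mul _).mono ?_
    have hdecay : (1 + |(n : ℝ)|) ^ (P + 2) * ‖𝓕 φ (n : ℝ)‖ ≤ 2 ^ (P + 2) * p (𝓕 φ) := by
      rw [← Real.norm_eq_abs, ← norm_iteratedFDeriv_zero (𝕜 := ℝ) (f := (𝓕 φ : 𝓢(ℝ, ℂ)))]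
      exact one_add_le_sup_seminorm_apply (𝕜 := ℝ) (m := (P + 2, 0)) le_rfl le_rfl (𝓕 φ) (n : ℝ)
    rw [← div_eq_mul_inv, le_div_iff₀ (by positivity)]
    calc ‖𝓕 φ (n : ℝ)‖ * (C * (1 + |(n : ℝ)|) ^ P) * (1 + |(n : ℝ)|) ^ 2
        = C * ((1 + |(n : ℝ)|) ^ (P + 2) * ‖𝓕 φ (n : ℝ)‖) := by ring
      _ ≤ C * (2 ^ (P + 2) * p (𝓕 φ)) := by gcongr
      _ = C * 2 ^ (P + 2) * p (𝓕 φ) := by ring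
  have hq : p.comp T.toLinearMap φ = K * p (𝓕 φ) := by
    change p (K • 𝓕 φ) = _
    rw [map_smul_eq_mul, Real.norm_of_nonneg hK]
  convert IsTransform.tsum hterm (summable_one_add_abs_inv_sq.mul_left _) using 1
  · exact funext fun y => tsum_eq_tsum_fourier φ (h y)
  · rw [hq, tsum_mul_left]
    ring

lemma exists_isTransform_tsum_pow_mul {h : 𝔼 → ℝ} (hh : PolyGrowth h) {w : ℝ → ℂ}
    (hw : w.HasTemperateGrowth) {b : ℝ} (hb : 0 < b) (hwb : ∀ t, ‖w t‖ ≤ b) (ψ : 𝓢(ℝ, ℂ)) :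
    ∃ (C : ℝ) (J : ℕ), ∀ n : ℕ,
      IsTransform (fun y => ∑' m : ℤ, w (h y + m) ^ n * ψ (h y + m)) (C * (n + 1) ^ J * b ^ n) := by
  obtain ⟨q, hq, hqt⟩ := hh.exists_seminorm_isTransform_tsum
  obtain ⟨C, J, -, hCJ⟩ := exists_continuous_seminorm_smulLeftCLM_pow_le hw hb hwb ψ hq
  refine ⟨C, J, fun n => ?_⟩
  simpa only [smulLeftCLM_apply_apply (hw.pow n), Pi.pow_apply, smul_eq_mul]
    using (hqt _).mono (hCJ n)

end PolyGrowth

end FunctionalCalculus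

section Exponential

variable {V W : Type*} [NormedAddCommGroup V] [NormedSpace ℝ V] [NormedAddCommGroup W]
  [NormedSpace ℝ W]

lemma hasTemperateGrowth_of_periodic {f : ℝ → W} {c : ℝ} (hf : ContDiff ℝ ∞ f)
    (hper : Function.Periodic f c) (hc : c ≠ 0) : f.HasTemperateGrowth := by
  refine ⟨hf, fun n => ?_⟩
  have hper' : Function.Periodic (iteratedFDeriv ℝ n f) c := fun x => by
    rw [← iteratedFDeriv_comp_add_right, hper.funext]
  have hcont : Continuous (iteratedFDeriv ℝ n f) :=
    hf.continuous_iteratedFDeriv (by exact_mod_cast le_top)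
  obtain ⟨C, hC⟩ := (hper'.isBounded_of_continuous hc hcont).exists_norm_le
  exact ⟨0, C, fun x => by simpa using hC _ (Set.mem_range_self x)⟩

lemma hasTemperateGrowth_exp_mul_I :
    (fun t : ℝ => Complex.exp (t * Complex.I)).HasTemperateGrowth :=
  hasTemperateGrowth_of_periodic (c := 2 * π)
    (Complex.ofRealCLM.contDiff.mul contDiff_const).cexp
    (fun t => by simpa using Complex.exp_mul_I_periodic t) Real.two_pi_pos.ne'

lemma exists_schwartzMap_coe_eq {F : Type*} [NormedAddCommGroup F] [NormedSpace ℝ F] {f : V → W}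
    {f' : 𝓢(V, V →L[ℝ] W)} (hf : ∀ x, HasFDerivAt f (f' x) x) {u : 𝓢(V, F)}
    (hu : ∀ x, ‖f x‖ ≤ ‖u x‖) : ∃ ψ : 𝓢(V, W), ⇑ψ = f := by
  have hfderiv : fderiv ℝ f = f' := funext fun x => (hf x).fderiv
  refine ⟨⟨f, ?_, fun k n => ?_⟩, rfl⟩
  · rw [contDiff_infty_iff_fderiv, hfderiv]
    exact ⟨fun x => (hf x).differentiableAt, f'.smooth _⟩
  · rcases n with _ | n
    · refine ⟨SchwartzMap.seminorm ℝ k 0 u, fun x => ?_⟩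
      rw [norm_iteratedFDeriv_zero]
      refine le_trans ?_ (norm_pow_mul_le_seminorm ℝ u k x)
      gcongr
      exact hu x
    · refine ⟨SchwartzMap.seminorm ℝ k n f', fun x => ?_⟩
      rw [← norm_iteratedFDeriv_fderiv, hfderiv]
      exact le_seminorm ℝ k n f' x

lemma exists_schwartzMap_eq_exp_mul_I_sub_one (u : 𝓢(V, ℝ)) :
    ∃ ψ : 𝓢(V, ℂ), ∀ x, ψ x = Complex.exp (u x * Complex.I) - 1 := by
  have hU : (fun x => Complex.exp (u x * Complex.I)).HasTemperateGrowth :=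
    hasTemperateGrowth_exp_mul_I.comp u.hasTemperateGrowth
  let v : 𝓢(V, ℂ) := u.postcompCLM (Complex.ofRealCLM.smulRight Complex.I)
  obtain ⟨ψ, hψ⟩ := exists_schwartzMap_coe_eq (u := u)
    (f := fun x => Complex.exp (u x * Complex.I) - 1)
    (f' := smulLeftCLM _ (fun x => Complex.exp (u x * Complex.I)) (fderivCLM ℝ V ℂ v))
    (fun x => by
      rw [smulLeftCLM_apply_apply hU]
      exact v.differentiableAt.hasFDerivAt.cexp.sub_const 1)
    (fun x => by
      rw [mul_comm]
      exact Real.norm_exp_I_mul_ofReal_sub_one_le)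
  exact ⟨ψ, fun x => congrFun hψ x⟩

end Exponential

section UnitBump

/-- An increment of the smooth transition function, whose integer translates sum to one. -/
noncomputable def unitBump (t : ℝ) : ℝ := smoothTransition (t + 1) - smoothTransition t

lemma unitBump_of_le_neg_one {t : ℝ} (ht : t ≤ -1) : unitBump t = 0 := by
  rw [unitBump, smoothTransition.zero_of_nonpos (by linarith),
    smoothTransition.zero_of_nonpos (by linarith), sub_zero]

lemma unitBump_of_one_le {t : ℝ} (ht : 1 ≤ t) : unitBump t = 0 := by
  rw [unitBump, smoothTransition.one_of_one_le (by linarith),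
    smoothTransition.one_of_one_le (by linarith), sub_self]

lemma contDiff_unitBump : ContDiff ℝ ∞ unitBump :=
  (smoothTransition.contDiff.comp (contDiff_id.add contDiff_const)).sub smoothTransition.contDiff

lemma hasCompactSupport_unitBump : HasCompactSupport unitBump :=
  .intro (isCompact_Icc (a := (-1 : ℝ)) (b := 1)) fun t ht => by
    rw [Set.mem_Icc, not_and_or, not_le, not_le] at ht
    exact ht.elim (fun h => unitBump_of_le_neg_one h.le) fun h => unitBump_of_one_le h.le

lemma unitBump_add_unitBump_sub_one {t : ℝ} (h0 : 0 ≤ t) (h1 : t ≤ 1) :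
    unitBump t + unitBump (t - 1) = 1 := by
  rw [unitBump, unitBump, sub_add_cancel, smoothTransition.one_of_one_le (x := t + 1) (by linarith),
    smoothTransition.zero_of_nonpos (x := t - 1) (by linarith)]
  ring

lemma tsum_unitBump (t : ℝ) : ∑' n : ℤ, (unitBump (t + n) : ℂ) = 1 := by
  have hshift : ∑' n : ℤ, (unitBump (t + n) : ℂ) = ∑' n : ℤ, (unitBump (Int.fract t + n) : ℂ) := by
    rw [← (Equiv.addLeft (-⌊t⌋)).tsum_eq]
    refine tsum_congr fun n => ?_
    rw [Equiv.coe_addLeft, Int.cast_add, Int.cast_neg, ← add_assoc, ← sub_eq_add_neg,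
      Int.self_sub_floor]
  have h0 := Int.fract_nonneg t
  have h1 := (Int.fract_lt_one t).le
  rw [hshift, tsum_eq_sum (s := {0, -1}) fun n hn => ?_, Finset.sum_pair (by decide)]
  · simpa [sub_eq_add_neg] using congrArg Complex.ofReal (unitBump_add_unitBump_sub_one h0 h1)
  · simp only [Finset.mem_insert, Finset.mem_singleton, not_or] at hn
    rcases (by omega : n ≤ -2 ∨ 1 ≤ n) with h | h
    · have : (n : ℝ) ≤ -2 := by exact_mod_cast h
      rw [unitBump_of_le_neg_one (by linarith), Complex.ofReal_zero]
    · have : (1 : ℝ) ≤ n := by exact_mod_cast h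
      rw [unitBump_of_one_le (by linarith), Complex.ofReal_zero]

end UnitBump

/-- Expand `e^{inu}` as `1 + ∑_{k < n} e^{iku} (e^{iu} - 1)`. -/
lemma exists_isTransform_exp_mul_I_pow (u : 𝓢(𝔼, ℝ)) :
    ∃ (C : ℝ) (J : ℕ), ∀ n : ℕ,
      IsTransform (fun y => Complex.exp (u y * Complex.I) ^ n) (C * (n + 1) ^ J) := by
  have hU : (fun y => Complex.exp (u y * Complex.I)).HasTemperateGrowth :=
    hasTemperateGrowth_exp_mul_I.comp u.hasTemperateGrowth
  obtain ⟨ψ, hψ⟩ := exists_schwartzMap_eq_exp_mul_I_sub_one u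
  obtain ⟨q, hq, hqt⟩ := exists_seminorm_isTransform (d := d)
  obtain ⟨C, J, hC, hCJ⟩ := exists_continuous_seminorm_smulLeftCLM_pow_le hU one_pos
    (fun y => (Complex.norm_exp_ofReal_mul_I _).le) ψ hq
  refine ⟨C + 1, J + 1, fun n => ?_⟩
  induction n with
  | zero => simpa using IsTransform.one.mono (le_add_of_nonneg_left hC)
  | succ n ih =>
    convert (ih.add ((hqt _).mono (hCJ n))).mono ?_ using 2 with y
    · rw [smulLeftCLM_apply_apply (hU.pow n), hψ, Pi.pow_apply, smul_eq_mul]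
      ring
    · push_cast
      calc (C + 1) * (n + 1) ^ (J + 1) + C * (n + 1) ^ J * 1 ^ n
          ≤ (C + 1) * (n + 1) ^ (J + 1) + (C + 1) * (n + 1) ^ J * 1 ^ n := by
            gcongr
            exact le_add_of_nonneg_right zero_le_one
        _ = (C + 1) * ((n + 1) ^ J * (n + 1 + 1)) := by ring
        _ ≤ (C + 1) * (n + 1 + 1) ^ (J + 1) := by
            rw [pow_succ (n + 1 + 1 : ℝ)]
            gcongr
            exact le_add_of_nonneg_right zero_le_one

namespace PolyGrowth

lemma re_schwartzMap (φ : 𝓢(𝔼, ℂ)) : PolyGrowth fun y : 𝔼 => (φ y).re := by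
  let u : 𝓢(𝔼, ℝ) := φ.postcompCLM ((2 * π) • Complex.reCLM)
  obtain ⟨C, J, hCJ⟩ := exists_isTransform_exp_mul_I_pow u
  refine of_forall_pow (C := C) (P := J) fun n => ?_
  convert hCJ n using 4 with y
  change _ = ((2 * π * (φ y).re : ℝ) : ℂ) * Complex.I
  push_cast
  ring

lemma comp_periodic {h : 𝔼 → ℝ} (hh : PolyGrowth h) {ℓ : ℝ → ℝ} (hℓ : ContDiff ℝ ∞ ℓ)
    (hper : Function.Periodic ℓ 1) : PolyGrowth fun y => ℓ (h y) := by
  have hcs : HasCompactSupport fun t => (unitBump t : ℂ) :=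
    hasCompactSupport_unitBump.comp_left (g := Complex.ofReal) Complex.ofReal_zero
  have hsmooth : ContDiff ℝ ∞ fun t => (unitBump t : ℂ) :=
    Complex.ofRealCLM.contDiff.comp contDiff_unitBump
  let ψ : 𝓢(ℝ, ℂ) := hcs.toSchwartzMap hsmooth
  have hw : (fun t => Complex.exp (2 * π * Complex.I * ℓ t)).HasTemperateGrowth :=
    hasTemperateGrowth_of_periodic
      (contDiff_const.mul (Complex.ofRealCLM.contDiff.comp hℓ)).cexp
      (hper.comp fun s => Complex.exp (2 * π * Complex.I * s)) one_ne_zero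
  obtain ⟨C, J, hCJ⟩ := hh.exists_isTransform_tsum_pow_mul hw one_pos
    (fun t => by simp [Complex.norm_exp]) ψ
  refine of_forall_pow (C := C) (P := J) fun n => ?_
  convert hCJ n using 1
  · ext y
    have hperiod (m : ℤ) : ℓ (h y + m) = ℓ (h y) := by simpa using hper.int_mul m (h y)
    have hψ (t : ℝ) : ψ t = unitBump t := rfl
    simp only [hperiod, hψ, tsum_mul_left, tsum_unitBump, mul_one]
  · rw [one_pow, mul_one]

lemma re_mul_character (c : ℂ) (γ : 𝔼) : PolyGrowth fun y : 𝔼 => (c * character γ y).re := by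
  have hℓ : ContDiff ℝ ∞ fun t : ℝ => c.re * Real.cos (t * (2 * π)) +
      c.im * Real.sin (t * (2 * π)) := by
    fun_prop
  convert (inner γ).comp_periodic hℓ fun t => ?_ using 2 with y
  · rw [character_eq_exp_mul_I, Complex.mul_re, Complex.exp_ofReal_mul_I_re,
      Complex.exp_ofReal_mul_I_im, show -2 * π * ⟪γ, y⟫ = -(⟪γ, y⟫ * (2 * π)) by ring,
      Real.cos_neg, Real.sin_neg]
    ring
  · simp [add_mul]

end PolyGrowth

section Approximation

variable {V E : Type*} [NormedAddCommGroup V] [NormedSpace ℝ V] [FiniteDimensional ℝ V]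
  [MeasurableSpace V] [BorelSpace V] [NormedAddCommGroup E] [NormedSpace ℝ E]

lemma exists_schwartzMap_integral_sub_le {μ : Measure V} [IsFiniteMeasureOnCompacts μ]
    {f : V → E} (hf : Integrable f μ) {δ : ℝ} (hδ : 0 < δ) :
    ∃ φ : 𝓢(V, E), ∫ x, ‖f x - φ x‖ ∂μ ≤ δ := by
  obtain ⟨g, hgc, hg, hgδ⟩ := (memLp_one_iff_integrable.2 hf).exist_eLpNorm_sub_le
    ENNReal.one_ne_top le_rfl hδ
  refine ⟨hgc.toSchwartzMap hg, ?_⟩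
  have hfg : Integrable (fun x => f x - g x) μ :=
    hf.sub (hg.continuous.integrable_of_hasCompactSupport hgc)
  rw [eLpNorm_one_eq_lintegral_enorm] at hgδ
  change ∫ x, ‖f x - g x‖ ∂μ ≤ δ
  rw [integral_norm_eq_lintegral_enorm hfg.aestronglyMeasurable]
  exact ENNReal.toReal_le_of_le_ofReal hδ.le hgδ

/-- Truncate the atomic part and replace the density by a Schwartz function close in `L¹`. -/
lemma IsTransform.exists_polyGrowth_isTransform_sub {F : 𝔼 → ℂ} {C : ℝ} (hF : IsTransform F C)
    {δ : ℝ} (hδ : 0 < δ) :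
    ∃ h : 𝔼 → ℝ, PolyGrowth h ∧ IsTransform (fun y => (((F y).re - h y : ℝ) : ℂ)) δ := by
  obtain ⟨f, a, γ, hf, ha, -, hy⟩ := hF
  obtain ⟨φ, hφ⟩ := exists_schwartzMap_integral_sub_le hf (half_pos hδ)
  obtain ⟨N, hN⟩ := ((tendsto_sum_nat_add fun n => ‖a n‖).eventually_lt_const (half_pos hδ)).exists
  have hpoly := (PolyGrowth.re_schwartzMap (𝓕 φ)).add
    (PolyGrowth.sum (fun n => .re_mul_character (a n) (γ n)) (Finset.range N))
  refine ⟨_, hpoly, ?_⟩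
  have hremainder : IsTransform
      (measureFourier (fun x => f x - φ x) (fun n => a (n + N)) fun n => γ (n + N)) δ :=
    ⟨fun x => f x - φ x, _, _, hf.sub φ.integrable, ha.comp_injective (add_left_injective N),
      by linarith, fun y => rfl⟩
  convert hremainder.re using 3 with y
  rw [hy, measureFourier_eq, measureFourier_eq, fourier_sub hf φ.integrable, ← fourier_coe,
    ← (summable_mul_character ha γ y).sum_add_tsum_nat_add N,
    Complex.add_re, Complex.add_re, Complex.add_re, Complex.sub_re, Complex.re_sum]
  ring

end Approximation

section Inversion

lemma exists_schwartzMap_eq_inv {a b m : ℝ} (ha : 0 < a) (hab : a < b) (hbm : b < m) :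
    ∃ w : 𝓢(ℝ, ℂ), (∀ t ∈ Set.Icc b (2 * m - b), w t = (t : ℂ)⁻¹) ∧
      (∀ t ∉ Set.Ioo a (2 * m - a), w t = 0) ∧ ∀ t, ‖w t‖ ≤ a⁻¹ := by
  let χ : ContDiffBump m := ⟨m - b, m - a, by linarith, by linarith⟩
  have hχ_one t (ht : t ∈ Set.Icc b (2 * m - b)) : χ t = 1 := by
    refine χ.one_of_mem_closedBall ?_
    rw [Real.closedBall_eq_Icc]
    change t ∈ Set.Icc (m - (m - b)) (m + (m - b))
    constructor <;> linarith [ht.1, ht.2]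
  have hχ_zero t (ht : t ∉ Set.Ioo a (2 * m - a)) : χ t = 0 := by
    refine χ.zero_of_le_dist (not_lt.1 fun hdist => ht ?_)
    change t ∈ Metric.ball m (m - a) at hdist
    rw [Real.ball_eq_Ioo] at hdist
    constructor <;> linarith [hdist.1, hdist.2]
  have hsmooth : ContDiff ℝ ∞ fun t => χ t * t⁻¹ := contDiff_iff_contDiffAt.2 fun t => by
    rcases lt_or_ge t a with h | h
    · refine (contDiffAt_const (c := (0 : ℝ))).congr_of_eventuallyEq ?_
      filter_upwards [eventually_lt_nhds h] with x hx
      rw [hχ_zero x fun hx' => hx.not_gt hx'.1, zero_mul]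
    · exact χ.contDiff.contDiffAt.mul (contDiffAt_inv ℝ (ha.trans_le h).ne')
  have hsupp : HasCompactSupport fun t => ((χ t * t⁻¹ : ℝ) : ℂ) :=
    χ.hasCompactSupport.mul_right.comp_left (g := Complex.ofReal) Complex.ofReal_zero
  let w : 𝓢(ℝ, ℂ) := hsupp.toSchwartzMap (Complex.ofRealCLM.contDiff.comp hsmooth)
  have hw t : w t = ((χ t * t⁻¹ : ℝ) : ℂ) := rfl
  have hw_zero t (ht : t ∉ Set.Ioo a (2 * m - a)) : w t = 0 := by
    rw [hw, hχ_zero t ht, zero_mul, Complex.ofReal_zero]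
  refine ⟨w, fun t ht => ?_, hw_zero, fun t => ?_⟩
  · rw [hw, hχ_one t ht, one_mul, Complex.ofReal_inv]
  · by_cases ht : t ∈ Set.Ioo a (2 * m - a)
    · have ht0 : 0 < t := ha.trans ht.1
      rw [hw, Complex.norm_real, norm_mul, norm_inv, Real.norm_of_nonneg χ.nonneg,
        Real.norm_of_nonneg ht0.le]
      calc χ t * t⁻¹ ≤ 1 * a⁻¹ := by
            gcongr
            exacts [χ.le_one, ht.1.le]
        _ = a⁻¹ := one_mul _
    · rw [hw_zero t ht, norm_zero]
      positivity

lemma summable_add_one_pow_mul_geometric (J : ℕ) {r : ℝ} (hr : ‖r‖ < 1) :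
    Summable fun n : ℕ => ((n : ℝ) + 1) ^ J * r ^ n := by
  have hfact : Summable fun n : ℕ => ((n + J).descFactorial J : ℝ) * ‖r‖ ^ n :=
    summable_descFactorial_mul_geometric_of_norm_lt_one J (by rwa [norm_norm])
  refine .of_norm_bounded hfact fun n => ?_
  rw [norm_mul, norm_pow r, Real.norm_of_nonneg (by positivity)]
  gcongr
  rw [Nat.add_descFactorial_eq_ascFactorial]
  exact_mod_cast Nat.pow_succ_le_ascFactorial (n + 1) J

lemma PolyGrowth.exists_isTransform_comp_pow_succ {h : 𝔼 → ℝ} (hh : PolyGrowth h) {w : 𝓢(ℝ, ℂ)}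
    {b : ℝ} (hb : 0 < b) (hwb : ∀ t, ‖w t‖ ≤ b)
    (hshift : ∀ y, ∀ m : ℤ, m ≠ 0 → w (h y + m) = 0) :
    ∃ (C : ℝ) (J : ℕ), ∀ n : ℕ,
      IsTransform (fun y => w (h y) ^ (n + 1)) (C * (n + 1) ^ J * b ^ n) := by
  obtain ⟨C, J, hCJ⟩ := hh.exists_isTransform_tsum_pow_mul w.hasTemperateGrowth hb hwb w
  refine ⟨C, J, fun n => ?_⟩
  convert hCJ n using 2 with y
  rw [tsum_eq_single 0 fun m hm => by rw [hshift y m hm, mul_zero], Int.cast_zero, add_zero,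
    pow_succ]

lemma IsTransform.exists_isTransform_div_one_add_mul {r W : 𝔼 → ℂ} {δ b C : ℝ} {J : ℕ}
    (hr : IsTransform r δ) (hb : 0 ≤ b) (hδb : δ * b < 1) (hWb : ∀ y, ‖W y‖ ≤ b)
    (hW : ∀ n : ℕ, IsTransform (fun y => W y ^ (n + 1)) (C * (n + 1) ^ J * b ^ n)) :
    ∃ D, IsTransform (fun y => W y / (1 + r y * W y)) D := by
  have hterm n := ((hr.const_mul (-1)).pow n).mul (hW n)
  have hδb' : ‖δ * b‖ < 1 := by rwa [Real.norm_of_nonneg (mul_nonneg hr.nonneg hb)]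
  have hsum : Summable fun n : ℕ => (‖(-1 : ℂ)‖ * δ) ^ n * (C * (n + 1) ^ J * b ^ n) :=
    ((summable_add_one_pow_mul_geometric J hδb').mul_left C).congr fun n => by
      rw [norm_neg, norm_one, one_mul, mul_pow]
      ring
  have hseries y : ∑' n, (-1 * r y) ^ n * W y ^ (n + 1) = W y / (1 + r y * W y) := by
    have hlt : ‖-(r y * W y)‖ < 1 := by
      rw [norm_neg, norm_mul]
      refine lt_of_le_of_lt ?_ hδb
      have := hr.nonneg
      gcongr
      exacts [hr.norm_le y, hWb y]
    rw [div_eq_mul_inv, ← sub_neg_eq_add, ← tsum_geometric_of_norm_lt_one hlt, ← tsum_mul_left]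
    exact tsum_congr fun n => by ring
  exact ⟨_, funext hseries ▸ IsTransform.tsum hterm hsum⟩

lemma IsTransform.exists_isTransform_ofReal_inv {h : 𝔼 → ℝ} {C : ℝ}
    (hh : IsTransform (fun y => (h y : ℂ)) C) (h0 : ∀ y, 0 ≤ h y) (h1 : ∀ y, h y ≤ 1 / 4)
    {α : ℝ} (hα : 0 < α) (hα' : α ≤ 1 / 4) :
    ∃ (G : 𝔼 → ℂ) (D : ℝ), IsTransform G D ∧
      ∀ y, (α ≤ h y → G y = (h y : ℂ)⁻¹) ∧ (h y ≤ α / 4 → G y = 0) := by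
  obtain ⟨h₀, hh₀, hr⟩ := hh.exists_polyGrowth_isTransform_sub (show 0 < α / 8 by positivity)
  simp only [Complex.ofReal_re] at hr
  have hclose y : |h y - h₀ y| ≤ α / 8 := by
    simpa only [Complex.norm_real, Real.norm_eq_abs] using hr.norm_le y
  have hle y : h y ≤ h₀ y + α / 8 := by linarith [(abs_le.1 (hclose y)).2]
  have hge y : h₀ y ≤ h y + α / 8 := by linarith [(abs_le.1 (hclose y)).1]
  obtain ⟨w, hw_inv, hw_zero, hwb⟩ := exists_schwartzMap_eq_inv
    (show 0 < 3 * α / 8 by positivity) (show 3 * α / 8 < 7 * α / 8 by linarith)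
    (show 7 * α / 8 < 1 / 4 by linarith)
  have hshift y (m : ℤ) (hm : m ≠ 0) : w (h₀ y + m) = 0 := by
    refine hw_zero _ fun hmem => ?_
    rcases (by omega : m ≤ -1 ∨ 1 ≤ m) with hm | hm
    · have : (m : ℝ) ≤ -1 := by exact_mod_cast hm
      linarith [hmem.1, h1 y, hge y]
    · have : (1 : ℝ) ≤ m := by exact_mod_cast hm
      linarith [hmem.2, h0 y, hle y]
  obtain ⟨A, J, hA⟩ := hh₀.exists_isTransform_comp_pow_succ (by positivity) hwb hshift
  obtain ⟨D, hD⟩ := hr.exists_isTransform_div_one_add_mul (by positivity)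
    (by field_simp; norm_num) (fun y => hwb (h₀ y)) hA
  refine ⟨_, D, hD, fun y => ⟨fun hy => ?_, fun hy => ?_⟩⟩
  · have hy₀ : 7 * α / 8 ≤ h₀ y := by linarith [hle y]
    have hpos : (h₀ y : ℂ) ≠ 0 := Complex.ofReal_ne_zero.2 (by linarith)
    rw [hw_inv _ ⟨hy₀, by linarith [h1 y, hge y]⟩]
    push_cast
    field_simp
    ring
  · rw [hw_zero _ fun hmem => by linarith [hmem.1, hge y], zero_div]

lemma IsTransform.exists_isTransform_inv {F : 𝔼 → ℂ} {C ε : ℝ} (hF : IsTransform F C)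
    (hε : 0 < ε) :
    ∃ (G : 𝔼 → ℂ) (D : ℝ), IsTransform G D ∧
      ∀ y, (ε ≤ ‖F y‖ → G y = (F y)⁻¹) ∧ (‖F y‖ ≤ ε / 2 → G y = 0) := by
  have hC : 0 ≤ C := hF.nonneg
  let κ : ℝ := 1 / (4 * (C + ε) ^ 2)
  have hκ : 0 < κ := by positivity
  have hκC : κ * (C + ε) ^ 2 = 1 / 4 := by simp only [κ]; field_simp
  have hconj y : ((κ * ‖F y‖ ^ 2 : ℝ) : ℂ) = κ * (F y * (starRingEnd ℂ) (F y)) := by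
    rw [Complex.mul_conj']
    push_cast
    rfl
  have hh : IsTransform (fun y => ((κ * ‖F y‖ ^ 2 : ℝ) : ℂ)) (‖(κ : ℂ)‖ * (C * C)) := by
    simpa only [hconj] using (hF.mul hF.conj).const_mul κ
  have hle {x : ℝ} (hx0 : 0 ≤ x) (hx : x ≤ C + ε) : κ * x ^ 2 ≤ 1 / 4 := by
    rw [← hκC]
    gcongr
  obtain ⟨G, D, hG, hGy⟩ := hh.exists_isTransform_ofReal_inv (fun y => by positivity)
    (fun y => hle (norm_nonneg _) ((hF.norm_le y).trans (by linarith)))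
    (α := κ * ε ^ 2) (by positivity) (hle hε.le (by linarith))
  refine ⟨_, _, (hF.conj.mul hG).const_mul κ, fun y => ⟨fun hy => ?_, fun hy => ?_⟩⟩
  · have hne : F y ≠ 0 := norm_pos_iff.1 (hε.trans_le hy)
    have hne' : (starRingEnd ℂ) (F y) ≠ 0 := (map_ne_zero _).2 hne
    have hκ' : (κ : ℂ) ≠ 0 := Complex.ofReal_ne_zero.2 hκ.ne'
    rw [(hGy y).1 (by gcongr), hconj]
    field_simp
  · have hsmall : κ * ‖F y‖ ^ 2 ≤ κ * ε ^ 2 / 4 := by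
      calc κ * ‖F y‖ ^ 2 ≤ κ * (ε / 2) ^ 2 := by gcongr
        _ = κ * ε ^ 2 / 4 := by ring
    rw [(hGy y).2 hsmall, mul_zero, mul_zero]

end Inversion

end FourierStieltjes

/-- **Local inversion of Fourier–Stieltjes transforms.** For every complex measure
`μ = f dx + Σ_n a_n δ_{γ_n}` on `ℝ^d` of finite total variation without singular component
and every `ε > 0` there is a measure `ν_ε = g dx + Σ_n b_n δ_{ρ_n}` of finite total variation
without singular component such that `ν̂_ε(y) = 1/μ̂(y)` whenever `|μ̂(y)| ≥ ε` and
`ν̂_ε(y) = 0` whenever `|μ̂(y)| ≤ ε/2`. -/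
theorem wiener_local_inverse_measures {d : ℕ}
    (f : EuclideanSpace ℝ (Fin d) → ℂ) (hf : Integrable f)
    (a : ℕ → ℂ) (ha : Summable fun n => ‖a n‖)
    (γ : ℕ → EuclideanSpace ℝ (Fin d))
    (ε : ℝ) (hε : 0 < ε) :
    ∃ (g : EuclideanSpace ℝ (Fin d) → ℂ) (b : ℕ → ℂ) (ρ : ℕ → EuclideanSpace ℝ (Fin d)),
      Integrable g ∧ Summable (fun n => ‖b n‖) ∧
      ∀ y : EuclideanSpace ℝ (Fin d),
        (ε ≤ ‖measureFourier f a γ y‖ →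
          measureFourier g b ρ y = (measureFourier f a γ y)⁻¹) ∧
        (‖measureFourier f a γ y‖ ≤ ε / 2 → measureFourier g b ρ y = 0) := by
  have hF : FourierStieltjes.IsTransform (measureFourier f a γ) ((∫ x, ‖f x‖) + ∑' n, ‖a n‖) :=
    ⟨f, a, γ, hf, ha, le_rfl, fun y => rfl⟩
  obtain ⟨G, D, ⟨g, b, ρ, hg, hb, -, hG⟩, hGF⟩ := hF.exists_isTransform_inv hε
  exact ⟨g, b, ρ, hg, hb, fun y => hG y ▸ hGF y⟩
end

section
/- Let K ⊂ ℂ be a compact set and let h be a real-analytic function on an open neighborhood of K, with 0 ∈ K. Then for each f ∈ L¹(ℝ^d) there exists g ∈ L¹(ℝ^d) such that h(f̂(y)) = ĝ(y) + h(0) for every y ∈ ℝ^d with f̂(y) ∈ K. -/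
open MeasureTheory Real
open scoped FourierTransform

/-!
Fourier transforms of integrable functions form an algebra `A`, normed by the `L¹` norm, that
contains all Schwartz functions. For a continuous function to belong to `A` it suffices, by
multiplying with bump functions, that it coincides with elements of `A` locally and near infinity.

Where `f̂ = z + F` with `‖F‖_A` small, the power series of `h` at `z`, stripped of its constant term
and evaluated at `F`, converges in `A`, since the real and imaginary parts of `F` are again in `A`,
with norm at most `‖F‖_A`. Near `y₀` the deviation of `f̂` from `f̂ y₀` is indeed small in `A`, and
so is `f̂` itself near infinity: both follow from `‖(F (s • ·) - F 0) * G‖_A → 0` as `s → 0`, a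
consequence of the continuity of translation in `L¹`, with a bump function in the role of `G` and
of `F` respectively.
-/

open Filter Topology

section Localization

variable {X R S : Type*} [CommRing R] [SetLike S (X → R)]
  [NonUnitalSubringClass S (X → R)] {A : S} {H F G : X → R} {s t : Set X}

theorem exists_mem_eqOn_union_of_cutoff {χ : X → R} (hχ : χ ∈ A) (hF : F ∈ A) (hG : G ∈ A)
    (hHF : Set.EqOn H F (Function.support χ)) (hHG : Set.EqOn H G t) (hχs : Set.EqOn χ 1 s) :
    ∃ G' ∈ A, Set.EqOn H G' (t ∪ s) := by
  refine ⟨χ * F + (G - χ * G), add_mem (mul_mem hχ hF) (sub_mem hG (mul_mem hχ hG)),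
    fun x hx => ?_⟩
  have hlocal : χ x * H x = χ x * F x := by
    by_cases hχx : χ x = 0
    · simp only [hχx, zero_mul]
    · rw [hHF hχx]
  have hglobal : (1 - χ x) * H x = (1 - χ x) * G x := by
    rcases hx with hx | hx
    · rw [hHG hx]
    · simp only [hχs hx, Pi.one_apply, sub_self, zero_mul]
  simp only [Pi.add_apply, Pi.sub_apply, Pi.mul_apply]
  linear_combination hlocal + hglobal

theorem exists_mem_eqOn_union_of_isCompact [TopologicalSpace X]
    (hA : ∀ x, ∀ U ∈ 𝓝 x, ∃ χ ∈ A, χ =ᶠ[𝓝 x] 1 ∧ Function.support χ ⊆ U)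
    (hs : IsCompact s) (hH : ∀ x ∈ s, ∃ F ∈ A, H =ᶠ[𝓝 x] F)
    (ht : ∃ G ∈ A, Set.EqOn H G t) : ∃ G ∈ A, Set.EqOn H G (t ∪ s) := by
  refine hs.induction_on (p := fun s => ∀ t, (∃ G ∈ A, Set.EqOn H G t) →
    ∃ G ∈ A, Set.EqOn H G (t ∪ s)) ?_ ?_ ?_ ?_ t ht
  · exact fun t ht => by rwa [Set.union_empty]
  · intro s s' hss' hs' t ht
    obtain ⟨G, hG, hHG⟩ := hs' t ht
    exact ⟨G, hG, hHG.mono (Set.union_subset_union_right t hss')⟩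
  · exact fun s s' hs hs' t ht => by simpa only [Set.union_assoc] using hs' _ (hs t ht)
  · intro x hx
    obtain ⟨F, hF, hHF⟩ := hH x hx
    obtain ⟨χ, hχ, hχx, hχF⟩ := hA x _ hHF
    refine ⟨{y | χ y = 1}, mem_nhdsWithin_of_mem_nhds hχx, fun t ⟨G, hG, hHG⟩ => ?_⟩
    exact exists_mem_eqOn_union_of_cutoff hχ hF hG hχF hHG fun _ hy => hy

end Localization

section ApproximateIdentity

variable {E F : Type*} [NormedAddCommGroup E] [NormedSpace ℝ E] [MeasurableSpace E]
  [OpensMeasurableSpace E] [SecondCountableTopology E] {μ : Measure E}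
  [NormedAddCommGroup F] [NormedSpace ℝ F]

theorem tendsto_integral_smul_comp_smul {u : E → ℝ} (hu : Integrable u μ) {φ : E → F}
    (hφ : Continuous φ) {C : ℝ} (hC : ∀ x, ‖φ x‖ ≤ C) :
    Tendsto (fun s : ℝ => ∫ x, u x • φ (s • x) ∂μ) (𝓝 0) (𝓝 (∫ x, u x • φ 0 ∂μ)) := by
  refine tendsto_integral_filter_of_dominated_convergence (fun x => ‖u x‖ * C)
    (.of_forall fun s => hu.aestronglyMeasurable.smul
      (hφ.comp (continuous_const_smul s)).aestronglyMeasurable)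
    (.of_forall fun s => ae_of_all _ fun x => ?_) (hu.norm.mul_const C) (ae_of_all _ fun x => ?_)
  · rw [norm_smul]
    gcongr
    exact hC _
  · exact Continuous.tendsto' (by fun_prop) _ _ (by rw [zero_smul])

end ApproximateIdentity

section Multilinear

variable {F : Type*} [NormedAddCommGroup F] [NormedSpace ℝ F] {n : ℕ}

theorem continuousMultilinearMap_eq_re_smul_add_im_smul
    (m : ContinuousMultilinearMap ℝ (fun _ : Fin (n + 1) => ℂ) F) (v : Fin (n + 1) → ℂ) :
    m v = (v 0).re • m.curryLeft 1 (Fin.tail v) +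
      (v 0).im • m.curryLeft Complex.I (Fin.tail v) := by
  have hv : (v 0).re • (1 : ℂ) + (v 0).im • Complex.I = v 0 := by simp
  rw [← smul_apply, ← map_smul, ← smul_apply, ← map_smul, ← add_apply, ← map_add, hv,
    m.curryLeft_apply, Fin.cons_self_tail]

theorem norm_curryLeft_apply_le
    (m : ContinuousMultilinearMap ℝ (fun _ : Fin (n + 1) => ℂ) F) {w : ℂ} (hw : ‖w‖ = 1) :
    ‖m.curryLeft w‖ ≤ ‖m‖ := by
  simpa [hw] using m.curryLeft.le_opNorm w

end Multilinear

section FourierAlgebra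

variable {E : Type*} [NormedAddCommGroup E] [InnerProductSpace ℝ E] [FiniteDimensional ℝ E]
  [MeasurableSpace E] [BorelSpace E]

/-- `FourierNormLE F c` says that `F` belongs to the Fourier algebra, the algebra of Fourier
transforms of integrable functions, with norm at most `c` there. -/
def FourierNormLE (F : E → ℂ) (c : ℝ) : Prop :=
  ∃ g : Lp ℂ 1 (volume : Measure E), ‖g‖ ≤ c ∧ 𝓕 (g : E → ℂ) = F

/-- The Fourier transform at the frequency `y`, as a continuous linear functional on `L¹`. -/
noncomputable def fourierEvalCLM (y : E) : Lp ℂ 1 (volume : Measure E) →L[ℂ] ℂ :=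
  (BoundedContinuousFunction.evalCLM ℂ y).comp (Lp.fourierTransformCLM E ℂ)

theorem fourierEvalCLM_apply (y : E) (g : Lp ℂ 1 (volume : Measure E)) :
    fourierEvalCLM y g = 𝓕 (g : E → ℂ) y := rfl

theorem fourierNormLE_iff_exists_integrable {F : E → ℂ} {c : ℝ} :
    FourierNormLE F c ↔ ∃ g : E → ℂ, Integrable g ∧ ∫ x, ‖g x‖ ≤ c ∧ 𝓕 g = F := by
  constructor
  · rintro ⟨g, hgc, hgF⟩
    exact ⟨g, L1.integrable_coeFn g, (L1.norm_eq_integral_norm g).symm.trans_le hgc, hgF⟩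
  · rintro ⟨g, hg, hgc, hgF⟩
    exact ⟨hg.toL1 g, by rwa [L1.norm_of_fun_eq_integral_norm],
      (funext (Real.fourier_congr_ae hg.coeFn_toL1)).trans hgF⟩

namespace FourierNormLE

variable {F G : E → ℂ} {b c : ℝ}

theorem mono (hF : FourierNormLE F b) (hbc : b ≤ c) : FourierNormLE F c := by
  obtain ⟨g, hg, hgF⟩ := hF
  exact ⟨g, hg.trans hbc, hgF⟩

theorem norm_apply_le (hF : FourierNormLE F c) (y : E) : ‖F y‖ ≤ c := by
  obtain ⟨g, -, hgc, rfl⟩ := fourierNormLE_iff_exists_integrable.1 hF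
  exact (VectorFourier.norm_fourierIntegral_le_integral_norm _ _ _ _ _).trans hgc

theorem nonneg (hF : FourierNormLE F c) : 0 ≤ c :=
  (norm_nonneg _).trans (hF.norm_apply_le 0)

theorem zero : FourierNormLE (0 : E → ℂ) 0 :=
  ⟨0, norm_zero.le, congrArg DFunLike.coe (map_zero (Lp.fourierTransformCLM E ℂ))⟩

theorem add (hF : FourierNormLE F b) (hG : FourierNormLE G c) : FourierNormLE (F + G) (b + c) := by
  obtain ⟨f, hf, rfl⟩ := hF
  obtain ⟨g, hg, rfl⟩ := hG
  exact ⟨f + g, norm_add_le_of_le hf hg,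
    congrArg DFunLike.coe (map_add (Lp.fourierTransformCLM E ℂ) f g)⟩

theorem const_smul (a : ℂ) (hF : FourierNormLE F c) : FourierNormLE (a • F) (‖a‖ * c) := by
  obtain ⟨f, hf, rfl⟩ := hF
  exact ⟨a • f, by rw [norm_smul]; gcongr,
    congrArg DFunLike.coe (map_smul (Lp.fourierTransformCLM E ℂ) a f)⟩

theorem mul (hF : FourierNormLE F b) (hG : FourierNormLE G c) : FourierNormLE (F * G) (b * c) := by
  obtain ⟨f, hf, hfb, rfl⟩ := fourierNormLE_iff_exists_integrable.1 hF
  obtain ⟨g, hg, hgc, rfl⟩ := fourierNormLE_iff_exists_integrable.1 hG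
  refine fourierNormLE_iff_exists_integrable.2
    ⟨convolution f g (.mul ℂ ℂ) volume, hf.integrable_convolution _ hg, ?_,
      funext (Real.fourier_mul_convolution_eq hf hg)⟩
  calc ∫ x, ‖convolution f g (.mul ℂ ℂ) volume x‖
      ≤ ∫ x, convolution (‖f ·‖) (‖g ·‖) (.mul ℝ ℝ) volume x := by
        refine integral_mono (hf.integrable_convolution _ hg).norm
          (hf.norm.integrable_convolution _ hg.norm) fun x => ?_
        refine (norm_integral_le_integral_norm _).trans_eq ?_
        simp [convolution]
    _ = (∫ x, ‖f x‖) * ∫ x, ‖g x‖ := integral_convolution _ hf.norm hg.norm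
    _ ≤ b * c := mul_le_mul hfb hgc (integral_nonneg fun _ => norm_nonneg _) hF.nonneg

theorem tsum {F : ℕ → E → ℂ} {c : ℕ → ℝ} (hF : ∀ n, FourierNormLE (F n) (c n))
    (hc : Summable c) : FourierNormLE (fun y => ∑' n, F n y) (∑' n, c n) := by
  choose g hg hgF using hF
  have hs : Summable fun n => ‖g n‖ := hc.of_nonneg_of_le (fun n => norm_nonneg _) hg
  refine ⟨∑' n, g n, (norm_tsum_le_tsum_norm hs).trans (hs.tsum_le_tsum hg hc), funext fun y => ?_⟩
  rw [← fourierEvalCLM_apply, (fourierEvalCLM y).map_tsum hs.of_norm]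
  simp_rw [fourierEvalCLM_apply, hgF]

theorem integral {α : Type*} [MeasurableSpace α] {μ : Measure α}
    {v : α → Lp ℂ 1 (volume : Measure E)} (hv : Integrable v μ) :
    FourierNormLE (fun y => ∫ a, 𝓕 (v a : E → ℂ) y ∂μ) (∫ a, ‖v a‖ ∂μ) :=
  ⟨∫ a, v a ∂μ, norm_integral_le_integral_norm _,
    funext fun y => ((fourierEvalCLM y).integral_comp_comm hv).symm⟩

protected theorem star (hF : FourierNormLE F c) : FourierNormLE (star F) c := by
  obtain ⟨g, hg, hgc, rfl⟩ := fourierNormLE_iff_exists_integrable.1 hF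
  refine fourierNormLE_iff_exists_integrable.2 ⟨fun x => starRingEnd ℂ (g (-x)),
    Complex.conjCLE.toContinuousLinearMap.integrable_comp hg.comp_neg, ?_, funext fun y => ?_⟩
  · simpa [integral_neg_eq_self (fun x => ‖g x‖)] using hgc
  · rw [Pi.star_apply, ← starRingEnd_apply, Real.fourier_eq, Real.fourier_eq, ← integral_conj,
      ← integral_neg_eq_self (fun x => starRingEnd ℂ (𝐞 (-inner ℝ x y) • g x))]
    congr 1 with x
    simp [Circle.smul_def, ← Circle.coe_inv_eq_conj, AddChar.map_neg_eq_inv]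

theorem re (hF : FourierNormLE F c) : FourierNormLE (fun y => ((F y).re : ℂ)) c := by
  convert (hF.add hF.star).const_smul (1 / 2) using 1
  · ext y
    simp only [Complex.re_eq_add_conj, Pi.smul_apply, Pi.add_apply, Pi.star_apply, smul_eq_mul,
      starRingEnd_apply]
    ring
  · simp only [norm_div, norm_one, RCLike.norm_ofNat]
    ring

theorem im (hF : FourierNormLE F c) : FourierNormLE (fun y => ((F y).im : ℂ)) c := by
  convert (hF.const_smul (-Complex.I)).re using 1 <;> simp

theorem comp_add_right (hF : FourierNormLE F c) (a : E) :
    FourierNormLE (fun y => F (y + a)) c := by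
  obtain ⟨g, hg, hgc, rfl⟩ := fourierNormLE_iff_exists_integrable.1 hF
  refine fourierNormLE_iff_exists_integrable.2 ⟨fun x => 𝐞 (-inner ℝ x a) • g x,
    (Real.fourierIntegral_convergent_iff a).2 hg, by simpa using hgc, funext fun y => ?_⟩
  rw [Real.fourier_eq, Real.fourier_eq]
  congr 1 with x
  rw [smul_smul, ← AddChar.map_add_eq_mul, inner_add_right, neg_add]

theorem comp_smul (hF : FourierNormLE F c) {s : ℝ} (hs : s ≠ 0) :
    FourierNormLE (fun y => F (s • y)) c := by
  obtain ⟨g, hg, hgc, rfl⟩ := fourierNormLE_iff_exists_integrable.1 hF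
  set J : ℝ := |s ^ Module.finrank ℝ E|
  have hJ : J ≠ 0 := by positivity
  refine fourierNormLE_iff_exists_integrable.2 ⟨fun x => J⁻¹ • g (s⁻¹ • x),
    (hg.comp_smul (inv_ne_zero hs)).smul J⁻¹, ?_, funext fun y => ?_⟩
  · have hJnorm : ‖J‖ = J := abs_abs _
    simp_rw [norm_smul, norm_inv, hJnorm]
    rw [integral_const_mul, Measure.integral_comp_inv_smul volume (fun x => ‖g x‖), smul_eq_mul,
      inv_mul_cancel_left₀ hJ]
    exact hgc
  · calc 𝓕 (fun x => J⁻¹ • g (s⁻¹ • x)) y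
        = J⁻¹ • ∫ x, 𝐞 (-inner ℝ (s⁻¹ • x) (s • y)) • g (s⁻¹ • x) := by
          rw [Real.fourier_eq, ← integral_smul]
          congr 1 with x
          rw [smul_comm, inner_smul_left, inner_smul_right]
          simp [hs]
      _ = 𝓕 g (s • y) := by
          rw [Measure.integral_comp_inv_smul volume (fun x => 𝐞 (-inner ℝ x (s • y)) • g x),
            inv_smul_smul₀ hJ, Real.fourier_eq]

theorem continuousMultilinearMap_apply_of_curryLeft {n : ℕ}
    (m : ContinuousMultilinearMap ℝ (fun _ : Fin (n + 1) => ℂ) ℂ) {F : Fin (n + 1) → E → ℂ}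
    (hF : FourierNormLE (F 0) b) (hm : ∀ w : ℂ, ‖w‖ = 1 → ∀ G : E → ℂ, FourierNormLE G b →
      FourierNormLE (fun y => G y * m.curryLeft w fun i => F i.succ y) c) :
    FourierNormLE (fun y => m fun i => F i y) (2 * c) := by
  rw [two_mul]
  convert (hm 1 (by simp) _ hF.re).add (hm Complex.I (by simp) _ hF.im) using 1
  ext y
  rw [continuousMultilinearMap_eq_re_smul_add_im_smul]
  rfl

theorem continuousMultilinearMap_apply {n : ℕ}
    (m : ContinuousMultilinearMap ℝ (fun _ : Fin (n + 1) => ℂ) ℂ) {F : Fin (n + 1) → E → ℂ}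
    {c : Fin (n + 1) → ℝ} (hF : ∀ i, FourierNormLE (F i) (c i)) :
    FourierNormLE (fun y => m fun i => F i y) (‖m‖ * ∏ i, (2 * c i)) := by
  have hc (i) : 0 ≤ 2 * c i := mul_nonneg two_pos.le (hF i).nonneg
  induction n with
  | zero =>
    refine (continuousMultilinearMap_apply_of_curryLeft (c := ‖m‖ * c 0) m (hF 0)
      fun w hw G hG => ?_).mono (by simp [mul_left_comm])
    convert (hG.const_smul (m.curryLeft w 0)).mono ?_ using 1
    · ext y
      simp [mul_comm, Subsingleton.elim (fun i : Fin 0 => F i.succ y) 0]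
    · gcongr
      · exact hG.nonneg
      · calc ‖m.curryLeft w 0‖ ≤ ‖m.curryLeft w‖ := by simpa using (m.curryLeft w).le_opNorm 0
          _ ≤ ‖m‖ := norm_curryLeft_apply_le m hw
  | succ n ih =>
    refine (continuousMultilinearMap_apply_of_curryLeft
      (c := c 0 * (‖m‖ * ∏ i : Fin (n + 1), (2 * c i.succ))) m (hF 0) fun w hw G hG => ?_).mono ?_
    · refine (hG.mul (ih (m.curryLeft w) (fun i => hF i.succ) fun i => hc _)).mono ?_
      gcongr
      · exact hG.nonneg
      · exact Finset.prod_nonneg fun i _ => hc _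
      · exact norm_curryLeft_apply_le m hw
    · rw [Fin.prod_univ_succ (n := n + 1)]
      exact (by ring : _ = _).le

end FourierNormLE

variable (E) in
/-- The Fourier algebra: the algebra of Fourier transforms of integrable functions, under
pointwise multiplication. -/
def fourierAlgebra : NonUnitalSubalgebra ℂ (E → ℂ) where
  carrier := {F | ∃ c, FourierNormLE F c}
  zero_mem' := ⟨0, .zero⟩
  add_mem' := fun ⟨_, hF⟩ ⟨_, hG⟩ => ⟨_, hF.add hG⟩
  mul_mem' := fun ⟨_, hF⟩ ⟨_, hG⟩ => ⟨_, hF.mul hG⟩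
  smul_mem' := fun a _ ⟨_, hF⟩ => ⟨_, hF.const_smul a⟩

variable {F G : E → ℂ}

theorem FourierNormLE.mem_fourierAlgebra {c : ℝ} (hF : FourierNormLE F c) :
    F ∈ fourierAlgebra E :=
  ⟨c, hF⟩

theorem mem_fourierAlgebra_iff_exists_integrable :
    F ∈ fourierAlgebra E ↔ ∃ g : E → ℂ, Integrable g ∧ 𝓕 g = F := by
  constructor
  · rintro ⟨c, hF⟩
    obtain ⟨g, hg, -, hgF⟩ := fourierNormLE_iff_exists_integrable.1 hF
    exact ⟨g, hg, hgF⟩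
  · rintro ⟨g, hg, hgF⟩
    exact ⟨_, fourierNormLE_iff_exists_integrable.2 ⟨g, hg, le_rfl, hgF⟩⟩

theorem continuous_of_mem_fourierAlgebra (hF : F ∈ fourierAlgebra E) : Continuous F := by
  obtain ⟨c, g, -, rfl⟩ := hF
  exact (Lp.fourierTransform g).continuous

theorem schwartzMap_mem_fourierAlgebra (φ : SchwartzMap E ℂ) : ⇑φ ∈ fourierAlgebra E := by
  refine mem_fourierAlgebra_iff_exists_integrable.2
    ⟨(𝓕⁻ φ : SchwartzMap E ℂ), SchwartzMap.integrable _, ?_⟩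
  rw [← SchwartzMap.fourier_coe, FourierTransform.fourier_fourierInv_eq]

theorem exists_mem_fourierAlgebra_eventuallyEq_one (y₀ : E) {U : Set E} (hU : U ∈ 𝓝 y₀) :
    ∃ χ ∈ fourierAlgebra E, χ =ᶠ[𝓝 y₀] 1 ∧ Function.support χ ⊆ U := by
  obtain ⟨r, hr, hrU⟩ := Metric.mem_nhds_iff.1 hU
  let χ : ContDiffBump y₀ := ⟨r / 2, r, half_pos hr, half_lt_self hr⟩
  have hχ : HasCompactSupport fun y => (χ y : ℂ) :=
    χ.hasCompactSupport.comp_left Complex.ofReal_zero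
  refine ⟨fun y => (χ y : ℂ), schwartzMap_mem_fourierAlgebra
    (hχ.toSchwartzMap (Complex.ofRealCLM.contDiff.comp χ.contDiff)), ?_, ?_⟩
  · filter_upwards [χ.eventuallyEq_one] with y hy
    simp [hy]
  · refine fun y hy => hrU ?_
    rw [← χ.support_eq]
    simpa using hy

theorem fourier_domAddAct_mk_vadd (t : E) (v : Lp ℂ 1 (volume : Measure E)) (y : E) :
    𝓕 (↑(DomAddAct.mk t +ᵥ v) : E → ℂ) y = 𝐞 (inner ℝ t y) • 𝓕 (v : E → ℂ) y := by
  rw [Real.fourier_congr_ae (DomAddAct.vadd_Lp_ae_eq _ v)]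
  have htranslate :=
    congrFun (VectorFourier.fourierIntegral_comp_add_right 𝐞 volume (innerₗ E) v t) y
  simp only [Function.comp_def, add_comm _ t] at htranslate
  exact htranslate

theorem continuous_domAddAct_mk_vadd (v : Lp ℂ 1 (volume : Measure E)) :
    Continuous fun t : E => DomAddAct.mk t +ᵥ v :=
  have : Fact ((1 : ENNReal) ≠ ⊤) := ⟨ENNReal.one_ne_top⟩
  DomAddAct.continuous_mk.vadd continuous_const

theorem norm_domAddAct_mk_vadd_sub_le (t : E) (v : Lp ℂ 1 (volume : Measure E)) :
    ‖(DomAddAct.mk t +ᵥ v) - v‖ ≤ 2 * ‖v‖ :=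
  (norm_sub_le _ _).trans_eq (by rw [DomAddAct.norm_vadd_Lp, two_mul])

theorem FourierNormLE.comp_smul_sub_mul {u : E → ℂ} (hu : Integrable u)
    (v : Lp ℂ 1 (volume : Measure E)) (s : ℝ) :
    FourierNormLE (fun y => (𝓕 u (s • y) - 𝓕 u 0) * 𝓕 (v : E → ℂ) y)
      (∫ t, ‖u t‖ * ‖(DomAddAct.mk (-(s • t)) +ᵥ v) - v‖) := by
  have hcont : Continuous fun t : E => (DomAddAct.mk (-(s • t)) +ᵥ v) - v :=
    ((continuous_domAddAct_mk_vadd v).comp (by fun_prop)).sub continuous_const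
  have hint : Integrable fun t => u t • ((DomAddAct.mk (-(s • t)) +ᵥ v) - v) :=
    hu.smul_bdd (2 * ‖v‖) hcont.aestronglyMeasurable
      (ae_of_all _ fun t => norm_domAddAct_mk_vadd_sub_le _ v)
  convert FourierNormLE.integral hint using 2 with y t
  · have hy := (Real.fourierIntegral_convergent_iff (s • y)).2 hu
    rw [Real.fourier_eq u, Real.fourier_eq u, ← integral_sub hy (by simpa using hu),
      ← integral_mul_const]
    congr 1 with t
    rw [← fourierEvalCLM_apply y (u t • _), map_smul, map_sub, fourierEvalCLM_apply,
      fourierEvalCLM_apply, fourier_domAddAct_mk_vadd, inner_neg_left, inner_smul_left,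
      inner_smul_right]
    simp only [Circle.smul_def, smul_eq_mul, conj_trivial, inner_zero_right, neg_zero,
      AddChar.map_zero_eq_one, Circle.coe_one]
    ring
  · simp_rw [norm_smul]

theorem exists_ne_zero_fourierNormLE_comp_smul_sub_mul (hF : F ∈ fourierAlgebra E)
    (hG : G ∈ fourierAlgebra E) {ε : ℝ} (hε : 0 < ε) :
    ∃ s : ℝ, s ≠ 0 ∧ FourierNormLE (fun y => (F (s • y) - F 0) * G y) ε := by
  obtain ⟨u, hu, rfl⟩ := mem_fourierAlgebra_iff_exists_integrable.1 hF
  obtain ⟨c, v, -, rfl⟩ := hG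
  have htend : Tendsto (fun s : ℝ => ∫ t, ‖u t‖ * ‖(DomAddAct.mk (-(s • t)) +ᵥ v) - v‖)
      (𝓝 0) (𝓝 0) := by
    have htranslate : Continuous fun t : E => ‖(DomAddAct.mk (-t) +ᵥ v) - v‖ :=
      (((continuous_domAddAct_mk_vadd v).comp continuous_neg).sub continuous_const).norm
    simpa using tendsto_integral_smul_comp_smul hu.norm htranslate
      fun t => (norm_norm _).trans_le (norm_domAddAct_mk_vadd_sub_le (-t) v)
  obtain ⟨s, hsε, hs⟩ := (((htend.mono_left nhdsWithin_le_nhds).eventually (ge_mem_nhds hε)).and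
    (eventually_mem_nhdsWithin (s := {0}ᶜ))).exists
  exact ⟨s, hs, (FourierNormLE.comp_smul_sub_mul hu v s).mono hsε⟩

/-- `F` tends to `z` along `l` in the norm of the Fourier algebra: on suitable members of `l`, the
function `F - z` agrees with elements of the Fourier algebra of arbitrarily small norm. -/
def TendstoInFourierNorm (F : E → ℂ) (l : Filter E) (z : ℂ) : Prop :=
  ∀ ε > 0, ∃ F₀ : E → ℂ, FourierNormLE F₀ ε ∧ ∀ᶠ y in l, F y = z + F₀ y

theorem tendstoInFourierNorm_nhds (hF : F ∈ fourierAlgebra E) (y₀ : E) :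
    TendstoInFourierNorm F (𝓝 y₀) (F y₀) := by
  intro ε hε
  obtain ⟨c, hF⟩ := hF
  obtain ⟨χ, hχ, hχ₁, -⟩ := exists_mem_fourierAlgebra_eventuallyEq_one (0 : E) univ_mem
  obtain ⟨s, hs, hsF⟩ := exists_ne_zero_fourierNormLE_comp_smul_sub_mul
    (hF.comp_add_right y₀).mem_fourierAlgebra hχ hε
  refine ⟨_, (hsF.comp_smul (inv_ne_zero hs)).comp_add_right (-y₀), ?_⟩
  have hdilate : Tendsto (fun y : E => s⁻¹ • (y + -y₀)) (𝓝 y₀) (𝓝 0) :=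
    Continuous.tendsto' (by fun_prop) _ _ (by simp)
  filter_upwards [hdilate.eventually hχ₁] with y hy
  rw [hy, smul_inv_smul₀ hs]
  simp

theorem tendstoInFourierNorm_cocompact (hF : F ∈ fourierAlgebra E) :
    TendstoInFourierNorm F (cocompact E) 0 := by
  intro ε hε
  obtain ⟨χ, hχ, hχ₁, hχsupp⟩ :=
    exists_mem_fourierAlgebra_eventuallyEq_one (0 : E) (Metric.closedBall_mem_nhds 0 one_pos)
  obtain ⟨s, hs, hsF⟩ := exists_ne_zero_fourierNormLE_comp_smul_sub_mul hχ hF hε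
  refine ⟨_, (hsF.const_smul (-1)).mono (by simp), ?_⟩
  have hdilate : Tendsto (fun y : E => s • y) (cocompact E) (cocompact E) :=
    (Homeomorph.smulOfNeZero s hs).isClosedEmbedding.tendsto_cocompact
  filter_upwards [hdilate.eventually (isCompact_closedBall (0 : E) 1).compl_mem_cocompact] with y hy
  have hχy : χ (s • y) = 0 := Function.notMem_support.1 (Set.notMem_subset hχsupp hy)
  simp [hχy, hχ₁.eq_of_nhds]

theorem exists_forall_fourierNormLE_comp_sub_mem_fourierAlgebra {h : ℂ → ℂ} {z : ℂ}
    (hh : AnalyticAt ℝ h z) :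
    ∃ ε > 0, ∀ F : E → ℂ, FourierNormLE F ε →
      (fun y => h (z + F y) - h z) ∈ fourierAlgebra E := by
  obtain ⟨p, r, hp⟩ := hh
  obtain ⟨ρ, hρ, hρr⟩ := ENNReal.lt_iff_exists_nnreal_btwn.1 hp.r_pos
  have hρ : 0 < (ρ : ℝ) := by exact_mod_cast hρ
  refine ⟨ρ / 2, by positivity, fun F hF => ?_⟩
  have hsum : Summable fun n => ‖p (n + 1)‖ * ∏ _ : Fin (n + 1), (2 * (ρ / 2 : ℝ)) := by
    simp only [mul_div_cancel₀ _ (two_ne_zero' ℝ), Fin.prod_const]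
    exact (summable_nat_add_iff 1).2 (p.summable_norm_mul_pow (hρr.trans_le hp.r_le))
  have hterm (n : ℕ) := FourierNormLE.continuousMultilinearMap_apply (p (n + 1)) fun _ => hF
  convert (FourierNormLE.tsum hterm hsum).mem_fourierAlgebra using 2 with y
  have hy : F y ∈ Metric.eball (0 : ℂ) r := by
    refine lt_trans ?_ hρr
    rw [edist_zero_right, ← ofReal_norm, ENNReal.ofReal_lt_coe_iff (norm_nonneg _)]
    linarith [hF.norm_apply_le y]
  have hs := hp.hasSum hy
  rw [← hs.tsum_eq, hs.summable.tsum_eq_zero_add, hp.coeff_zero, add_sub_cancel_left]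

theorem TendstoInFourierNorm.exists_comp_sub_eventuallyEq {l : Filter E} {z : ℂ}
    (hF : TendstoInFourierNorm F l z) {h : ℂ → ℂ} (hh : AnalyticAt ℝ h z) :
    ∃ H ∈ fourierAlgebra E, (fun y => h (F y) - h z) =ᶠ[l] H := by
  obtain ⟨ε, hε, hcomp⟩ := exists_forall_fourierNormLE_comp_sub_mem_fourierAlgebra (E := E) hh
  obtain ⟨F₀, hF₀, hFF₀⟩ := hF ε hε
  refine ⟨_, hcomp F₀ hF₀, ?_⟩
  filter_upwards [hFF₀] with y hy
  rw [hy]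

theorem exists_mem_fourierAlgebra_eventuallyEq_const (a : ℂ) (y₀ : E) :
    ∃ F ∈ fourierAlgebra E, Function.const E a =ᶠ[𝓝 y₀] F := by
  obtain ⟨χ, hχ, hχ₁, -⟩ := exists_mem_fourierAlgebra_eventuallyEq_one y₀ univ_mem
  refine ⟨a • χ, SMulMemClass.smul_mem a hχ, ?_⟩
  filter_upwards [hχ₁] with y hy
  simp [hy]

theorem exists_mem_fourierAlgebra_comp_sub_eventuallyEq_nhds (hF : F ∈ fourierAlgebra E)
    {h : ℂ → ℂ} {y₀ : E} (hh : AnalyticAt ℝ h (F y₀)) (a : ℂ) :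
    ∃ H ∈ fourierAlgebra E, (fun y => h (F y) - a) =ᶠ[𝓝 y₀] H := by
  obtain ⟨H, hH, hhH⟩ := (tendstoInFourierNorm_nhds hF y₀).exists_comp_sub_eventuallyEq hh
  obtain ⟨C, hC, haC⟩ := exists_mem_fourierAlgebra_eventuallyEq_const (h (F y₀) - a) y₀
  refine ⟨H + C, add_mem hH hC, ?_⟩
  filter_upwards [hhH, haC] with y hy hy'
  simp [← hy, ← hy']

theorem exists_mem_fourierAlgebra_eqOn_preimage (hF : F ∈ fourierAlgebra E) {K : Set ℂ}
    (hK : IsClosed K) (h0K : (0 : ℂ) ∈ K) {h : ℂ → ℂ} (hh : AnalyticOnNhd ℝ h K) :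
    ∃ G ∈ fourierAlgebra E, Set.EqOn (fun y => h (F y) - h 0) G (F ⁻¹' K) := by
  obtain ⟨G₀, hG₀, hFG₀⟩ :=
    (tendstoInFourierNorm_cocompact hF).exists_comp_sub_eventuallyEq (hh 0 h0K)
  obtain ⟨C, hC, hCG₀⟩ := mem_cocompact.1 hFG₀
  have hCK : IsCompact (C ∩ F ⁻¹' K) :=
    hC.inter_right (hK.preimage (continuous_of_mem_fourierAlgebra hF))
  obtain ⟨G, hG, hFG⟩ := exists_mem_eqOn_union_of_isCompact
    (fun y _ => exists_mem_fourierAlgebra_eventuallyEq_one y) hCK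
    (fun y hy => exists_mem_fourierAlgebra_comp_sub_eventuallyEq_nhds hF (hh _ hy.2) (h 0))
    ⟨G₀, hG₀, hCG₀⟩
  refine ⟨G, hG, hFG.mono fun y hy => ?_⟩
  by_cases hyC : y ∈ C
  · exact .inr ⟨hyC, hy⟩
  · exact .inl hyC

theorem wiener_levi_local_L1_zero_mem_general {K : Set ℂ} (hK : IsClosed K) (h0K : (0 : ℂ) ∈ K)
    {h : ℂ → ℂ} (hh : AnalyticOnNhd ℝ h K) {f : E → ℂ} (hf : Integrable f) :
    ∃ g : E → ℂ, Integrable g ∧ ∀ y, 𝓕 f y ∈ K → h (𝓕 f y) = 𝓕 g y + h 0 := by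
  have hfA : 𝓕 f ∈ fourierAlgebra E := mem_fourierAlgebra_iff_exists_integrable.2 ⟨f, hf, rfl⟩
  obtain ⟨G, hG, hfG⟩ := exists_mem_fourierAlgebra_eqOn_preimage hfA hK h0K hh
  obtain ⟨g, hg, rfl⟩ := mem_fourierAlgebra_iff_exists_integrable.1 hG
  exact ⟨g, hg, fun y hy => eq_add_of_sub_eq (hfG hy)⟩

end FourierAlgebra

/-- **Local Wiener–Levi theorem in `L¹(ℝ^d)`, case `0 ∈ K`.** Let `K ⊆ ℂ` be compact with
`0 ∈ K` and let `h` be real-analytic on an open neighborhood of `K`. Then for each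
`f ∈ L¹(ℝ^d)` there is `g ∈ L¹(ℝ^d)` such that `h(f̂(y)) = ĝ(y) + h(0)` for every `y`
with `f̂(y) ∈ K`. -/
theorem wiener_levi_local_L1_zero_mem {d : ℕ}
    (K : Set ℂ) (hK : IsCompact K) (h0K : (0 : ℂ) ∈ K)
    (h : ℂ → ℂ) (V : Set ℂ) (hV : IsOpen V) (hKV : K ⊆ V)
    (hh : AnalyticOnNhd ℝ h V)
    (f : EuclideanSpace ℝ (Fin d) → ℂ) (hf : Integrable f) :
    ∃ g : EuclideanSpace ℝ (Fin d) → ℂ, Integrable g ∧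
      ∀ y : EuclideanSpace ℝ (Fin d), 𝓕 f y ∈ K → h (𝓕 f y) = 𝓕 g y + h 0 :=
  wiener_levi_local_L1_zero_mem_general hK.isClosed h0K (hh.mono hKV) hf
end

section
/- Let K ⊂ ℂ be a compact set with 0 ∉ K and let h be a real-analytic function on an open neighborhood of K. Then for each f ∈ L¹(ℝ^d) there exists g ∈ L¹(ℝ^d) such that h(f̂(y)) = ĝ(y) for every y ∈ ℝ^d with f̂(y) ∈ K. -/
open MeasureTheory Real
open scoped FourierTransform

/-!
This is Wiener's localization method. Let `y₀` be a frequency, which after modulation is `0`, and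
let `τ` be integrable with `τ̂ = 1` near `0`. On that neighbourhood `y ↦ f̂ (r • y) - f̂ 0` is the
transform of `∫ f(t) (τ(· - r t) - τ) dt`, whose `L¹` norm tends to `0` with `r` because
translation is continuous in `L¹`. Undoing the dilation, `f̂ - f̂ y₀` is near `y₀` the transform
of a function of arbitrarily small `L¹` norm. The real power series of `h` at `f̂ y₀` is a series
in the real and imaginary parts, which costs a factor `2 ^ n` in degree `n`, so it converges in
`L¹`: near `y₀` the function `h ∘ f̂` is the transform of an integrable function. Since `f̂`
vanishes at infinity and `0 ∉ K`, the set `f̂⁻¹(K)` is compact, and finitely many of these local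
representations are glued by cutoffs.
-/

open Filter Set Topology
open scoped ComplexConjugate ContDiff Convolution ENNReal NNReal

section Convolution

variable {𝕜 G E E' F : Type*} [NontriviallyNormedField 𝕜]
  [NormedAddCommGroup E] [NormedAddCommGroup E'] [NormedAddCommGroup F]
  [NormedSpace 𝕜 E] [NormedSpace 𝕜 E'] [NormedSpace 𝕜 F] [NormedSpace ℝ F]
  [AddGroup G] [MeasurableSpace G] [MeasurableAdd₂ G] [MeasurableNeg G]
  {μ : Measure G} [SFinite μ] [μ.IsAddRightInvariant]

theorem integral_norm_convolution_le (L : E →L[𝕜] E' →L[𝕜] F) {f : G → E} {g : G → E'}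
    (hf : Integrable f μ) (hg : Integrable g μ) :
    ∫ x, ‖(f ⋆[L, μ] g) x‖ ∂μ ≤ ‖L‖ * ((∫ x, ‖f x‖ ∂μ) * ∫ x, ‖g x‖ ∂μ) := by
  have hfg := hf.norm.integrable_convolution (.mul ℝ ℝ) hg.norm
  have hle : ∀ᵐ x ∂μ, ‖(f ⋆[L, μ] g) x‖ ≤
      ‖L‖ * ((‖f ·‖) ⋆[.mul ℝ ℝ, μ] (‖g ·‖)) x := by
    filter_upwards [hf.norm.ae_convolution_exists (.mul ℝ ℝ) hg.norm] with x hx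
    rw [convolution_def, convolution_def, ← integral_const_mul]
    refine norm_integral_le_of_norm_le (hx.const_mul _) (.of_forall fun t ↦ ?_)
    simpa only [ContinuousLinearMap.mul_apply', mul_assoc] using L.le_opNorm₂ (f t) (g (x - t))
  calc ∫ x, ‖(f ⋆[L, μ] g) x‖ ∂μ
      ≤ ∫ x, ‖L‖ * ((‖f ·‖) ⋆[.mul ℝ ℝ, μ] (‖g ·‖)) x ∂μ :=
        integral_mono_ae (hf.integrable_convolution L hg).norm (hfg.const_mul _) hle
    _ = ‖L‖ * ((∫ x, ‖f x‖ ∂μ) * ∫ x, ‖g x‖ ∂μ) := by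
        rw [integral_const_mul, integral_convolution _ hf.norm hg.norm,
          ContinuousLinearMap.mul_apply']

end Convolution

section Scaling

variable {V E : Type*} [NormedAddCommGroup V] [NormedSpace ℝ V] [FiniteDimensional ℝ V]
  [MeasurableSpace V] [BorelSpace V] [NormedAddCommGroup E] [NormedSpace ℝ E]

theorem integral_smul_comp_smul (μ : Measure V) [μ.IsAddHaarMeasure] (u : V → E) {r : ℝ}
    (hr : r ≠ 0) : ∫ x, |r ^ Module.finrank ℝ V| • u (r • x) ∂μ = ∫ x, u x ∂μ := by
  rw [integral_smul, Measure.integral_comp_smul, smul_smul, ← abs_mul,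
    mul_inv_cancel₀ (pow_ne_zero _ hr), abs_one, one_smul]

end Scaling

section Translation

variable {G E : Type*} [AddGroup G] [TopologicalSpace G] [IsTopologicalAddGroup G]
  [MeasurableSpace G] [BorelSpace G] [NormedAddCommGroup E] {μ : Measure G}
  [μ.IsAddLeftInvariant] {p : ℝ≥0∞}

/-- The difference `τ(-t + ·) - τ` in `Lp` between the translate of `τ` by `t` and `τ` itself. -/
noncomputable def translationDefect (τ : Lp E p μ) (t : G) : Lp E p μ :=
  (DomAddAct.mk (-t) +ᵥ τ) - τ

theorem translationDefect_zero (τ : Lp E p μ) : translationDefect τ 0 = 0 := by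
  rw [translationDefect, neg_zero, DomAddAct.mk_zero, zero_vadd, sub_self]

variable [Fact (1 ≤ p)]

theorem norm_translationDefect_le (τ : Lp E p μ) (t : G) : ‖translationDefect τ t‖ ≤ 2 * ‖τ‖ :=
  (norm_sub_le _ _).trans_eq (by rw [DomAddAct.norm_vadd_Lp, two_mul])

theorem continuous_translationDefect [IsLocallyFiniteMeasure μ] [μ.InnerRegularCompactLTTop]
    (hp : p ≠ ⊤) (τ : Lp E p μ) : Continuous (translationDefect τ) := by
  have : Fact (p ≠ ⊤) := ⟨hp⟩
  have hmk : Continuous (DomAddAct.mk : G → Gᵈᵃᵃ) := DomAddAct.continuous_mk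
  exact ((hmk.comp continuous_neg).vadd continuous_const).sub continuous_const

variable {V 𝕜 : Type*} [NormedAddCommGroup V] [NormedSpace ℝ V] [FiniteDimensional ℝ V]
  [MeasurableSpace V] [BorelSpace V] {ν : Measure V} [ν.IsAddHaarMeasure] [NormedField 𝕜]
  [NormedSpace 𝕜 E] {f : V → 𝕜}

theorem integrable_smul_translationDefect (hp : p ≠ ⊤) (τ : Lp E p ν) (hf : Integrable f ν)
    (r : ℝ) : Integrable (fun t ↦ f t • translationDefect τ (r • t)) ν :=
  hf.smul_bdd (2 * ‖τ‖)
    ((continuous_translationDefect hp τ).comp (continuous_const_smul r)).aestronglyMeasurable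
    (.of_forall fun _ ↦ norm_translationDefect_le τ _)

theorem tendsto_integral_norm_smul_translationDefect (hp : p ≠ ⊤) (τ : Lp E p ν)
    (hf : Integrable f ν) :
    Tendsto (fun r : ℝ ↦ ∫ t, ‖f t • translationDefect τ (r • t)‖ ∂ν) (𝓝 0) (𝓝 0) := by
  have hlim (t : V) :
      Tendsto (fun r : ℝ ↦ ‖f t • translationDefect τ (r • t)‖) (𝓝 0) (𝓝 0) := by
    have hcont := continuous_translationDefect hp τ
    have : Continuous fun r : ℝ ↦ ‖f t • translationDefect τ (r • t)‖ := by fun_prop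
    simpa [translationDefect_zero] using this.tendsto 0
  suffices Tendsto (fun r : ℝ ↦ ∫ t, ‖f t • translationDefect τ (r • t)‖ ∂ν) (𝓝 0)
      (𝓝 (∫ _ : V, (0 : ℝ) ∂ν)) by rwa [integral_zero] at this
  refine tendsto_integral_filter_of_dominated_convergence (fun t ↦ ‖f t‖ * (2 * ‖τ‖))
    (.of_forall fun r ↦ (integrable_smul_translationDefect hp τ hf r).norm.1)
    (.of_forall fun r ↦ .of_forall fun t ↦ ?_) (hf.norm.mul_const _) (.of_forall hlim)
  rw [norm_norm, norm_smul]
  gcongr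
  exact norm_translationDefect_le τ _

end Translation

theorem apply_const_succ_eq_re_smul_add_im_smul {E : Type*} [NormedAddCommGroup E]
    [NormedSpace ℝ E] {n : ℕ} (p : ℂ [×n + 1]→L[ℝ] E) (w : ℂ) : (p fun _ ↦ w) =
      w.re • (p.curryLeft 1 fun _ ↦ w) + w.im • (p.curryLeft Complex.I fun _ ↦ w) := by
  have hw : w = w.re • (1 : ℂ) + w.im • Complex.I := by simp
  calc (p fun _ ↦ w) = p.curryLeft w fun _ ↦ w := by
        rw [p.curryLeft_apply]
        congr with i
        cases i using Fin.cases <;> rfl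
    _ = p.curryLeft (w.re • (1 : ℂ) + w.im • Complex.I) fun _ ↦ w := by rw [← hw]
    _ = w.re • (p.curryLeft 1 fun _ ↦ w) + w.im • (p.curryLeft Complex.I fun _ ↦ w) := by
        rw [map_add, map_smul, map_smul]
        rfl

section WienerLevi

variable {V E : Type*} [NormedAddCommGroup V] [InnerProductSpace ℝ V] [FiniteDimensional ℝ V]
  [MeasurableSpace V] [BorelSpace V] [NormedAddCommGroup E] [NormedSpace ℂ E]

section Fourier

theorem fourier_fourierChar_inner_smul (u : V → E) (y₀ y : V) :
    𝓕 (fun x ↦ 𝐞 (inner ℝ x y₀) • u x) y = 𝓕 u (y - y₀) := by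
  simp only [Real.fourier_eq, smul_smul, ← AddChar.map_add_eq_mul, inner_sub_right, neg_sub,
    neg_add_eq_sub]

theorem fourier_comp_add_right (u : V → E) (t y : V) :
    𝓕 (fun x ↦ u (x + t)) y = 𝐞 (inner ℝ t y) • 𝓕 u y :=
  congrFun (VectorFourier.fourierIntegral_comp_add_right 𝐞 volume (innerₗ V) u t) y

theorem fourier_smul_comp_smul (u : V → E) {r : ℝ} (hr : r ≠ 0) (y : V) :
    𝓕 (fun x ↦ |r ^ Module.finrank ℝ V| • u (r • x)) y = 𝓕 u (r⁻¹ • y) := by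
  rw [Real.fourier_eq, Real.fourier_eq,
    ← integral_smul_comp_smul _ (fun x ↦ 𝐞 (-inner ℝ x (r⁻¹ • y)) • u x) hr]
  congr with x
  rw [smul_comm, real_inner_smul_left, real_inner_smul_right, mul_inv_cancel_left₀ hr]

theorem fourier_conj_comp_neg (u : V → ℂ) (y : V) :
    𝓕 (fun x ↦ conj (u (-x))) y = conj (𝓕 u y) := by
  rw [Real.fourier_eq, Real.fourier_eq, ← integral_conj, ← integral_neg_eq_self]
  congr with x
  simp [Circle.smul_def, ← Circle.coe_inv_eq_conj, AddChar.map_neg_eq_inv]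

theorem fourier_smul_const [CompleteSpace E] (u : V → ℂ) (e : E) (y : V) :
    𝓕 (fun x ↦ u x • e) y = 𝓕 u y • e := by
  rw [Real.fourier_eq, Real.fourier_eq, ← integral_smul_const]
  simp only [smul_assoc]

theorem continuous_fourier {f : V → E} (hf : Integrable f) : Continuous (𝓕 f) :=
  VectorFourier.fourierIntegral_continuous Real.continuous_fourierChar
    (innerSL ℝ).continuous₂ hf

theorem isCompact_preimage_fourier {f : V → E} (hf : Integrable f) {K : Set E} (hK : IsClosed K)
    (h0K : (0 : E) ∉ K) : IsCompact (𝓕 f ⁻¹' K) := by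
  have hfK : 𝓕 f ⁻¹' Kᶜ ∈ cocompact V :=
    tendsto_integral_exp_inner_smul_cocompact f (hK.isOpen_compl.mem_nhds h0K)
  obtain ⟨C, hC, hCK⟩ := mem_cocompact'.1 hfK
  rw [← preimage_compl, compl_compl] at hCK
  exact hC.of_isClosed_subset (hK.preimage (continuous_fourier hf)) hCK

theorem fourierTransformCLM_translationDefect (τ : Lp E 1 (volume : Measure V)) (t y : V) :
    Lp.fourierTransformCLM V E (translationDefect τ t) y =
      ((𝐞 (-inner ℝ t y) : ℂ) - 1) • Lp.fourierTransformCLM V E τ y := by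
  have htranslate : Lp.fourierTransformCLM V E (DomAddAct.mk (-t) +ᵥ τ) y =
      𝐞 (-inner ℝ t y) • Lp.fourierTransformCLM V E τ y := by
    calc Lp.fourierTransformCLM V E (DomAddAct.mk (-t) +ᵥ τ) y
        = 𝓕 (fun x ↦ τ (-t + x)) y :=
          Real.fourier_congr_ae (DomAddAct.vadd_Lp_ae_eq (DomAddAct.mk (-t)) τ) y
      _ = 𝐞 (-inner ℝ t y) • Lp.fourierTransformCLM V E τ y := by
          simp only [add_comm (-t), fourier_comp_add_right, inner_neg_left]
          rfl
  rw [translationDefect, map_sub, BoundedContinuousFunction.sub_apply, htranslate, Circle.smul_def,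
    sub_smul, one_smul]

theorem fourierTransformCLM_integral_smul_translationDefect [CompleteSpace E]
    (τ : Lp E 1 (volume : Measure V)) {f : V → ℂ} (hf : Integrable f) (r : ℝ) (y : V) :
    Lp.fourierTransformCLM V E (∫ t, f t • translationDefect τ (r • t)) y =
      (𝓕 f (r • y) - 𝓕 f 0) • Lp.fourierTransformCLM V E τ y := by
  calc Lp.fourierTransformCLM V E (∫ t, f t • translationDefect τ (r • t)) y
      = ∫ t, Lp.fourierTransformCLM V E (f t • translationDefect τ (r • t)) y :=
        (((BoundedContinuousFunction.evalCLM ℂ y).comp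
          (Lp.fourierTransformCLM V E)).integral_comp_comm
            (integrable_smul_translationDefect ENNReal.one_ne_top τ hf r)).symm
    _ = ∫ t, (𝐞 (-inner ℝ t (r • y)) • f t - 𝐞 (-inner ℝ t 0) • f t) •
          Lp.fourierTransformCLM V E τ y := by
        congr with t
        rw [map_smul, BoundedContinuousFunction.smul_apply, fourierTransformCLM_translationDefect,
          smul_smul, real_inner_smul_left, real_inner_smul_right, inner_zero_right, neg_zero,
          AddChar.map_zero_eq_one, one_smul, Circle.smul_def, smul_eq_mul, mul_sub, mul_one,
          mul_comm]
    _ = (𝓕 f (r • y) - 𝓕 f 0) • Lp.fourierTransformCLM V E τ y := by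
        rw [integral_smul_const, integral_sub ((Real.fourierIntegral_convergent_iff _).2 hf)
          ((Real.fourierIntegral_convergent_iff _).2 hf), Real.fourier_eq, Real.fourier_eq]

end Fourier

section FourierOn

/-- On the set `s`, the function `F` agrees with the Fourier transform of an integrable function
of `L¹` norm at most `c`. The bound is kept so that smallness and convergence can be tracked. -/
def IsFourierOn (s : Set V) (c : ℝ) (F : V → E) : Prop :=
  ∃ u : V → E, Integrable u ∧ ∫ x, ‖u x‖ ≤ c ∧ ∀ y ∈ s, 𝓕 u y = F y

variable {s t : Set V} {a b c : ℝ} {F G : V → E} {φ : V → ℂ}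

theorem isFourierOn_iff_exists_Lp : IsFourierOn s c F ↔
    ∃ u : Lp E 1 (volume : Measure V),
      ‖u‖ ≤ c ∧ ∀ y ∈ s, Lp.fourierTransformCLM V E u y = F y := by
  constructor
  · rintro ⟨u, hu, huc, huF⟩
    refine ⟨hu.toL1 u, ?_, fun y hy ↦ ?_⟩
    · rwa [L1.norm_of_fun_eq_integral_norm]
    · exact (Real.fourier_congr_ae hu.coeFn_toL1 y).trans (huF y hy)
  · rintro ⟨u, huc, huF⟩
    exact ⟨u, L1.integrable_coeFn u, (L1.norm_eq_integral_norm u).symm.trans_le huc, huF⟩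

namespace IsFourierOn

theorem nonneg (hF : IsFourierOn s c F) : 0 ≤ c :=
  let ⟨_, _, hc, _⟩ := hF
  (integral_nonneg fun _ ↦ norm_nonneg _).trans hc

theorem norm_le (hF : IsFourierOn s c F) {y : V} (hy : y ∈ s) : ‖F y‖ ≤ c := by
  obtain ⟨u, -, hc, huF⟩ := hF
  rw [← huF y hy]
  exact (VectorFourier.norm_fourierIntegral_le_integral_norm _ _ _ _ _).trans hc

theorem mono (hF : IsFourierOn s a F) (hts : t ⊆ s) (hab : a ≤ b) : IsFourierOn t b F :=
  let ⟨u, hu, hua, huF⟩ := hF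
  ⟨u, hu, hua.trans hab, fun y hy ↦ huF y (hts hy)⟩

theorem congr (hF : IsFourierOn s c F) (hFG : EqOn F G s) : IsFourierOn s c G :=
  let ⟨u, hu, huc, huF⟩ := hF
  ⟨u, hu, huc, fun y hy ↦ (huF y hy).trans (hFG hy)⟩

theorem zero : IsFourierOn s 0 (fun _ ↦ (0 : E)) :=
  isFourierOn_iff_exists_Lp.2 ⟨0, by simp, fun y _ ↦ by rw [map_zero]; rfl⟩

theorem add (hF : IsFourierOn s a F) (hG : IsFourierOn s b G) :
    IsFourierOn s (a + b) (fun y ↦ F y + G y) := by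
  obtain ⟨u, hu, huF⟩ := isFourierOn_iff_exists_Lp.1 hF
  obtain ⟨v, hv, hvG⟩ := isFourierOn_iff_exists_Lp.1 hG
  refine isFourierOn_iff_exists_Lp.2
    ⟨u + v, (norm_add_le _ _).trans (add_le_add hu hv), fun y hy ↦ ?_⟩
  rw [map_add, BoundedContinuousFunction.add_apply, huF y hy, hvG y hy]

theorem const_smul (hF : IsFourierOn s a F) (z : ℂ) :
    IsFourierOn s (‖z‖ * a) (fun y ↦ z • F y) := by
  obtain ⟨u, hu, huF⟩ := isFourierOn_iff_exists_Lp.1 hF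
  refine isFourierOn_iff_exists_Lp.2 ⟨z • u, ?_, fun y hy ↦ ?_⟩
  · rw [norm_smul]
    gcongr
  · rw [map_smul, BoundedContinuousFunction.smul_apply, huF y hy]

theorem sub (hF : IsFourierOn s a F) (hG : IsFourierOn s b G) :
    IsFourierOn s (a + b) (fun y ↦ F y - G y) := by
  simpa [sub_eq_add_neg] using hF.add (hG.const_smul (-1))

theorem hasSum [CompleteSpace E] {ι : Type*} {a : ι → ℝ} {F : ι → V → E}
    (hF : ∀ i, IsFourierOn s (a i) (F i)) (ha : Summable a)
    (hG : ∀ y ∈ s, HasSum (fun i ↦ F i y) (G y)) : IsFourierOn s (∑' i, a i) G := by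
  choose u hu huF using fun i ↦ isFourierOn_iff_exists_Lp.1 (hF i)
  have hsum : Summable u := .of_norm_bounded ha hu
  refine isFourierOn_iff_exists_Lp.2 ⟨∑' i, u i, tsum_of_norm_bounded ha.hasSum hu, fun y hy ↦ ?_⟩
  have hsum_y : HasSum (fun i ↦ F i y) (Lp.fourierTransformCLM V E (∑' i, u i) y) := by
    simpa only [huF _ y hy, BoundedContinuousFunction.evalCLM_apply] using (hsum.hasSum.mapL
      (Lp.fourierTransformCLM V E)).mapL (BoundedContinuousFunction.evalCLM ℂ y)
  exact hsum_y.unique (hG y hy)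

theorem smul [CompleteSpace E] (hφ : IsFourierOn s a φ) (hF : IsFourierOn s b F) :
    IsFourierOn s (a * b) (fun y ↦ φ y • F y) := by
  have ha := hφ.nonneg
  obtain ⟨u, hu, hua, huφ⟩ := hφ
  obtain ⟨v, hv, hvb, hvF⟩ := hF
  refine ⟨u ⋆[ContinuousLinearMap.lsmul ℂ ℂ] v, hu.integrable_convolution _ hv, ?_, fun y hy ↦ ?_⟩
  · calc ∫ x, ‖(u ⋆[ContinuousLinearMap.lsmul ℂ ℂ] v) x‖
        ≤ ‖(ContinuousLinearMap.lsmul ℂ ℂ : ℂ →L[ℂ] E →L[ℂ] E)‖ *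
            ((∫ x, ‖u x‖) * ∫ x, ‖v x‖) := integral_norm_convolution_le _ hu hv
      _ ≤ 1 * (a * b) :=
          mul_le_mul ContinuousLinearMap.opNorm_lsmul_le
            (mul_le_mul hua hvb (integral_nonneg fun _ ↦ norm_nonneg _) ha) (by positivity)
            zero_le_one
      _ = a * b := one_mul _
  · rw [Real.fourier_smul_convolution_eq hu hv, huφ y hy, hvF y hy]

theorem smul_const [CompleteSpace E] (hφ : IsFourierOn s a φ) (e : E) :
    IsFourierOn s (a * ‖e‖) (fun y ↦ φ y • e) := by
  obtain ⟨u, hu, hua, huφ⟩ := hφ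
  refine ⟨fun x ↦ u x • e, hu.smul_const e, ?_, fun y hy ↦ ?_⟩
  · simp only [norm_smul, integral_mul_const]
    gcongr
  · rw [fourier_smul_const, huφ y hy]

theorem comp_conj (hφ : IsFourierOn s a φ) : IsFourierOn s a (fun y ↦ conj (φ y)) := by
  obtain ⟨u, hu, hua, huφ⟩ := hφ
  refine ⟨fun x ↦ conj (u (-x)), (Complex.conjCLE : ℂ →L[ℝ] ℂ).integrable_comp hu.comp_neg, ?_,
    fun y hy ↦ ?_⟩
  · simpa only [RCLike.norm_conj, integral_neg_eq_self (fun x ↦ ‖u x‖)] using hua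
  · rw [fourier_conj_comp_neg, huφ y hy]

theorem re (hφ : IsFourierOn s a φ) : IsFourierOn s a (fun y ↦ ((φ y).re : ℂ)) := by
  refine ((hφ.add hφ.comp_conj).const_smul (1 / 2)).mono subset_rfl ?_ |>.congr fun y _ ↦ ?_
  · norm_num
    linarith
  · simp [Complex.re_eq_add_conj, div_eq_inv_mul]

theorem im (hφ : IsFourierOn s a φ) : IsFourierOn s a (fun y ↦ ((φ y).im : ℂ)) := by
  simpa using (hφ.const_smul (-Complex.I)).re

theorem comp_sub_const (hF : IsFourierOn s c F) (y₀ : V) :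
    IsFourierOn {y | y - y₀ ∈ s} c (fun y ↦ F (y - y₀)) := by
  obtain ⟨u, hu, huc, huF⟩ := hF
  refine ⟨fun x ↦ 𝐞 (inner ℝ x y₀) • u x, ?_, ?_, fun y hy ↦ ?_⟩
  · simpa using (Real.fourierIntegral_convergent_iff (-y₀)).2 hu
  · simpa only [Circle.norm_smul] using huc
  · rw [fourier_fourierChar_inner_smul, huF _ hy]

theorem comp_smul (hF : IsFourierOn s c F) {r : ℝ} (hr : r ≠ 0) :
    IsFourierOn {y | r • y ∈ s} c (fun y ↦ F (r • y)) := by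
  obtain ⟨u, hu, huc, huF⟩ := hF
  have hr' : r⁻¹ ≠ 0 := inv_ne_zero hr
  refine ⟨fun x ↦ |r⁻¹ ^ Module.finrank ℝ V| • u (r⁻¹ • x), (hu.comp_smul hr').smul _, ?_,
    fun y hy ↦ ?_⟩
  · simpa only [norm_smul, Real.norm_eq_abs, abs_abs, ← smul_eq_mul,
      integral_smul_comp_smul volume (fun x ↦ ‖u x‖) hr'] using huc
  · rw [fourier_smul_comp_smul u hr', inv_inv, huF _ hy]

theorem map_multilinear_const [CompleteSpace E] {n : ℕ} (p : ℂ [×n]→L[ℝ] E)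
    (hone : IsFourierOn s c (fun _ ↦ (1 : ℂ))) (hφ : IsFourierOn s a φ) :
    IsFourierOn s (c * (‖p‖ * (2 * a) ^ n)) (fun y ↦ p fun _ ↦ φ y) := by
  have hc := hone.nonneg
  have ha := hφ.nonneg
  induction n with
  | zero =>
    have hp (v : Fin 0 → ℂ) : p v = p 0 := congrArg p (Subsingleton.elim v 0)
    simpa only [hp, one_smul, pow_zero, mul_one, p.fin0_apply_norm] using hone.smul_const (p 0)
  | succ n ih =>
    simp only [apply_const_succ_eq_re_smul_add_im_smul]
    refine ((hφ.re.smul (ih (p.curryLeft 1))).add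
      (hφ.im.smul (ih (p.curryLeft Complex.I)))).mono subset_rfl ?_
    have hcurry {z : ℂ} (hz : ‖z‖ = 1) : ‖p.curryLeft z‖ ≤ ‖p‖ := by
      simpa only [p.curryLeft_norm, hz, mul_one] using p.curryLeft.le_opNorm z
    calc a * (c * (‖p.curryLeft 1‖ * (2 * a) ^ n)) +
          a * (c * (‖p.curryLeft Complex.I‖ * (2 * a) ^ n))
        ≤ a * (c * (‖p‖ * (2 * a) ^ n)) + a * (c * (‖p‖ * (2 * a) ^ n)) := by
          gcongr
          · exact hcurry norm_one
          · exact hcurry Complex.norm_I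
      _ = c * (‖p‖ * (2 * a) ^ (n + 1)) := by ring

theorem comp_hasFPowerSeriesOnBall [CompleteSpace E] {h : ℂ → E}
    {p : FormalMultilinearSeries ℝ ℂ E} {z : ℂ} {r : ℝ≥0∞} (hp : HasFPowerSeriesOnBall h p z r)
    (hone : IsFourierOn s c (fun _ ↦ (1 : ℂ))) {ε : ℝ≥0} (hε : ↑(2 * ε) < r)
    (hφ : IsFourierOn s ε (fun y ↦ φ y - z)) :
    IsFourierOn s (∑' n, c * (‖p n‖ * (2 * ε) ^ n)) (fun y ↦ h (φ y)) := by
  refine hasSum (fun n ↦ hone.map_multilinear_const (p n) hφ) ?_ fun y hy ↦ hp.hasSum_sub ?_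
  · simpa using (p.summable_norm_mul_pow (hε.trans_le hp.r_le)).mul_left c
  · rw [Metric.mem_eball, edist_eq_enorm_sub]
    calc ‖φ y - z‖ₑ ≤ ε := by
          rw [enorm_eq_nnnorm]
          exact_mod_cast hφ.norm_le hy
      _ ≤ ↑(2 * ε) := by
          rw [ENNReal.coe_le_coe, two_mul]
          exact le_add_self
      _ < r := hε

theorem eventually_fourier_smul_sub (hone : IsFourierOn s c (fun _ ↦ (1 : ℂ))) {f : V → ℂ}
    (hf : Integrable f) {ε : ℝ} (hε : 0 < ε) :
    ∀ᶠ r : ℝ in 𝓝 0, IsFourierOn s ε (fun y ↦ 𝓕 f (r • y) - 𝓕 f 0) := by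
  obtain ⟨τ, -, hτ⟩ := isFourierOn_iff_exists_Lp.1 hone
  filter_upwards [(tendsto_integral_norm_smul_translationDefect ENNReal.one_ne_top τ
    hf).eventually_lt_const hε] with r hr
  refine isFourierOn_iff_exists_Lp.2 ⟨∫ t, f t • translationDefect τ (r • t),
    (norm_integral_le_integral_norm _).trans hr.le, fun y hy ↦ ?_⟩
  rw [fourierTransformCLM_integral_smul_translationDefect τ hf, hτ y hy, smul_eq_mul, mul_one]

end IsFourierOn

theorem exists_isFourierOn_of_contDiff_of_hasCompactSupport [CompleteSpace E] {F : V → E}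
    (hF : ContDiff ℝ ∞ F) (hFc : HasCompactSupport F) : ∃ c, IsFourierOn univ c F := by
  let Ψ : SchwartzMap V E := 𝓕⁻ (hFc.toSchwartzMap hF)
  refine ⟨∫ x, ‖Ψ x‖, Ψ, Ψ.integrable, le_rfl, fun y _ ↦ ?_⟩
  rw [← SchwartzMap.fourier_coe, FourierTransform.fourier_fourierInv_eq]
  rfl

theorem exists_isFourierOn_bump {y₀ : V} {U : Set V} (hU : U ∈ 𝓝 y₀) :
    ∃ φ : V → ℂ, (∃ c, IsFourierOn univ c φ) ∧ φ =ᶠ[𝓝 y₀] 1 ∧ ∀ y ∉ U, φ y = 0 := by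
  obtain ⟨R, hR, hRU⟩ := Metric.nhds_basis_closedBall.mem_iff.1 hU
  let β : ContDiffBump y₀ := ⟨R / 2, R, by positivity, by linarith⟩
  refine ⟨fun y ↦ (β y : ℂ), exists_isFourierOn_of_contDiff_of_hasCompactSupport
    (Complex.ofRealCLM.contDiff.comp β.contDiff)
    (β.hasCompactSupport.comp_left Complex.ofReal_zero), ?_, fun y hy ↦ ?_⟩
  · filter_upwards [β.eventuallyEq_one] with y hy
    simp [hy]
  · have hRy : R ≤ dist y y₀ := (not_le.1 fun h ↦ hy (hRU h)).le
    simp only [β.zero_of_le_dist hRy, Complex.ofReal_zero]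

theorem exists_isFourierOn_one_nhds (y₀ : V) :
    ∃ U ∈ 𝓝 y₀, ∃ c, IsFourierOn U c (fun _ ↦ (1 : ℂ)) := by
  obtain ⟨φ, ⟨c, hφ⟩, hφ1, -⟩ := exists_isFourierOn_bump (univ_mem : univ ∈ 𝓝 y₀)
  exact ⟨_, hφ1, c, (hφ.mono (subset_univ _) le_rfl).congr fun _ hy ↦ hy⟩

theorem exists_isFourierOn_fourier_sub {f : V → ℂ} (hf : Integrable f) (y₀ : V) {ε : ℝ}
    (hε : 0 < ε) : ∃ U ∈ 𝓝 y₀, IsFourierOn U ε (fun y ↦ 𝓕 f y - 𝓕 f y₀) := by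
  let f₀ : V → ℂ := fun x ↦ 𝐞 (-inner ℝ x y₀) • f x
  have hf₀ : Integrable f₀ := (Real.fourierIntegral_convergent_iff y₀).2 hf
  have hFf₀ (y : V) : 𝓕 f₀ y = 𝓕 f (y + y₀) := by
    simpa using fourier_fourierChar_inner_smul f (-y₀) y
  obtain ⟨U, hU, c, hone⟩ := exists_isFourierOn_one_nhds (0 : V)
  obtain ⟨r, hrf, hr⟩ := (((hone.eventually_fourier_smul_sub hf₀ hε).filter_mono
    nhdsWithin_le_nhds).and (self_mem_nhdsWithin (s := {0}ᶜ))).exists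
  refine ⟨{y | r⁻¹ • (y - y₀) ∈ U}, ?_,
    ((hrf.comp_smul (inv_ne_zero hr)).comp_sub_const y₀).congr fun y _ ↦ ?_⟩
  · have : Continuous fun y : V ↦ r⁻¹ • (y - y₀) := by fun_prop
    exact this.continuousAt.preimage_mem_nhds (by simpa using hU)
  · simp only [hFf₀, smul_inv_smul₀ hr, sub_add_cancel, zero_add]

theorem exists_isFourierOn_comp_fourier [CompleteSpace E] {f : V → ℂ} (hf : Integrable f) {y₀ : V}
    {h : ℂ → E} (hh : AnalyticAt ℝ h (𝓕 f y₀)) :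
    ∃ U ∈ 𝓝 y₀, ∃ c, IsFourierOn U c (fun y ↦ h (𝓕 f y)) := by
  obtain ⟨p, r, hp⟩ := hh
  obtain ⟨ρ, hρ0, hρr⟩ := ENNReal.lt_iff_exists_nnreal_btwn.1 hp.r_pos
  rw [ENNReal.coe_pos] at hρ0
  obtain ⟨U, hU, hUf⟩ := exists_isFourierOn_fourier_sub hf y₀ (NNReal.coe_pos.2 (half_pos hρ0))
  obtain ⟨W, hW, c, hone⟩ := exists_isFourierOn_one_nhds y₀
  exact ⟨U ∩ W, inter_mem hU hW, _, (hone.mono inter_subset_right le_rfl).comp_hasFPowerSeriesOnBall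
    hp (by rwa [mul_div_cancel₀ _ two_ne_zero]) (hUf.mono inter_subset_left le_rfl)⟩

end FourierOn

section FourierCutoff

/-- A cutoff `φ`, equal to `1` on `s`, that makes `H` a Fourier transform globally: `φ` and `φ • H`
are both transforms of integrable functions. Such cutoffs glue local representations of `H`. -/
structure IsFourierCutoff (H : V → E) (s : Set V) (φ : V → ℂ) : Prop where
  isFourierOn : ∃ c, IsFourierOn univ c φ
  isFourierOn_smul : ∃ c, IsFourierOn univ c fun y ↦ φ y • H y
  eqOn_one : EqOn φ 1 s

namespace IsFourierCutoff

variable {H : V → E} {s t : Set V} {φ ψ : V → ℂ}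

theorem empty : IsFourierCutoff H ∅ (fun _ ↦ 0) where
  isFourierOn := ⟨0, .zero⟩
  isFourierOn_smul := ⟨0, by simpa only [zero_smul] using .zero⟩
  eqOn_one := eqOn_empty _ _

theorem mono (hφ : IsFourierCutoff H t φ) (hst : s ⊆ t) : IsFourierCutoff H s φ where
  __ := hφ
  eqOn_one := hφ.eqOn_one.mono hst

-- The union cutoff is `1 - (1 - φ) * (1 - ψ)`.
theorem union [CompleteSpace E] (hφ : IsFourierCutoff H s φ) (hψ : IsFourierCutoff H t ψ) :
    IsFourierCutoff H (s ∪ t) (fun y ↦ φ y + ψ y - φ y * ψ y) where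
  isFourierOn :=
    let ⟨_, hφ₁⟩ := hφ.isFourierOn
    let ⟨_, hψ₁⟩ := hψ.isFourierOn
    ⟨_, (hφ₁.add hψ₁).sub (hφ₁.smul hψ₁)⟩
  isFourierOn_smul := by
    obtain ⟨_, hφ₁⟩ := hφ.isFourierOn
    obtain ⟨_, hφH⟩ := hφ.isFourierOn_smul
    obtain ⟨_, hψH⟩ := hψ.isFourierOn_smul
    simpa only [sub_smul, add_smul, mul_smul] using ⟨_, (hφH.add hψH).sub (hφ₁.smul hψH)⟩
  eqOn_one := by
    rintro y (hy | hy)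
    · simp [hφ.eqOn_one hy]
    · simp [hψ.eqOn_one hy]

end IsFourierCutoff

theorem IsFourierOn.exists_isFourierCutoff [CompleteSpace E] {H : V → E} {U : Set V} {c : ℝ}
    (hH : IsFourierOn U c H) {y₀ : V} (hU : U ∈ 𝓝 y₀) :
    ∃ W ∈ 𝓝 y₀, ∃ φ, IsFourierCutoff H W φ := by
  obtain ⟨φ, ⟨a, hφ⟩, hφ1, hφ0⟩ := exists_isFourierOn_bump hU
  obtain ⟨u, hu, huc, huH⟩ := hH
  have hu_univ : IsFourierOn univ c (𝓕 u) := ⟨u, hu, huc, fun _ _ ↦ rfl⟩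
  refine ⟨_, hφ1, φ, ⟨a, hφ⟩, ⟨a * c, (hφ.smul hu_univ).congr fun y _ ↦ ?_⟩, fun _ hy ↦ hy⟩
  by_cases hy : y ∈ U
  · simp only [huH y hy]
  · simp only [hφ0 y hy, zero_smul]

theorem exists_isFourierOn_of_isCompact [CompleteSpace E] {H : V → E} {s : Set V}
    (hs : IsCompact s) (hH : ∀ y ∈ s, ∃ U ∈ 𝓝 y, ∃ c, IsFourierOn U c H) :
    ∃ c, IsFourierOn s c H := by
  obtain ⟨φ, hφ⟩ : ∃ φ, IsFourierCutoff H s φ := by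
    refine hs.induction_on ⟨_, .empty⟩ (fun _ _ hst ⟨φ, hφ⟩ ↦ ⟨φ, hφ.mono hst⟩)
      (fun _ _ ⟨_, hφ⟩ ⟨_, hψ⟩ ↦ ⟨_, hφ.union hψ⟩) fun y hy ↦ ?_
    obtain ⟨U, hU, c, hUH⟩ := hH y hy
    obtain ⟨W, hW, hφ⟩ := hUH.exists_isFourierCutoff hU
    exact ⟨W, mem_nhdsWithin_of_mem_nhds hW, hφ⟩
  obtain ⟨c, hφH⟩ := hφ.isFourierOn_smul
  refine ⟨c, (hφH.mono (subset_univ s) le_rfl).congr fun y hy ↦ ?_⟩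
  simp only [hφ.eqOn_one hy, Pi.one_apply, one_smul]

end FourierCutoff

theorem wiener_levi_local_L1_zero_not_mem_general [CompleteSpace E]
    {K : Set ℂ} (hK : IsClosed K) (h0K : (0 : ℂ) ∉ K) {h : ℂ → E} (hh : AnalyticOnNhd ℝ h K)
    {f : V → ℂ} (hf : Integrable f) :
    ∃ g : V → E, Integrable g ∧ ∀ y, 𝓕 f y ∈ K → h (𝓕 f y) = 𝓕 g y := by
  have hlocal : ∀ y₀ ∈ 𝓕 f ⁻¹' K, ∃ U ∈ 𝓝 y₀, ∃ c, IsFourierOn U c (fun y ↦ h (𝓕 f y)) :=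
    fun y₀ hy₀ ↦ exists_isFourierOn_comp_fourier hf (hh _ hy₀)
  obtain ⟨c, g, hg, -, hgh⟩ :=
    exists_isFourierOn_of_isCompact (isCompact_preimage_fourier hf hK h0K) hlocal
  exact ⟨g, hg, fun y hy ↦ (hgh y hy).symm⟩

end WienerLevi

/-- **Local Wiener–Levi theorem in `L¹(ℝ^d)`, case `0 ∉ K`.** Let `K ⊆ ℂ` be compact with
`0 ∉ K` and let `h` be real-analytic on an open neighborhood of `K`. Then for each
`f ∈ L¹(ℝ^d)` there is `g ∈ L¹(ℝ^d)` such that `h(f̂(y)) = ĝ(y)` for every `y` with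
`f̂(y) ∈ K`. -/
theorem wiener_levi_local_L1_zero_not_mem {d : ℕ}
    (K : Set ℂ) (hK : IsCompact K) (h0K : (0 : ℂ) ∉ K)
    (h : ℂ → ℂ) (V : Set ℂ) (hV : IsOpen V) (hKV : K ⊆ V)
    (hh : AnalyticOnNhd ℝ h V)
    (f : EuclideanSpace ℝ (Fin d) → ℂ) (hf : Integrable f) :
    ∃ g : EuclideanSpace ℝ (Fin d) → ℂ, Integrable g ∧
      ∀ y : EuclideanSpace ℝ (Fin d), 𝓕 f y ∈ K → h (𝓕 f y) = 𝓕 g y :=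
  wiener_levi_local_L1_zero_not_mem_general hK.isClosed h0K (hh.mono hKV) hf
end

section
/- Let λ_R and λ_I be complex measures on ℝ^d of finite total variation, each without singular component (each a sum of an absolutely continuous and a pure point measure), let (κ_{p,q})_{p,q≥0} ⊂ L¹(ℝ^d) with sup_{p,q} ‖κ_{p,q}‖_{L¹} < ∞, let (ν_{p,q})_{p,q≥0} be pure point measures with sup_{p,q} ‖ν_{p,q}‖ < ∞, and suppose ‖λ_R‖ < 2ε and ‖λ_I‖ < 2ε for some ε > 0. Then the series ν = Σ_{p,q=0}^∞ (λ_R/3ε)^{*p} * (λ_I/3ε)^{*q} * (κ_{p,q} dx + ν_{p,q}) converges in total variation norm to a complex measure ν of finite total variation without singular component, and ν̂(y) = Σ_{p,q=0}^∞ (λ̂_R(y)/3ε)^p (λ̂_I(y)/3ε)^q (κ̂_{p,q}(y) + ν̂_{p,q}(y)) for every y ∈ ℝ^d. -/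
open MeasureTheory Filter
open scoped FourierTransform Topology

noncomputable section

variable {α : Type*} [MeasurableSpace α]

/-- The four nonnegative finite measures constituting a complex measure `μ`:
the positive and negative Jordan parts of `Re μ` and of `Im μ`. -/
def cmPart (μ : ComplexMeasure α) : Fin 4 → Measure α
  | 0 => (ComplexMeasure.re μ).toJordanDecomposition.posPart
  | 1 => (ComplexMeasure.re μ).toJordanDecomposition.negPart
  | 2 => (ComplexMeasure.im μ).toJordanDecomposition.posPart
  | 3 => (ComplexMeasure.im μ).toJordanDecomposition.negPart

instance (μ : ComplexMeasure α) (i : Fin 4) : IsFiniteMeasure (cmPart μ i) := by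
  fin_cases i <;> unfold cmPart <;> infer_instance

/-- The integral `∫ f dμ` of a complex function against a complex measure `μ`. -/
def cmIntegral (μ : ComplexMeasure α) (f : α → ℂ) : ℂ :=
  ((∫ x, f x ∂cmPart μ 0) - ∫ x, f x ∂cmPart μ 1) +
    Complex.I * ((∫ x, f x ∂cmPart μ 2) - ∫ x, f x ∂cmPart μ 3)

open scoped Classical in
/-- A finite positive measure regarded as a complex measure. -/
def Measure.toComplexMeasure (m : Measure α) : ComplexMeasure α :=
  if h : IsFiniteMeasure m then
    (@MeasureTheory.Measure.toSignedMeasure α _ m h).mapRange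
      Complex.ofRealHom.toAddMonoidHom Complex.continuous_ofReal
  else 0

/-- The total variation `‖μ‖` of a complex measure `μ`. -/
def cmTV (μ : ComplexMeasure α) : ℝ :=
  ⨆ P : { P : ℕ → Set α // (∀ n, MeasurableSet (P n)) ∧ Pairwise (Function.onFun Disjoint P) },
    ∑' n, ‖μ (P.1 n)‖

/-- Convolution of complex measures: `(μ * ν)(E) = ∬ 1_E(x + y) μ(dx) ν(dy)`. -/
def cmConv {E : Type*} [MeasurableSpace E] [Add E] (μ ν : ComplexMeasure E) : ComplexMeasure E :=
  ∑ i : Fin 4, ∑ j : Fin 4,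
    ((![1, -1, Complex.I, -Complex.I] i) * (![1, -1, Complex.I, -Complex.I] j)) •
      Measure.toComplexMeasure
        (Measure.map (fun p : E × E => p.1 + p.2) ((cmPart μ i).prod (cmPart ν j)))

/-- Convolution powers `μ^{*p}`, with `μ^{*0} = δ₀`. -/
def cmConvPow {E : Type*} [MeasurableSpace E] [Add E] [Zero E]
    (μ : ComplexMeasure E) : ℕ → ComplexMeasure E
  | 0 => Measure.toComplexMeasure (Measure.dirac (0 : E))
  | n + 1 => cmConv (cmConvPow μ n) μ

open scoped RealInnerProductSpace in
/-- The Fourier–Stieltjes transform `μ̂(y) = ∫ e^{-2πi⟨x,y⟩} μ(dx)` of a complex measure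
on `ℝ^d`. -/
def cmFourier {d : ℕ} (μ : ComplexMeasure (EuclideanSpace ℝ (Fin d)))
    (y : EuclideanSpace ℝ (Fin d)) : ℂ :=
  cmIntegral μ fun x => Complex.exp (-2 * Real.pi * Complex.I * (⟪x, y⟫ : ℝ))

/-- `μ` is a pure point complex measure: `μ = Σ_n b_n δ_{ρ_n}` with `Σ_n |b_n| < ∞`. -/
def cmPurePoint {d : ℕ} (μ : ComplexMeasure (EuclideanSpace ℝ (Fin d))) : Prop :=
  ∃ (b : ℕ → ℂ) (ρ : ℕ → EuclideanSpace ℝ (Fin d)), Summable (fun n => ‖b n‖) ∧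
    ∀ A : Set (EuclideanSpace ℝ (Fin d)), MeasurableSet A →
      μ A = ∑' n, Set.indicator A (fun _ => b n) (ρ n)

/-- `μ` has no singular component: `μ = g dx + Σ_n b_n δ_{ρ_n}` with `g ∈ L¹` and
`Σ_n |b_n| < ∞`. -/
def cmNoSingular {d : ℕ} (μ : ComplexMeasure (EuclideanSpace ℝ (Fin d))) : Prop :=
  ∃ (g : EuclideanSpace ℝ (Fin d) → ℂ) (b : ℕ → ℂ) (ρ : ℕ → EuclideanSpace ℝ (Fin d)),
    Integrable g ∧ Summable (fun n => ‖b n‖) ∧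
    ∀ A : Set (EuclideanSpace ℝ (Fin d)), MeasurableSet A →
      μ A = (∫ x in A, g x) + ∑' n, Set.indicator A (fun _ => b n) (ρ n)

/-- The absolutely continuous complex measure `κ dx` with density `κ : ℝ^d → ℂ`. -/
def cmOfDensity {d : ℕ} (κ : EuclideanSpace ℝ (Fin d) → ℂ) :
    ComplexMeasure (EuclideanSpace ℝ (Fin d)) :=
  (Measure.toComplexMeasure (volume.withDensity fun x => ENNReal.ofReal (κ x).re) -
      Measure.toComplexMeasure (volume.withDensity fun x => ENNReal.ofReal (-(κ x).re))) +
    Complex.I •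
      (Measure.toComplexMeasure (volume.withDensity fun x => ENNReal.ofReal (κ x).im) -
        Measure.toComplexMeasure (volume.withDensity fun x => ENNReal.ofReal (-(κ x).im)))

end

/-!
The total variation norm is submultiplicative under convolution, and `‖λ_R / 3ε‖` and `‖λ_I / 3ε‖`
are less than `1`. As the last factors `κ_{p,q} dx + ν_{p,q}` are bounded in total variation, the
norms of the terms are dominated by a double geometric series, so the series converges absolutely.

A complex measure has no singular component exactly when there is a countable set off which its
variation vanishes on all Lebesgue null sets. In this form the property passes from the summands to
the sum, by taking the union of the exceptional countable sets, and from two measures to their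
convolution, by Fubini's theorem, with the sum of the two exceptional sets as the new one.

The Fourier transform is multiplicative under convolution and bounded by the total variation, so it
may be taken term by term.
-/

noncomputable section

section Variation

variable {α : Type*} [MeasurableSpace α]

lemma toComplexMeasure_apply (m : Measure α) [h : IsFiniteMeasure m] {s : Set α}
    (hs : MeasurableSet s) : Measure.toComplexMeasure m s = (m.real s : ℂ) := by
  simp [Measure.toComplexMeasure, h, VectorMeasure.mapRange_apply,
    Measure.toSignedMeasure_apply_measurable hs]

lemma variation_toComplexMeasure (m : Measure α) [IsFiniteMeasure m] :
    (Measure.toComplexMeasure m).variation = m := by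
  have enorm_apply (s : Set α) (hs : MeasurableSet s) : ‖Measure.toComplexMeasure m s‖ₑ = m s := by
    rw [toComplexMeasure_apply m hs, ← ofReal_norm, Complex.norm_real,
      Real.norm_of_nonneg measureReal_nonneg, ofReal_measureReal]
  refine le_antisymm
    (VectorMeasure.variation_le_of_forall_enorm_le fun s hs => (enorm_apply s hs).le) ?_
  exact Measure.le_iff.2 fun s hs =>
    (enorm_apply s hs).ge.trans (VectorMeasure.enorm_measure_le_variation _ s)

/-- The coefficients with which the positive measures `cmPart μ i` make up `μ`. -/
def cmCoeff : Fin 4 → ℂ := ![1, -1, Complex.I, -Complex.I]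

lemma signedMeasure_apply_eq_posPart_sub_negPart (t : SignedMeasure α) {s : Set α}
    (hs : MeasurableSet s) :
    t s = t.toJordanDecomposition.posPart.real s - t.toJordanDecomposition.negPart.real s := by
  conv_lhs => rw [← t.toSignedMeasure_toJordanDecomposition]
  simp [JordanDecomposition.toSignedMeasure, Measure.toSignedMeasure_apply_measurable hs]

lemma sum_cmPart (μ : ComplexMeasure α) :
    ∑ i, cmCoeff i • Measure.toComplexMeasure (cmPart μ i) = μ := by
  ext s hs
  have hre : (μ s).re = (cmPart μ 0).real s - (cmPart μ 1).real s :=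
    signedMeasure_apply_eq_posPart_sub_negPart (ComplexMeasure.re μ) hs
  have him : (μ s).im = (cmPart μ 2).real s - (cmPart μ 3).real s :=
    signedMeasure_apply_eq_posPart_sub_negPart (ComplexMeasure.im μ) hs
  simp only [Fin.sum_univ_four, add_apply, smul_apply, toComplexMeasure_apply _ hs, cmCoeff]
  apply Complex.ext
  · simp [hre, sub_eq_add_neg]
  · simp [him, sub_eq_add_neg]

lemma posPart_add_negPart_toJordanDecomposition (t : SignedMeasure α) :
    t.toJordanDecomposition.posPart + t.toJordanDecomposition.negPart = t.variation :=
  t.totalVariation_eq_variation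

lemma variation_re_le (μ : ComplexMeasure α) : (ComplexMeasure.re μ).variation ≤ μ.variation :=
  VectorMeasure.variation_le_of_forall_enorm_le fun s _ =>
    (enorm_le_iff_norm_le.2 (Complex.abs_re_le_norm (μ s))).trans
      (VectorMeasure.enorm_measure_le_variation μ s)

lemma variation_im_le (μ : ComplexMeasure α) : (ComplexMeasure.im μ).variation ≤ μ.variation :=
  VectorMeasure.variation_le_of_forall_enorm_le fun s _ =>
    (enorm_le_iff_norm_le.2 (Complex.abs_im_le_norm (μ s))).trans
      (VectorMeasure.enorm_measure_le_variation μ s)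

lemma cmPart_le_variation (μ : ComplexMeasure α) (i : Fin 4) : cmPart μ i ≤ μ.variation := by
  have hre := (posPart_add_negPart_toJordanDecomposition _).trans_le (variation_re_le μ)
  have him := (posPart_add_negPart_toJordanDecomposition _).trans_le (variation_im_le μ)
  fin_cases i
  exacts [(Measure.le_add_right le_rfl).trans hre, (Measure.le_add_left le_rfl).trans hre,
    (Measure.le_add_right le_rfl).trans him, (Measure.le_add_left le_rfl).trans him]

instance isFiniteMeasure_variation_complexMeasure (μ : ComplexMeasure α) :
    IsFiniteMeasure μ.variation := by
  have (i : Fin 4) :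
      IsFiniteMeasure (cmCoeff i • Measure.toComplexMeasure (cmPart μ i)).variation := by
    rw [VectorMeasure.variation_smul, variation_toComplexMeasure]
    infer_instance
  rw [← sum_cmPart μ]
  exact isFiniteMeasure_of_le _ (VectorMeasure.variation_finsetSum_le _ _)

end Variation

section TotalVariation

variable {α : Type*} [MeasurableSpace α]

lemma hasSum_measureReal_iUnion (m : Measure α) [IsFiniteMeasure m] {P : ℕ → Set α}
    (hP : ∀ n, MeasurableSet (P n)) (hd : Pairwise (Function.onFun Disjoint P)) :
    HasSum (fun n => m.real (P n)) (m.real (⋃ n, P n)) := by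
  simpa only [Measure.toSignedMeasure_apply_measurable, hP, MeasurableSet.iUnion hP]
    using m.toSignedMeasure.m_iUnion hP hd

lemma summable_norm_apply (μ : ComplexMeasure α) {P : ℕ → Set α} (hP : ∀ n, MeasurableSet (P n))
    (hd : Pairwise (Function.onFun Disjoint P)) : Summable fun n => ‖μ (P n)‖ :=
  (hasSum_measureReal_iUnion μ.variation hP hd).summable.of_nonneg_of_le (fun _ => norm_nonneg _)
    fun _ => VectorMeasure.norm_measure_le_variation

lemma tsum_norm_apply_le_variation (μ : ComplexMeasure α) {P : ℕ → Set α}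
    (hP : ∀ n, MeasurableSet (P n)) (hd : Pairwise (Function.onFun Disjoint P)) :
    ∑' n, ‖μ (P n)‖ ≤ μ.variation.real Set.univ :=
  calc ∑' n, ‖μ (P n)‖ ≤ ∑' n, μ.variation.real (P n) :=
        (summable_norm_apply μ hP hd).tsum_le_tsum
          (fun _ => VectorMeasure.norm_measure_le_variation)
          (hasSum_measureReal_iUnion μ.variation hP hd).summable
    _ = μ.variation.real (⋃ n, P n) := (hasSum_measureReal_iUnion μ.variation hP hd).tsum_eq
    _ ≤ μ.variation.real Set.univ := measureReal_mono (Set.subset_univ _)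

lemma tsum_norm_apply_le_cmTV (μ : ComplexMeasure α) {P : ℕ → Set α}
    (hP : ∀ n, MeasurableSet (P n)) (hd : Pairwise (Function.onFun Disjoint P)) :
    ∑' n, ‖μ (P n)‖ ≤ cmTV μ := by
  refine le_ciSup (f := fun P : { P : ℕ → Set α // (∀ n, MeasurableSet (P n)) ∧
    Pairwise (Function.onFun Disjoint P) } => ∑' n, ‖μ (P.1 n)‖) ⟨μ.variation.real Set.univ, ?_⟩
    ⟨P, hP, hd⟩
  rintro _ ⟨Q, rfl⟩
  exact tsum_norm_apply_le_variation μ Q.2.1 Q.2.2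

lemma sum_norm_apply_le_cmTV (μ : ComplexMeasure α) {P : Finset (Set α)}
    (hP : ∀ s ∈ P, MeasurableSet s) (hd : (P : Set (Set α)).PairwiseDisjoint id) :
    ∑ s ∈ P, ‖μ s‖ ≤ cmTV μ := by
  let _ := Fintype.toEncodable P
  let Q : ℕ → Set α := fun n => ⋃ s ∈ Encodable.decode₂ P n, (s : Set α)
  have hQ : ∀ n, MeasurableSet (Q n) := fun n =>
    Encodable.iUnion_decode₂_cases (C := MeasurableSet) MeasurableSet.empty fun s : P => hP s s.2
  have hQd : Pairwise (Function.onFun Disjoint Q) :=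
    Encodable.iUnion_decode₂_disjoint_on fun (s t : P) hst =>
      hd s.2 t.2 (Subtype.coe_injective.ne hst)
  calc ∑ s ∈ P, ‖μ s‖ = ∑' s : P, ‖μ s‖ := by
        rw [tsum_fintype, Finset.sum_coe_sort P fun s => ‖μ s‖]
    _ = ∑' n, ‖μ (Q n)‖ :=
        (tsum_iUnion_decode₂ (fun s => ‖μ s‖) (by simp) fun s : P => (s : Set α)).symm
    _ ≤ cmTV μ := tsum_norm_apply_le_cmTV μ hQ hQd

lemma cmTV_eq_variation (μ : ComplexMeasure α) : cmTV μ = μ.variation.real Set.univ := by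
  have : Nonempty { P : ℕ → Set α // (∀ n, MeasurableSet (P n)) ∧
      Pairwise (Function.onFun Disjoint P) } :=
    ⟨fun _ => ∅, fun _ => MeasurableSet.empty, fun _ _ _ => Set.disjoint_empty _⟩
  refine le_antisymm (ciSup_le fun P => tsum_norm_apply_le_variation μ P.2.1 P.2.2) ?_
  refine ENNReal.toReal_le_of_le_ofReal (Real.iSup_nonneg fun _ => tsum_nonneg fun _ =>
    norm_nonneg _) (le_of_forall_lt fun c hc => ?_)
  obtain ⟨P, -, hPd, hPm, hcP⟩ := μ.exists_lt_sum_of_lt_variation MeasurableSet.univ hc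
  refine hcP.trans_le ?_
  simp only [← ofReal_norm]
  rw [← ENNReal.ofReal_sum_of_nonneg fun _ _ => norm_nonneg _]
  exact ENNReal.ofReal_le_ofReal (sum_norm_apply_le_cmTV μ hPm hPd)

lemma cmTV_nonneg (μ : ComplexMeasure α) : 0 ≤ cmTV μ := by
  rw [cmTV_eq_variation]
  exact measureReal_nonneg

lemma norm_apply_le_cmTV (μ : ComplexMeasure α) (s : Set α) : ‖μ s‖ ≤ cmTV μ := by
  rw [cmTV_eq_variation]
  exact (VectorMeasure.norm_measure_le_variation (μ := μ)).trans
    (measureReal_mono (Set.subset_univ s))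

lemma cmTV_le_of_variation_le {μ : ComplexMeasure α} {m : Measure α} [IsFiniteMeasure m]
    (h : μ.variation ≤ m) : cmTV μ ≤ m.real Set.univ := by
  rw [cmTV_eq_variation]
  exact ENNReal.toReal_mono (measure_ne_top _ _) (h _)

lemma cmTV_toComplexMeasure (m : Measure α) [IsFiniteMeasure m] :
    cmTV (Measure.toComplexMeasure m) = m.real Set.univ := by
  rw [cmTV_eq_variation, variation_toComplexMeasure]

lemma cmTV_add_le (μ ν : ComplexMeasure α) : cmTV (μ + ν) ≤ cmTV μ + cmTV ν := by
  refine (cmTV_le_of_variation_le VectorMeasure.variation_add_le).trans_eq ?_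
  rw [measureReal_add_apply, cmTV_eq_variation, cmTV_eq_variation]

lemma cmTV_smul (c : ℂ) (μ : ComplexMeasure α) : cmTV (c • μ) = ‖c‖ * cmTV μ := by
  simp [cmTV_eq_variation, VectorMeasure.variation_smul, Measure.real]

lemma cmTV_inv_smul_lt_one {r : ℝ} {μ : ComplexMeasure α} (h : cmTV μ < r) :
    cmTV (((r⁻¹ : ℝ) : ℂ) • μ) < 1 := by
  have hr : 0 < r := (cmTV_nonneg μ).trans_lt h
  rwa [cmTV_smul, Complex.norm_real, Real.norm_of_nonneg (inv_nonneg.2 hr.le), inv_mul_lt_one₀ hr]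

end TotalVariation

section Integral

variable {α : Type*} [MeasurableSpace α] {f : α → ℂ}

lemma integral_toComplexMeasure (m : Measure α) [IsFiniteMeasure m] (f : α → ℂ) :
    (Measure.toComplexMeasure m).integral f (ContinuousLinearMap.mul ℝ ℂ) = ∫ x, f x ∂m := by
  rw [VectorMeasure.integral_eq_setToFun, MeasureTheory.integral_eq_setToFun]
  simp only [variation_toComplexMeasure]
  refine setToFun_congr_left' _ _ (fun s hs _ => ?_) f
  ext
  simp [VectorMeasure.transpose, VectorMeasure.mapRange_apply, toComplexMeasure_apply m hs,
    weightedSMul_apply]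

lemma integrable_smul_complexMeasure (c : ℂ) {μ : ComplexMeasure α} (hf : μ.Integrable f) :
    (c • μ).Integrable f := by
  rw [VectorMeasure.Integrable, VectorMeasure.variation_smul]
  exact hf.smul_measure_nnreal

lemma integral_smul_complexMeasure (c : ℂ) {μ : ComplexMeasure α} (hf : μ.Integrable f) :
    (c • μ).integral f (ContinuousLinearMap.mul ℝ ℂ) =
      c * μ.integral f (ContinuousLinearMap.mul ℝ ℂ) := by
  let B := ContinuousLinearMap.mul ℝ ℂ
  let cB := (ContinuousLinearMap.compL ℝ ℂ ℂ ℂ (B c)).comp B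
  have htranspose : VectorMeasure.transpose (c • μ) B = μ.transpose cB := by
    ext s _ z
    change z * (c * μ s) = c * (z * μ s)
    ring
  calc (c • μ).integral f B = μ.integral f cB := by
        rw [VectorMeasure.integral_eq_setToFun_transpose (integrable_smul_complexMeasure c hf),
          VectorMeasure.integral_eq_setToFun_transpose hf]
        simp only [htranspose]
    _ = B c (μ.integral f B) := (VectorMeasure.continuousLinearMap_apply_integral hf).symm

lemma integrable_cmPart {μ : ComplexMeasure α} (hf : μ.Integrable f) (i : Fin 4) :
    Integrable f (cmPart μ i) :=
  hf.mono_measure (cmPart_le_variation μ i)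

lemma cmIntegral_eq_sum (μ : ComplexMeasure α) (f : α → ℂ) :
    cmIntegral μ f = ∑ i, cmCoeff i * ∫ x, f x ∂cmPart μ i := by
  simp [cmIntegral, cmCoeff, Fin.sum_univ_four]
  ring

lemma integral_sum_smul_toComplexMeasure {ι : Type*} [Fintype ι] (c : ι → ℂ) (m : ι → Measure α)
    [∀ i, IsFiniteMeasure (m i)] (hf : ∀ i, Integrable f (m i)) :
    (∑ i, c i • Measure.toComplexMeasure (m i)).integral f (ContinuousLinearMap.mul ℝ ℂ) =
      ∑ i, c i * ∫ x, f x ∂m i := by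
  have hm (i : ι) : (Measure.toComplexMeasure (m i)).Integrable f := by
    simpa only [VectorMeasure.Integrable, variation_toComplexMeasure] using hf i
  rw [VectorMeasure.integral_finsetSum_vectorMeasure
    fun i _ => integrable_smul_complexMeasure (c i) (hm i)]
  simp only [integral_smul_complexMeasure _ (hm _), integral_toComplexMeasure]

lemma cmIntegral_eq_integral {μ : ComplexMeasure α} (hf : μ.Integrable f) :
    cmIntegral μ f = μ.integral f (ContinuousLinearMap.mul ℝ ℂ) := by
  conv_rhs => rw [← sum_cmPart μ]
  rw [integral_sum_smul_toComplexMeasure _ _ (integrable_cmPart hf), cmIntegral_eq_sum]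

lemma cmIntegral_toComplexMeasure {m : Measure α} [IsFiniteMeasure m] (hf : Integrable f m) :
    cmIntegral (Measure.toComplexMeasure m) f = ∫ x, f x ∂m := by
  rw [← variation_toComplexMeasure m] at hf
  rw [cmIntegral_eq_integral hf, integral_toComplexMeasure]

lemma cmIntegral_add {μ ν : ComplexMeasure α} (hμ : μ.Integrable f) (hν : ν.Integrable f) :
    cmIntegral (μ + ν) f = cmIntegral μ f + cmIntegral ν f := by
  rw [cmIntegral_eq_integral hμ, cmIntegral_eq_integral hν,
    cmIntegral_eq_integral (hμ.add_vectorMeasure hν),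
    VectorMeasure.integral_add_vectorMeasure hμ hν]

lemma cmIntegral_sub {μ ν : ComplexMeasure α} (hμ : μ.Integrable f) (hν : ν.Integrable f) :
    cmIntegral (μ - ν) f = cmIntegral μ f - cmIntegral ν f := by
  rw [cmIntegral_eq_integral hμ, cmIntegral_eq_integral hν,
    cmIntegral_eq_integral (hμ.sub_vectorMeasure hν),
    VectorMeasure.integral_sub_vectorMeasure hμ hν]

lemma cmIntegral_smul (c : ℂ) {μ : ComplexMeasure α} (hμ : μ.Integrable f) :
    cmIntegral (c • μ) f = c * cmIntegral μ f := by
  rw [cmIntegral_eq_integral hμ, cmIntegral_eq_integral (integrable_smul_complexMeasure c hμ),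
    integral_smul_complexMeasure c hμ]

lemma norm_cmIntegral_le {μ : ComplexMeasure α} (hμ : μ.Integrable f) {C : ℝ}
    (hC : ∀ x, ‖f x‖ ≤ C) : ‖cmIntegral μ f‖ ≤ C * cmTV μ := by
  rw [cmIntegral_eq_integral hμ, cmTV_eq_variation]
  simpa using VectorMeasure.norm_integral_le_of_norm_le_const (μ := μ)
    (B := ContinuousLinearMap.mul ℝ ℂ) (.of_forall hC)

end Integral

section Convolution

variable {E : Type*} [MeasurableSpace E]

lemma prod_eq_sum_cmPart (μ ν : ComplexMeasure E) :
    μ.prod ν (ContinuousLinearMap.mul ℝ ℂ) = ∑ i, ∑ j, (cmCoeff i * cmCoeff j) •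
      Measure.toComplexMeasure ((cmPart μ i).prod (cmPart ν j)) := by
  refine VectorMeasure.prod_eq_of_forall_apply_prod fun s t hs ht => ?_
  conv_rhs => rw [← sum_cmPart μ, ← sum_cmPart ν]
  simp only [sum_apply, smul_apply, toComplexMeasure_apply _ hs, toComplexMeasure_apply _ ht,
    toComplexMeasure_apply _ (hs.prod ht), ContinuousLinearMap.mul_apply', Finset.sum_mul_sum,
    measureReal_prod_prod, smul_eq_mul, Complex.ofReal_mul]
  refine Finset.sum_congr rfl fun i _ => Finset.sum_congr rfl fun j _ => ?_
  ring

variable [AddMonoid E]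

lemma cmConv_eq_sum_conv_cmPart (μ ν : ComplexMeasure E) :
    cmConv μ ν = ∑ ij : Fin 4 × Fin 4, (cmCoeff ij.1 * cmCoeff ij.2) •
      Measure.toComplexMeasure ((cmPart μ ij.1).conv (cmPart ν ij.2)) := by
  rw [Fintype.sum_prod_type]
  rfl

variable [MeasurableAdd₂ E]

lemma cmConv_eq_map (μ ν : ComplexMeasure E) :
    cmConv μ ν = (μ.prod ν (ContinuousLinearMap.mul ℝ ℂ)).map fun p : E × E => p.1 + p.2 := by
  have hadd : Measurable fun p : E × E => p.1 + p.2 := measurable_add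
  ext s hs
  rw [VectorMeasure.map_apply _ hadd hs, prod_eq_sum_cmPart]
  simp only [cmConv, sum_apply, smul_apply, toComplexMeasure_apply _ hs,
    toComplexMeasure_apply _ (hadd hs), map_measureReal_apply hadd hs]
  rfl

lemma variation_cmConv_le (μ ν : ComplexMeasure E) :
    (cmConv μ ν).variation ≤ μ.variation.conv ν.variation := by
  rw [cmConv_eq_map]
  refine VectorMeasure.variation_map_le.trans (Measure.map_mono ?_ measurable_add)
  refine VectorMeasure.variation_prod_le.trans ?_
  simp [enorm_eq_nnnorm]

lemma cmTV_cmConv_le (μ ν : ComplexMeasure E) : cmTV (cmConv μ ν) ≤ cmTV μ * cmTV ν := by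
  refine (cmTV_le_of_variation_le (variation_cmConv_le μ ν)).trans_eq ?_
  rw [Measure.conv, map_measureReal_apply measurable_add MeasurableSet.univ, Set.preimage_univ,
    ← Set.univ_prod_univ, measureReal_prod_prod, cmTV_eq_variation, cmTV_eq_variation]

lemma cmTV_cmConvPow_le (μ : ComplexMeasure E) (n : ℕ) : cmTV (cmConvPow μ n) ≤ cmTV μ ^ n := by
  induction n with
  | zero => simp [cmConvPow, cmTV_toComplexMeasure]
  | succ n ih =>
    calc cmTV (cmConv (cmConvPow μ n) μ) ≤ cmTV (cmConvPow μ n) * cmTV μ := cmTV_cmConv_le _ _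
      _ ≤ cmTV μ ^ n * cmTV μ := mul_le_mul_of_nonneg_right ih (cmTV_nonneg μ)
      _ = cmTV μ ^ (n + 1) := (pow_succ _ _).symm

variable {f : E → ℂ}

lemma integrable_conv (hf : Measurable f) (hmul : ∀ x y, f (x + y) = f x * f y) {m m' : Measure E}
    [SFinite m'] (hm : Integrable f m) (hm' : Integrable f m') : Integrable f (m.conv m') := by
  refine (integrable_map_measure hf.aestronglyMeasurable measurable_add.aemeasurable).2 ?_
  exact (hm.mul_prod hm').congr (.of_forall fun p => (hmul p.1 p.2).symm)

lemma integral_conv_eq_mul (hf : Measurable f) (hmul : ∀ x y, f (x + y) = f x * f y)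
    (m m' : Measure E) [SFinite m] [SFinite m'] :
    ∫ x, f x ∂(m.conv m') = (∫ x, f x ∂m) * ∫ x, f x ∂m' := by
  rw [Measure.conv, integral_map measurable_add.aemeasurable hf.aestronglyMeasurable,
    ← integral_prod_mul]
  simp only [hmul]

lemma integrable_cmConv (hf : Measurable f) (hmul : ∀ x y, f (x + y) = f x * f y)
    {μ ν : ComplexMeasure E} (hμ : μ.Integrable f) (hν : ν.Integrable f) :
    (cmConv μ ν).Integrable f :=
  (integrable_conv hf hmul hμ hν).mono_measure (variation_cmConv_le μ ν)

lemma cmIntegral_cmConv (hf : Measurable f) (hmul : ∀ x y, f (x + y) = f x * f y)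
    {μ ν : ComplexMeasure E} (hμ : μ.Integrable f) (hν : ν.Integrable f) :
    cmIntegral (cmConv μ ν) f = cmIntegral μ f * cmIntegral ν f := by
  rw [cmIntegral_eq_integral (integrable_cmConv hf hmul hμ hν), cmConv_eq_sum_conv_cmPart,
    integral_sum_smul_toComplexMeasure (fun ij : Fin 4 × Fin 4 => cmCoeff ij.1 * cmCoeff ij.2)
      (fun ij => (cmPart μ ij.1).conv (cmPart ν ij.2)) fun ij =>
        integrable_conv hf hmul (integrable_cmPart hμ ij.1) (integrable_cmPart hν ij.2),
    Fintype.sum_prod_type, cmIntegral_eq_sum, cmIntegral_eq_sum, Finset.sum_mul_sum]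
  simp only [integral_conv_eq_mul hf hmul, mul_mul_mul_comm]

lemma integrable_cmConvPow (hf : Measurable f) (hmul : ∀ x y, f (x + y) = f x * f y)
    {μ : ComplexMeasure E} (hμ : μ.Integrable f) (n : ℕ) : (cmConvPow μ n).Integrable f := by
  induction n with
  | zero =>
    rw [VectorMeasure.Integrable, cmConvPow, variation_toComplexMeasure]
    exact integrable_dirac' hf.stronglyMeasurable enorm_lt_top
  | succ n ih => exact integrable_cmConv hf hmul ih hμ

lemma cmIntegral_cmConvPow (hf : Measurable f) (hmul : ∀ x y, f (x + y) = f x * f y)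
    (hzero : f 0 = 1) {μ : ComplexMeasure E} (hμ : μ.Integrable f) (n : ℕ) :
    cmIntegral (cmConvPow μ n) f = cmIntegral μ f ^ n := by
  induction n with
  | zero =>
    rw [cmConvPow, cmIntegral_toComplexMeasure
      (integrable_dirac' hf.stronglyMeasurable enorm_lt_top),
      integral_dirac' f 0 hf.stronglyMeasurable, hzero, pow_zero]
  | succ n ih =>
    rw [cmConvPow, cmIntegral_cmConv hf hmul (integrable_cmConvPow hf hmul hμ n) hμ, ih, pow_succ]

end Convolution

section Series

variable {α ι : Type*} [MeasurableSpace α]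

lemma summable_apply_of_summable_cmTV {μ : ι → ComplexMeasure α}
    (h : Summable fun i => cmTV (μ i)) (A : Set α) : Summable fun i => μ i A :=
  .of_norm (h.of_nonneg_of_le (fun _ => norm_nonneg _) fun i => norm_apply_le_cmTV (μ i) A)

lemma summable_prod_apply_of_summable_cmTV {μ : ι → ComplexMeasure α}
    (h : Summable fun i => cmTV (μ i)) {A : ℕ → Set α} (hA : ∀ n, MeasurableSet (A n))
    (hd : Pairwise (Function.onFun Disjoint A)) : Summable fun p : ι × ℕ => μ p.1 (A p.2) :=
  .of_norm <| (summable_prod_of_nonneg fun _ => norm_nonneg _).2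
    ⟨fun i => summable_norm_apply (μ i) hA hd,
      h.of_nonneg_of_le (fun _ => tsum_nonneg fun _ => norm_nonneg _)
        fun i => tsum_norm_apply_le_cmTV (μ i) hA hd⟩

/-- The sum `∑ i, μ i` of a series of complex measures that converges absolutely in total
variation. It is defined setwise; `tendsto_cmTV_cmTsum_sub_sum` shows that it is the sum in total
variation. -/
def cmTsum (μ : ι → ComplexMeasure α) (h : Summable fun i => cmTV (μ i)) : ComplexMeasure α where
  measureOf' A := ∑' i, μ i A
  empty' := by simp
  not_measurable' A hA := by simp [VectorMeasure.not_measurable _ hA]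
  m_iUnion' A hA hd := by
    have hsum := summable_prod_apply_of_summable_cmTV h hA hd
    have hiUnion : ∑' i, μ i (⋃ n, A n) = ∑' p : ι × ℕ, μ p.1 (A p.2) := by
      rw [hsum.tsum_prod]
      exact tsum_congr fun i => ((μ i).m_iUnion hA hd).tsum_eq.symm
    rw [hiUnion]
    exact ((Equiv.prodComm ℕ ι).hasSum_iff.2 hsum.hasSum).prod_fiberwise
      fun n => (summable_apply_of_summable_cmTV h (A n)).hasSum

lemma cmTsum_apply (μ : ι → ComplexMeasure α) (h : Summable fun i => cmTV (μ i)) (A : Set α) :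
    cmTsum μ h A = ∑' i, μ i A := rfl

lemma variation_cmTsum_le (μ : ι → ComplexMeasure α) (h : Summable fun i => cmTV (μ i)) :
    (cmTsum μ h).variation ≤ Measure.sum fun i => (μ i).variation := by
  refine VectorMeasure.variation_le_of_forall_enorm_le fun A hA => ?_
  rw [cmTsum_apply, Measure.sum_apply _ hA]
  exact enorm_tsum_le_tsum_enorm.trans
    (ENNReal.tsum_le_tsum fun i => VectorMeasure.enorm_measure_le_variation (μ i) A)

lemma sum_variation_univ {μ : ι → ComplexMeasure α} (h : Summable fun i => cmTV (μ i)) :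
    (Measure.sum fun i => (μ i).variation) Set.univ = ENNReal.ofReal (∑' i, cmTV (μ i)) := by
  rw [Measure.sum_apply _ MeasurableSet.univ,
    ENNReal.ofReal_tsum_of_nonneg (fun i => cmTV_nonneg (μ i)) h]
  exact tsum_congr fun i => by rw [cmTV_eq_variation, ofReal_measureReal]

lemma cmTV_cmTsum_le (μ : ι → ComplexMeasure α) (h : Summable fun i => cmTV (μ i)) :
    cmTV (cmTsum μ h) ≤ ∑' i, cmTV (μ i) := by
  have : IsFiniteMeasure (Measure.sum fun i => (μ i).variation) :=
    ⟨(sum_variation_univ h).trans_lt ENNReal.ofReal_lt_top⟩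
  refine (cmTV_le_of_variation_le (variation_cmTsum_le μ h)).trans_eq ?_
  rw [Measure.real, sum_variation_univ h,
    ENNReal.toReal_ofReal (tsum_nonneg fun i => cmTV_nonneg (μ i))]

lemma cmTsum_sub_sum (μ : ι → ComplexMeasure α) (h : Summable fun i => cmTV (μ i))
    (F : Finset ι) :
    cmTsum μ h - ∑ i ∈ F, μ i = cmTsum (fun i : { i // i ∉ F } => μ i) (h.subtype _) := by
  ext A
  rw [sub_apply, cmTsum_apply, cmTsum_apply, sum_apply,
    ← (summable_apply_of_summable_cmTV h A).sum_add_tsum_subtype_compl F, add_sub_cancel_left]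

lemma tendsto_cmTV_cmTsum_sub_sum (μ : ι → ComplexMeasure α) (h : Summable fun i => cmTV (μ i)) :
    Tendsto (fun F : Finset ι => cmTV (cmTsum μ h - ∑ i ∈ F, μ i)) atTop (𝓝 0) := by
  refine squeeze_zero (fun _ => cmTV_nonneg _) (fun F => ?_)
    (tendsto_tsum_compl_atTop_zero fun i => cmTV (μ i))
  rw [cmTsum_sub_sum]
  exact cmTV_cmTsum_le _ _

lemma integrable_of_norm_le (μ : ComplexMeasure α) {f : α → ℂ} (hf : Measurable f) {C : ℝ}
    (hC : ∀ x, ‖f x‖ ≤ C) : μ.Integrable f :=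
  Integrable.of_bound hf.aestronglyMeasurable C (.of_forall hC)

lemma cmIntegral_sum (F : Finset ι) {μ : ι → ComplexMeasure α} {f : α → ℂ}
    (hf : ∀ i ∈ F, (μ i).Integrable f) :
    cmIntegral (∑ i ∈ F, μ i) f = ∑ i ∈ F, cmIntegral (μ i) f := by
  rw [cmIntegral_eq_integral (VectorMeasure.Integrable.finsetSum_vectorMeasure hf),
    VectorMeasure.integral_finsetSum_vectorMeasure hf]
  exact Finset.sum_congr rfl fun i hi => (cmIntegral_eq_integral (hf i hi)).symm

lemma hasSum_cmIntegral (μ : ι → ComplexMeasure α) (h : Summable fun i => cmTV (μ i)) {f : α → ℂ}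
    (hf : Measurable f) {C : ℝ} (hC : ∀ x, ‖f x‖ ≤ C) :
    HasSum (fun i => cmIntegral (μ i) f) (cmIntegral (cmTsum μ h) f) := by
  have hint (ν : ComplexMeasure α) : ν.Integrable f := integrable_of_norm_le ν hf hC
  rw [HasSum, SummationFilter.unconditional_filter, tendsto_iff_norm_sub_tendsto_zero]
  refine squeeze_zero (fun _ => norm_nonneg _) (fun F => ?_)
    (by simpa using (tendsto_cmTV_cmTsum_sub_sum μ h).const_mul C)
  rw [norm_sub_rev, ← cmIntegral_sum F fun i _ => hint (μ i), ← cmIntegral_sub (hint _) (hint _)]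
  exact norm_cmIntegral_le (hint _) hC

end Series

section AcOffCountable

/-- `μ` is absolutely continuous with respect to `m` off some countable set. For the variation of
a complex measure on `ℝ^d` and Lebesgue measure, this is the absence of a singular component
(`cmNoSingular_iff`), in a form that needs neither a density nor point masses. -/
def AcOffCountable {α : Type*} [MeasurableSpace α] (μ m : Measure α) : Prop :=
  ∃ S : Set α, S.Countable ∧ ∀ A, MeasurableSet A → Disjoint A S → m A = 0 → μ A = 0

namespace AcOffCountable

variable {α : Type*} [MeasurableSpace α] {μ ν m : Measure α}

lemma mono_ac (hν : AcOffCountable ν m) (h : μ ≪ ν) : AcOffCountable μ m := by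
  obtain ⟨S, hS, hνS⟩ := hν
  exact ⟨S, hS, fun A hA hAS hmA => h (hνS A hA hAS hmA)⟩

lemma sum {ι : Type*} [Countable ι] {μ : ι → Measure α} (h : ∀ i, AcOffCountable (μ i) m) :
    AcOffCountable (Measure.sum μ) m := by
  choose S hS hμS using h
  refine ⟨⋃ i, S i, Set.countable_iUnion hS, fun A hA hAS hmA => ?_⟩
  rw [Set.disjoint_iUnion_right] at hAS
  exact (Measure.sum_apply_eq_zero' hA).2 fun i => hμS i A hA (hAS i) hmA

lemma dirac (a : α) (m : Measure α) : AcOffCountable (Measure.dirac a) m :=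
  ⟨{a}, Set.countable_singleton a, fun A hA hAa _ => by
    simpa [Measure.dirac_apply' a hA] using hAa⟩

variable {E : Type*} [AddGroup E] [MeasurableSpace E] [MeasurableSingletonClass E]
  [MeasurableAdd₂ E] {μ ν m : Measure E} {S T A : Set E}

lemma prod_preimage_add_inter_fst_eq_zero [SFinite ν] [m.IsAddLeftInvariant]
    (hν : ∀ A, MeasurableSet A → Disjoint A T → m A = 0 → ν A = 0) (hS : S.Countable)
    (hA : MeasurableSet A) (hAST : Disjoint A (Set.image2 (· + ·) S T)) (hmA : m A = 0) :
    (μ.prod ν) ((fun p : E × E => p.1 + p.2) ⁻¹' A ∩ Prod.fst ⁻¹' S) = 0 := by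
  rw [Measure.measure_prod_null
    ((measurable_add hA).inter (measurable_fst hS.measurableSet))]
  refine .of_forall fun x => ?_
  by_cases hx : x ∈ S
  · have hdisj : Disjoint ((x + ·) ⁻¹' A) T := Set.disjoint_left.2 fun y hy hyT =>
      Set.disjoint_left.1 hAST hy (Set.mem_image2_of_mem hx hyT)
    have hnull : m ((x + ·) ⁻¹' A) = 0 := by rwa [measure_preimage_add]
    exact measure_mono_null (fun y hy => hy.1)
      (hν _ (measurable_const_add x hA) hdisj hnull)
  · exact measure_mono_null (fun y hy => hx hy.2) measure_empty

lemma prod_preimage_add_diff_fst_eq_zero [SFinite μ] [SFinite ν] [m.IsAddRightInvariant]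
    (hμ : ∀ A, MeasurableSet A → Disjoint A S → m A = 0 → μ A = 0) (hS : S.Countable)
    (hA : MeasurableSet A) (hmA : m A = 0) :
    (μ.prod ν) ((fun p : E × E => p.1 + p.2) ⁻¹' A \ Prod.fst ⁻¹' S) = 0 := by
  rw [Measure.prod_apply_symm ((measurable_add hA).diff (measurable_fst hS.measurableSet))]
  refine (lintegral_congr fun y => ?_).trans lintegral_zero
  have hnull : m ((· + y) ⁻¹' A) = 0 := by rwa [measure_preimage_add_right]
  exact hμ ((· + y) ⁻¹' A \ S) ((measurable_add_const y hA).diff hS.measurableSet)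
    Set.disjoint_sdiff_left (measure_mono_null Set.sdiff_subset hnull)

lemma conv [SFinite μ] [SFinite ν] [m.IsAddLeftInvariant] [m.IsAddRightInvariant]
    (hμ : AcOffCountable μ m) (hν : AcOffCountable ν m) : AcOffCountable (μ.conv ν) m := by
  obtain ⟨S, hS, hμS⟩ := hμ
  obtain ⟨T, hT, hνT⟩ := hν
  refine ⟨Set.image2 (· + ·) S T, hS.image2 hT _, fun A hA hAST hmA => ?_⟩
  -- For `x ∈ S` the slice `A - x` is null and avoids `T`, as `A` avoids `S + T`; over `x ∉ S` the
  -- slices in the other direction, `(A - y) \ S`, are null and avoid `S`.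
  rw [Measure.conv, Measure.map_apply measurable_add hA,
    ← measure_inter_add_sdiff _ (measurable_fst hS.measurableSet),
    prod_preimage_add_inter_fst_eq_zero hνT hS hA hAST hmA,
    prod_preimage_add_diff_fst_eq_zero hμS hS hA hmA, add_zero]

end AcOffCountable

end AcOffCountable

section NoSingular

lemma withDensityᵥ_rnDeriv_eq_complexMeasure {α : Type*} [MeasurableSpace α] {m : Measure α}
    [SigmaFinite m] {c : ComplexMeasure α} (h : c ≪ᵥ m.toENNRealVectorMeasure) :
    m.withDensityᵥ (c.rnDeriv m) = c := by
  obtain ⟨hre, him⟩ := (ComplexMeasure.absolutelyContinuous_ennreal_iff _ _).1 h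
  have hsing (s : SignedMeasure α) (hs : s ≪ᵥ m.toENNRealVectorMeasure) :
      s.singularPart m = 0 := by
    simpa only [SignedMeasure.withDensityᵥ_rnDeriv_eq s m hs, add_eq_right]
      using s.singularPart_add_withDensity_rnDeriv_eq m
  have hc : c.singularPart m = 0 := by
    rw [ComplexMeasure.singularPart, hsing _ hre, hsing _ him]
    rfl
  have : c.HaveLebesgueDecomposition m := ⟨inferInstance, inferInstance⟩
  simpa only [hc, zero_add] using c.singularPart_add_withDensity_rnDeriv_eq (μ := m)

lemma exists_apply_inter_range_eq_tsum_indicator {α : Type*} [MeasurableSpace α]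
    [MeasurableSingletonClass α] (μ : ComplexMeasure α) (ρ : ℕ → α) :
    ∃ b : ℕ → ℂ, Summable (fun n => ‖b n‖) ∧ ∀ A, MeasurableSet A →
      μ (A ∩ Set.range ρ) = ∑' n, A.indicator (fun _ => b n) (ρ n) := by
  let D : ℕ → Set α := disjointed fun n => {ρ n}
  have hDsub (n) : D n ⊆ {ρ n} := disjointed_subset _ n
  have hDm (n) : MeasurableSet (D n) := .disjointed (fun _ => measurableSet_singleton _) n
  have hDd : Pairwise (Function.onFun Disjoint D) := disjoint_disjointed _
  have hDU : ⋃ n, D n = Set.range ρ := by simp [D, iUnion_disjointed]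
  refine ⟨fun n => μ (D n), summable_norm_apply μ hDm hDd, fun A hA => ?_⟩
  have hAD (n) : μ (A ∩ D n) = A.indicator (fun _ => μ (D n)) (ρ n) := by
    by_cases hn : ρ n ∈ A
    · rw [Set.indicator_of_mem hn,
        Set.inter_eq_right.2 ((hDsub n).trans (Set.singleton_subset_iff.2 hn))]
    · have hdisj : Disjoint A (D n) :=
        (Set.disjoint_singleton_right.2 hn).mono_right (hDsub n)
      rw [Set.indicator_of_notMem hn, hdisj.inter_eq, VectorMeasure.empty]
  rw [← hDU, Set.inter_iUnion, VectorMeasure.of_disjoint_iUnion (fun n => hA.inter (hDm n))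
    fun i j hij => (hDd hij).mono Set.inter_subset_right Set.inter_subset_right]
  exact tsum_congr hAD

variable {d : ℕ} {μ ν : ComplexMeasure (EuclideanSpace ℝ (Fin d))}

lemma cmNoSingular.acOffCountable (h : cmNoSingular μ) : AcOffCountable μ.variation volume := by
  obtain ⟨g, b, ρ, -, -, hμ⟩ := h
  refine ⟨Set.range ρ, Set.countable_range ρ, fun A hA hAρ hA0 => ?_⟩
  refine (VectorMeasure.variation_apply_eq_zero hA).2 fun B hBA hB => ?_
  have hindicator (n : ℕ) : B.indicator (fun _ => b n) (ρ n) = 0 :=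
    Set.indicator_of_notMem (fun hn => Set.disjoint_left.1 hAρ (hBA hn) ⟨n, rfl⟩) _
  simp [hμ B hB, setIntegral_measure_zero g (measure_mono_null hBA hA0), hindicator]

lemma AcOffCountable.cmNoSingular (h : AcOffCountable μ.variation volume) : cmNoSingular μ := by
  obtain ⟨S, hS, hμS⟩ := h
  obtain ⟨ρ, hρ⟩ := (hS.insert 0).exists_eq_range (Set.insert_nonempty 0 S)
  have hρm : MeasurableSet (Set.range ρ) := (Set.countable_range ρ).measurableSet
  have hac : μ.restrict (Set.range ρ)ᶜ ≪ᵥ volume.toENNRealVectorMeasure := by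
    refine VectorMeasure.AbsolutelyContinuous.mk fun A hA hA0 => ?_
    rw [Measure.toENNRealVectorMeasure_apply_measurable hA] at hA0
    rw [VectorMeasure.restrict_apply _ hρm.compl hA]
    have hdisj : Disjoint (A ∩ (Set.range ρ)ᶜ) S := Set.disjoint_left.2 fun x hx hxS =>
      hx.2 (hρ ▸ Set.mem_insert_of_mem 0 hxS)
    have hvar := hμS _ (hA.inter hρm.compl) hdisj (measure_mono_null Set.inter_subset_left hA0)
    exact (VectorMeasure.variation_apply_eq_zero (hA.inter hρm.compl)).1 hvar _ subset_rfl
      (hA.inter hρm.compl)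
  obtain ⟨b, hb, hbρ⟩ := exists_apply_inter_range_eq_tsum_indicator μ ρ
  have hg := ComplexMeasure.integrable_rnDeriv (μ.restrict (Set.range ρ)ᶜ) volume
  refine ⟨_, b, ρ, hg, hb, fun A hA => ?_⟩
  rw [← withDensityᵥ_apply hg hA, withDensityᵥ_rnDeriv_eq_complexMeasure hac, ← hbρ A hA,
    VectorMeasure.restrict_apply _ hρm.compl hA, ← VectorMeasure.of_union
      (disjoint_compl_left.mono Set.inter_subset_right Set.inter_subset_right)
      (hA.inter hρm.compl) (hA.inter hρm), ← Set.inter_union_distrib_left, Set.compl_union_self,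
    Set.inter_univ]

lemma cmNoSingular_iff : cmNoSingular μ ↔ AcOffCountable μ.variation volume :=
  ⟨cmNoSingular.acOffCountable, AcOffCountable.cmNoSingular⟩

namespace cmNoSingular

lemma smul (hμ : cmNoSingular μ) (c : ℂ) : cmNoSingular (c • μ) := by
  rw [cmNoSingular_iff, VectorMeasure.variation_smul]
  exact hμ.acOffCountable.mono_ac Measure.smul_absolutelyContinuous

lemma cmConv (hμ : cmNoSingular μ) (hν : cmNoSingular ν) : cmNoSingular (cmConv μ ν) :=
  cmNoSingular_iff.2 <| (hμ.acOffCountable.conv hν.acOffCountable).mono_ac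
    (variation_cmConv_le μ ν).absolutelyContinuous

lemma cmConvPow (hμ : cmNoSingular μ) (n : ℕ) : cmNoSingular (cmConvPow μ n) := by
  induction n with
  | zero =>
    rw [cmNoSingular_iff, _root_.cmConvPow, variation_toComplexMeasure]
    exact .dirac 0 volume
  | succ n ih => exact ih.cmConv hμ

lemma cmTsum {ι : Type*} [Countable ι] {μ : ι → ComplexMeasure (EuclideanSpace ℝ (Fin d))}
    (hμ : ∀ i, cmNoSingular (μ i)) (h : Summable fun i => cmTV (μ i)) :
    cmNoSingular (cmTsum μ h) :=
  cmNoSingular_iff.2 <| (AcOffCountable.sum fun i => (hμ i).acOffCountable).mono_ac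
    (variation_cmTsum_le μ h).absolutelyContinuous

end cmNoSingular

end NoSingular

section WithDensity

variable {α : Type*} [MeasurableSpace α] {m : Measure α} {u : α → ℝ}

lemma toComplexMeasure_withDensity_ofReal_sub_apply (hu : Integrable u m) {A : Set α}
    (hA : MeasurableSet A) :
    Measure.toComplexMeasure (m.withDensity fun x => ENNReal.ofReal (u x)) A -
      Measure.toComplexMeasure (m.withDensity fun x => ENNReal.ofReal (-u x)) A =
        ((∫ x in A, u x ∂m : ℝ) : ℂ) := by
  have hpos := isFiniteMeasure_withDensity_ofReal hu.2
  have hneg := isFiniteMeasure_withDensity_ofReal hu.neg.2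
  have h := congrArg (· A) (withDensityᵥ_eq_withDensity_pos_part_sub_withDensity_neg_part hu)
  simp only [withDensityᵥ_apply hu hA, sub_apply,
    Measure.toSignedMeasure_apply_measurable hA] at h
  rw [h, Complex.ofReal_sub, toComplexMeasure_apply _ hA, toComplexMeasure_apply _ hA]

lemma integral_withDensity_ofReal (hu : Integrable u m) (f : α → ℂ) :
    ∫ x, f x ∂m.withDensity (fun x => ENNReal.ofReal (u x)) =
      ∫ x, f x * ((max (u x) 0 : ℝ) : ℂ) ∂m := by
  rw [integral_withDensity_eq_integral_toReal_smul₀ hu.aemeasurable.ennreal_ofReal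
    (.of_forall fun _ => ENNReal.ofReal_lt_top)]
  simp [ENNReal.toReal_ofReal', mul_comm]

variable {f : α → ℂ} {C : ℝ}

lemma integral_withDensity_ofReal_sub (hu : Integrable u m) (hf : Measurable f)
    (hC : ∀ x, ‖f x‖ ≤ C) :
    (∫ x, f x ∂m.withDensity fun x => ENNReal.ofReal (u x)) -
      ∫ x, f x ∂m.withDensity (fun x => ENNReal.ofReal (-u x)) = ∫ x, f x * u x ∂m := by
  have hint {v : α → ℝ} (hv : Integrable v m) :
      Integrable (fun x => f x * ((max (v x) 0 : ℝ) : ℂ)) m :=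
    hv.pos_part.ofReal.bdd_mul hf.aestronglyMeasurable (.of_forall hC)
  rw [integral_withDensity_ofReal hu, integral_withDensity_ofReal (u := fun x => -u x) hu.neg,
    ← integral_sub (hint hu) (hint (v := fun x => -u x) hu.neg)]
  simp only [← mul_sub, ← Complex.ofReal_sub, max_zero_sub_eq_self]

lemma cmIntegral_toComplexMeasure_withDensity_ofReal_sub (hu : Integrable u m)
    (hf : Measurable f) (hC : ∀ x, ‖f x‖ ≤ C) :
    cmIntegral (Measure.toComplexMeasure (m.withDensity fun x => ENNReal.ofReal (u x)) -
      Measure.toComplexMeasure (m.withDensity fun x => ENNReal.ofReal (-u x))) f =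
        ∫ x, f x * u x ∂m := by
  have hpos := isFiniteMeasure_withDensity_ofReal hu.2
  have hneg := isFiniteMeasure_withDensity_ofReal hu.neg.2
  have hint (m' : Measure α) [IsFiniteMeasure m'] : Integrable f m' :=
    .of_bound hf.aestronglyMeasurable C (.of_forall hC)
  rw [cmIntegral_sub (integrable_of_norm_le _ hf hC) (integrable_of_norm_le _ hf hC),
    cmIntegral_toComplexMeasure (hint _), cmIntegral_toComplexMeasure (hint _),
    integral_withDensity_ofReal_sub hu hf hC]

end WithDensity

section Density

variable {d : ℕ} {κ : EuclideanSpace ℝ (Fin d) → ℂ}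

lemma cmOfDensity_eq_withDensityᵥ (hκ : Integrable κ) :
    cmOfDensity κ = volume.withDensityᵥ κ := by
  have hre : Integrable fun x => (κ x).re := hκ.re
  have him : Integrable fun x => (κ x).im := hκ.im
  ext A hA
  simp only [cmOfDensity, add_apply, sub_apply, smul_apply, smul_eq_mul,
    toComplexMeasure_withDensity_ofReal_sub_apply hre hA,
    toComplexMeasure_withDensity_ofReal_sub_apply him hA, withDensityᵥ_apply hκ hA]
  rw [mul_comm]
  exact setIntegral_re_add_im hκ.integrableOn

lemma cmIntegral_cmOfDensity (hκ : Integrable κ) {f : EuclideanSpace ℝ (Fin d) → ℂ}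
    (hf : Measurable f) {C : ℝ} (hC : ∀ x, ‖f x‖ ≤ C) :
    cmIntegral (cmOfDensity κ) f = ∫ x, f x * κ x := by
  have hre : Integrable fun x => (κ x).re := hκ.re
  have him : Integrable fun x => (κ x).im := hκ.im
  have hint (μ : ComplexMeasure (EuclideanSpace ℝ (Fin d))) : μ.Integrable f :=
    integrable_of_norm_le μ hf hC
  have hfu {u : EuclideanSpace ℝ (Fin d) → ℝ} (hu : Integrable u) :
      Integrable fun x => f x * (u x : ℂ) :=
    hu.ofReal.bdd_mul hf.aestronglyMeasurable (.of_forall hC)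
  calc cmIntegral (cmOfDensity κ) f
      = (∫ x, f x * (κ x).re) + Complex.I * ∫ x, f x * (κ x).im := by
        rw [cmOfDensity, cmIntegral_add (hint _) (hint _), cmIntegral_smul _ (hint _),
          cmIntegral_toComplexMeasure_withDensity_ofReal_sub hre hf hC,
          cmIntegral_toComplexMeasure_withDensity_ofReal_sub him hf hC]
    _ = ∫ x, (f x * (κ x).re + Complex.I * (f x * (κ x).im)) := by
        rw [← integral_const_mul, ← integral_add (hfu hre) ((hfu him).const_mul _)]
    _ = ∫ x, f x * κ x := by
        refine integral_congr_ae (.of_forall fun x => ?_)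
        calc f x * (κ x).re + Complex.I * (f x * (κ x).im)
            = f x * ((κ x).re + (κ x).im * Complex.I) := by ring
          _ = f x * κ x := by rw [Complex.re_add_im]

lemma cmTV_cmOfDensity (hκ : Integrable κ) : cmTV (cmOfDensity κ) = ∫ x, ‖κ x‖ := by
  rw [cmTV_eq_variation, cmOfDensity_eq_withDensityᵥ hκ, Measure.variation_withDensityᵥ hκ,
    Measure.real, withDensity_apply _ MeasurableSet.univ, Measure.restrict_univ,
    integral_norm_eq_lintegral_enorm hκ.aestronglyMeasurable]

lemma cmTV_cmOfDensity_add_le (hκ : Integrable κ)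
    (ν : ComplexMeasure (EuclideanSpace ℝ (Fin d))) :
    cmTV (cmOfDensity κ + ν) ≤ (∫ x, ‖κ x‖) + cmTV ν :=
  (cmTV_add_le _ _).trans_eq (by rw [cmTV_cmOfDensity hκ])

lemma cmNoSingular_cmOfDensity_add (hκ : Integrable κ)
    {ν : ComplexMeasure (EuclideanSpace ℝ (Fin d))} (hν : cmPurePoint ν) :
    cmNoSingular (cmOfDensity κ + ν) := by
  obtain ⟨b, ρ, hb, hνb⟩ := hν
  refine ⟨κ, b, ρ, hκ, hb, fun A hA => ?_⟩
  rw [add_apply, cmOfDensity_eq_withDensityᵥ hκ, withDensityᵥ_apply hκ hA, hνb A hA]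

end Density

section Fourier

open scoped RealInnerProductSpace

variable {d : ℕ}

/-- The kernel `x ↦ e^{-2πi⟨x,y⟩}` against which `cmFourier · y` integrates. -/
def fourierKernel (y x : EuclideanSpace ℝ (Fin d)) : ℂ :=
  Complex.exp (-2 * Real.pi * Complex.I * (⟪x, y⟫ : ℝ))

lemma measurable_fourierKernel (y : EuclideanSpace ℝ (Fin d)) : Measurable (fourierKernel y) :=
  Continuous.measurable (by unfold fourierKernel; fun_prop)

lemma norm_fourierKernel_le (y x : EuclideanSpace ℝ (Fin d)) : ‖fourierKernel y x‖ ≤ 1 := by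
  simp [fourierKernel, Complex.norm_exp]

lemma fourierKernel_zero (y : EuclideanSpace ℝ (Fin d)) : fourierKernel y 0 = 1 := by
  simp [fourierKernel]

lemma fourierKernel_add (y x z : EuclideanSpace ℝ (Fin d)) :
    fourierKernel y (x + z) = fourierKernel y x * fourierKernel y z := by
  rw [fourierKernel, fourierKernel, fourierKernel, ← Complex.exp_add, inner_add_left,
    Complex.ofReal_add, mul_add]

lemma integrable_fourierKernel (μ : ComplexMeasure (EuclideanSpace ℝ (Fin d)))
    (y : EuclideanSpace ℝ (Fin d)) : μ.Integrable (fourierKernel y) :=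
  integrable_of_norm_le μ (measurable_fourierKernel y) (norm_fourierKernel_le y)

lemma cmFourier_add (μ ν : ComplexMeasure (EuclideanSpace ℝ (Fin d)))
    (y : EuclideanSpace ℝ (Fin d)) : cmFourier (μ + ν) y = cmFourier μ y + cmFourier ν y :=
  cmIntegral_add (integrable_fourierKernel μ y) (integrable_fourierKernel ν y)

lemma cmFourier_smul (c : ℂ) (μ : ComplexMeasure (EuclideanSpace ℝ (Fin d)))
    (y : EuclideanSpace ℝ (Fin d)) : cmFourier (c • μ) y = c * cmFourier μ y :=
  cmIntegral_smul c (integrable_fourierKernel μ y)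

lemma cmFourier_cmConv (μ ν : ComplexMeasure (EuclideanSpace ℝ (Fin d)))
    (y : EuclideanSpace ℝ (Fin d)) : cmFourier (cmConv μ ν) y = cmFourier μ y * cmFourier ν y :=
  cmIntegral_cmConv (measurable_fourierKernel y) (fourierKernel_add y)
    (integrable_fourierKernel μ y) (integrable_fourierKernel ν y)

lemma cmFourier_cmConvPow (μ : ComplexMeasure (EuclideanSpace ℝ (Fin d)))
    (y : EuclideanSpace ℝ (Fin d)) (n : ℕ) : cmFourier (cmConvPow μ n) y = cmFourier μ y ^ n :=
  cmIntegral_cmConvPow (measurable_fourierKernel y) (fourierKernel_add y) (fourierKernel_zero y)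
    (integrable_fourierKernel μ y) n

lemma cmFourier_cmOfDensity {κ : EuclideanSpace ℝ (Fin d) → ℂ} (hκ : Integrable κ)
    (y : EuclideanSpace ℝ (Fin d)) : cmFourier (cmOfDensity κ) y = 𝓕 κ y := by
  refine (cmIntegral_cmOfDensity hκ (measurable_fourierKernel y)
    (norm_fourierKernel_le y)).trans ?_
  rw [Real.fourier_eq']
  refine integral_congr_ae (.of_forall fun x => ?_)
  simp only [fourierKernel, smul_eq_mul]
  congr 2
  push_cast
  ring

lemma hasSum_cmFourier {ι : Type*} (μ : ι → ComplexMeasure (EuclideanSpace ℝ (Fin d)))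
    (h : Summable fun i => cmTV (μ i)) (y : EuclideanSpace ℝ (Fin d)) :
    HasSum (fun i => cmFourier (μ i) y) (cmFourier (cmTsum μ h) y) :=
  hasSum_cmIntegral μ h (measurable_fourierKernel y) (norm_fourierKernel_le y)

end Fourier

section GeometricSeries

lemma summable_cmTV_cmConvPow_cmConv {E : Type*} [MeasurableSpace E] [AddMonoid E]
    [MeasurableAdd₂ E] {a b : ComplexMeasure E} (ha : cmTV a < 1) (hb : cmTV b < 1)
    {σ : ℕ × ℕ → ComplexMeasure E} {C : ℝ} (hσ : ∀ pq, cmTV (σ pq) ≤ C) :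
    Summable fun pq : ℕ × ℕ =>
      cmTV (cmConv (cmConv (cmConvPow a pq.1) (cmConvPow b pq.2)) (σ pq)) := by
  have hpow (μ : ComplexMeasure E) (n : ℕ) : 0 ≤ cmTV μ ^ n := pow_nonneg (cmTV_nonneg μ) n
  have hgeom : Summable fun pq : ℕ × ℕ => cmTV a ^ pq.1 * cmTV b ^ pq.2 * C :=
    ((summable_geometric_of_lt_one (cmTV_nonneg a) ha).mul_of_nonneg
      (summable_geometric_of_lt_one (cmTV_nonneg b) hb) (hpow a) (hpow b)).mul_right C
  refine hgeom.of_nonneg_of_le (fun _ => cmTV_nonneg _) fun pq => ?_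
  calc cmTV (cmConv (cmConv (cmConvPow a pq.1) (cmConvPow b pq.2)) (σ pq))
      ≤ cmTV (cmConvPow a pq.1) * cmTV (cmConvPow b pq.2) * cmTV (σ pq) :=
        (cmTV_cmConv_le _ _).trans
          (mul_le_mul_of_nonneg_right (cmTV_cmConv_le _ _) (cmTV_nonneg _))
    _ ≤ cmTV a ^ pq.1 * cmTV b ^ pq.2 * C :=
        mul_le_mul (mul_le_mul (cmTV_cmConvPow_le _ _) (cmTV_cmConvPow_le _ _) (cmTV_nonneg _)
          (hpow _ _)) (hσ pq) (cmTV_nonneg _) (mul_nonneg (hpow _ _) (hpow _ _))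

lemma tendsto_range_product_range_atTop :
    Tendsto (fun M : ℕ => Finset.range M ×ˢ Finset.range M) atTop atTop :=
  tendsto_atTop_finset_of_monotone
    (fun _ _ h => Finset.product_subset_product (Finset.range_mono h) (Finset.range_mono h))
    fun pq => ⟨pq.1 + pq.2 + 1, by simp⟩

end GeometricSeries

theorem complexMeasure_series_sum_general {d : ℕ}
    {a b : ComplexMeasure (EuclideanSpace ℝ (Fin d))} (ha : cmNoSingular a) (hb : cmNoSingular b)
    (hatv : cmTV a < 1) (hbtv : cmTV b < 1)
    {σ : ℕ → ℕ → ComplexMeasure (EuclideanSpace ℝ (Fin d))} (hσ : ∀ p q, cmNoSingular (σ p q))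
    (hσbdd : ∃ C : ℝ, ∀ p q, cmTV (σ p q) ≤ C) :
    ∃ ν : ComplexMeasure (EuclideanSpace ℝ (Fin d)),
      cmNoSingular ν ∧
      Tendsto (fun M : ℕ =>
          cmTV (ν - ∑ p ∈ Finset.range M, ∑ q ∈ Finset.range M,
            cmConv (cmConv (cmConvPow a p) (cmConvPow b q)) (σ p q)))
        atTop (𝓝 0) ∧
      ∀ y : EuclideanSpace ℝ (Fin d),
        HasSum (fun pq : ℕ × ℕ =>
            cmFourier a y ^ pq.1 * cmFourier b y ^ pq.2 * cmFourier (σ pq.1 pq.2) y)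
          (cmFourier ν y) := by
  obtain ⟨C, hC⟩ := hσbdd
  let μ : ℕ × ℕ → ComplexMeasure (EuclideanSpace ℝ (Fin d)) := fun pq =>
    cmConv (cmConv (cmConvPow a pq.1) (cmConvPow b pq.2)) (σ pq.1 pq.2)
  have hsum : Summable fun pq => cmTV (μ pq) :=
    summable_cmTV_cmConvPow_cmConv hatv hbtv fun pq => hC pq.1 pq.2
  refine ⟨cmTsum μ hsum, .cmTsum (fun pq => ?_) hsum, ?_, fun y => ?_⟩
  · exact ((ha.cmConvPow pq.1).cmConv (hb.cmConvPow pq.2)).cmConv (hσ pq.1 pq.2)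
  · simpa only [Function.comp_def, Finset.sum_product] using
      (tendsto_cmTV_cmTsum_sub_sum μ hsum).comp tendsto_range_product_range_atTop
  · simpa only [μ, cmFourier_cmConv, cmFourier_cmConvPow] using hasSum_cmFourier μ hsum y

end

/-- **Summing up the series of measures.** Let `λ_R, λ_I` be complex measures on `ℝ^d`
without singular components with `‖λ_R‖ < 2ε`, `‖λ_I‖ < 2ε`, let `κ_{p,q} ∈ L¹(ℝ^d)` with
uniformly bounded `L¹` norms, and let `ν_{p,q}` be pure point measures with uniformly
bounded total variations. Then the series
`ν = Σ_{p,q} (λ_R/3ε)^{*p} * (λ_I/3ε)^{*q} * (κ_{p,q} dx + ν_{p,q})`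
converges in total variation norm to a complex measure `ν` of finite total variation
without singular component, and
`ν̂(y) = Σ_{p,q} (λ̂_R(y)/3ε)^p (λ̂_I(y)/3ε)^q (κ̂_{p,q}(y) + ν̂_{p,q}(y))` for all `y`. -/
theorem complexMeasure_series_sum {d : ℕ} (ε : ℝ) (hε : 0 < ε)
    (lR lI : ComplexMeasure (EuclideanSpace ℝ (Fin d)))
    (hlR : cmNoSingular lR) (hlI : cmNoSingular lI)
    (hlRtv : cmTV lR < 2 * ε) (hlItv : cmTV lI < 2 * ε)
    (κ : ℕ → ℕ → EuclideanSpace ℝ (Fin d) → ℂ)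
    (hκ : ∀ p q, Integrable (κ p q))
    (hκbdd : ∃ C : ℝ, ∀ p q, (∫ x, ‖κ p q x‖) ≤ C)
    (νpp : ℕ → ℕ → ComplexMeasure (EuclideanSpace ℝ (Fin d)))
    (hνpp : ∀ p q, cmPurePoint (νpp p q))
    (hνbdd : ∃ C : ℝ, ∀ p q, cmTV (νpp p q) ≤ C) :
    ∃ ν : ComplexMeasure (EuclideanSpace ℝ (Fin d)),
      cmNoSingular ν ∧
      Tendsto (fun M : ℕ =>
          cmTV (ν - ∑ p ∈ Finset.range M, ∑ q ∈ Finset.range M,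
            cmConv (cmConv (cmConvPow ((((3 * ε)⁻¹ : ℝ) : ℂ) • lR) p)
                (cmConvPow ((((3 * ε)⁻¹ : ℝ) : ℂ) • lI) q))
              (cmOfDensity (κ p q) + νpp p q)))
        atTop (𝓝 0) ∧
      ∀ y : EuclideanSpace ℝ (Fin d),
        HasSum (fun pq : ℕ × ℕ =>
            (cmFourier lR y / ((3 * ε : ℝ) : ℂ)) ^ pq.1 *
              (cmFourier lI y / ((3 * ε : ℝ) : ℂ)) ^ pq.2 *
              (𝓕 (κ pq.1 pq.2) y + cmFourier (νpp pq.1 pq.2) y))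
          (cmFourier ν y) := by
  obtain ⟨A, hA⟩ := hκbdd
  obtain ⟨B, hB⟩ := hνbdd
  have hbdd (p q : ℕ) : cmTV (cmOfDensity (κ p q) + νpp p q) ≤ A + B :=
    (cmTV_cmOfDensity_add_le (hκ p q) _).trans (add_le_add (hA p q) (hB p q))
  simpa only [cmFourier_smul, cmFourier_add, cmFourier_cmOfDensity (hκ _ _), Complex.ofReal_inv,
    div_eq_inv_mul] using
    complexMeasure_series_sum_general (hlR.smul _) (hlI.smul _)
      (cmTV_inv_smul_lt_one (by linarith)) (cmTV_inv_smul_lt_one (by linarith))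
      (fun p q => cmNoSingular_cmOfDensity_add (hκ p q) (hνpp p q)) ⟨A + B, hbdd⟩
end
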